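/- For every natural number r ≥ 3, r/φ(r) < e^γ·log(log r) + 2.50637/log(log r), where φ is Euler's totient function, log is the natural logarithm, and γ is the Euler–Mascheroni constant; the inequality is between real numbers. -/

import Mathlib

/-!
The quotient `r / φ(r) = ∏_{p ∣ r} (1 - 1/p)⁻¹` depends only on the set `S` of prime divisors
of `r`, and `∑_{p ∈ S} log p ≤ log r`. Put `l = log log r`. So it is enough to bound
`∏_{p ∈ S} (1 - 1/p)⁻¹` for a finite set `S` of primes with `∑_{p ∈ S} log p ≤ e^l`. The ranges
`l < 11` and `l ≥ 11` are treated by different methods.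

**Small `l`** (`small_case`). Among sets of primes with a bounded product, the Euler product is
largest for an initial segment of the primes (`reduce`), so only primorials matter. The kernel
checks a table of primes `x`, with lower bounds for `∑_{p ≤ x} log p` and upper bounds for
`∏_{p < x} (1 - 1/p)⁻¹` (`chk_rows`, `walk`), up to the point where `∑_{p ≤ x} log p > e^11`. The
number `2·3·5·7·11·13·17·19·23` is the one for which the constant `2.50637` is nearly optimal; it
needs nine-digit numerics and is done by hand in `nine`.

**Large `l`** (`large_case`). This is a quantitative Mertens theorem, obtained from the zeros of
the Riemann zeta function with only minimal knowledge about them.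

* The function `xi s = s (s - 1) Λ(s)` has order at most `3/2` (`xi_growth`), so that `xi'/xi` has a
  partial fraction expansion over the zeros (`hadamard_limit`). Comparing `s = 0` with `s = 1` gives
  `∑_ρ (1/ρ + 1/(1-ρ)) = cA = 2 + γ - log 4π < 0.0462` (`hasSum_aa`). The smallness of this number
  alone shows `|Im ρ| ≥ 6.5` and `∑_ρ (Im ρ)⁻² ≤ 1.024 cA`.
* `DD x = ∑_{n ≤ x} Λ(n) (1/n - 1/x)` equals `log x - 1 - γ` up to an absolutely convergent sum
  `∑_ρ x^{ρ-1} / (ρ (1-ρ))` and negligible terms (`explicit_formula`). Both sides have the same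
  Laplace transform in `u = log x`, and Laplace transforms are injective.
* Bounding `x^{ρ-1}` trivially gives an error term `FF` with `|FF| ≤ 0.0239` (`FF_triv`). The
  classical argument with `3 + 4 cos + cos 2` gives a zero-free region (`inv_dd_le`); with
  `∑_ρ log |Im ρ| / (Im ρ)² ≤ 0.202` (`summable_wlog`) it yields `|FF (e^u)| ≤ 0.8 / u` (`FF_decay`).
* Partial summation (`GG_diff`) passes from `Λ(n)/n` to `Λ(n)/(n log n)`. The constant that appears
  is `γ`, by an Abelian argument based on `log ζ(1+δ) ~ -log δ` and `Γ'(1) = -γ` (`mertens_le`).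
  The result is an upper bound for `qq` (`qq_le_one`, `qq_le_two`).
* `prime_side` compares `∑_{p ∈ S} -log (1 - 1/p)` with `qq l + log l`.
-/


namespace RS

/-! ### The function `xi` and its growth -/

noncomputable section

open Complex Set Filter Topology MeasureTheory HurwitzZeta Asymptotics

/-- The entire function `s (s - 1) Λ(s)`, where `Λ` is the completed zeta function. It is twice
Riemann's `ξ`, normalised by `xi 0 = xi 1 = 1`; the formula through the entire part
`completedRiemannZeta₀` of `Λ` gives the right values at `0` and `1` as well. -/
def xi (s : ℂ) : ℂ := 1 + s * (s - 1) * completedRiemannZeta₀ s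

lemma differentiable_xi : Differentiable ℂ xi := by
  have := differentiable_completedZeta₀
  unfold xi
  fun_prop

lemma xi_one_sub (s : ℂ) : xi (1 - s) = xi s := by
  simp only [xi, completedRiemannZeta₀_one_sub]; ring

lemma xi_one : xi 1 = 1 := by simp [xi]
lemma xi_zero : xi 0 = 1 := by simp [xi]

lemma deriv_xi_one : deriv xi 1 = completedRiemannZeta₀ 1 := by
  have h := (differentiable_completedZeta₀ 1).hasDerivAt
  have : HasDerivAt xi (((1 * ((1:ℂ) - 1) + 1 * 1) * completedRiemannZeta₀ 1 +
      1 * (1 - 1) * deriv completedRiemannZeta₀ 1)) 1 := by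
    refine HasDerivAt.const_add 1 ?_
    exact ((hasDerivAt_id' (1:ℂ)).mul ((hasDerivAt_id' (1:ℂ)).sub_const 1)).mul h
  rw [this.deriv]; ring

lemma xi_eq_mul_completed {s : ℂ} (h0 : s ≠ 0) (h1 : s ≠ 1) :
    xi s = s * (s - 1) * completedRiemannZeta s := by
  have : 1 - s ≠ 0 := sub_ne_zero.mpr h1.symm
  rw [completedRiemannZeta_eq, xi]
  field_simp
  ring

lemma xi_eq_zeta {s : ℂ} (hs : 0 < s.re) (h1 : s ≠ 1) :
    xi s = 2 * (s - 1) * (Real.pi : ℂ) ^ (-s / 2) * Gamma (s / 2 + 1) * riemannZeta s := by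
  have h0 : s ≠ 0 := by rintro rfl; simp at hs
  have hG := Gammaℝ_ne_zero_of_re_pos hs
  rw [xi_eq_mul_completed h0 h1, riemannZeta_def_of_ne_zero h0, Gamma_add_one (s / 2) (by simpa)]
  rw [Gammaℝ_def] at hG ⊢
  have h2 := left_ne_zero_of_mul hG
  have h3 := right_ne_zero_of_mul hG
  field_simp

lemma xi_ne_zero_of_one_le_re {s : ℂ} (hs : 1 ≤ s.re) : xi s ≠ 0 := by
  by_cases h1 : s = 1
  · rw [h1, xi_one]; exact one_ne_zero
  have h0 : 0 < s.re := by linarith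
  rw [xi_eq_zeta h0 h1]
  have a1 : (Real.pi : ℂ) ^ (-s / 2) ≠ 0 := by
    rw [Ne, Complex.cpow_eq_zero_iff]; simp [Real.pi_ne_zero]
  have a2 : Gamma (s / 2 + 1) ≠ 0 := Complex.Gamma_ne_zero_of_re_pos (by simp; linarith)
  have a3 := riemannZeta_ne_zero_of_one_le_re hs
  have a4 : s - 1 ≠ 0 := sub_ne_zero.mpr h1
  simp [*]

lemma re_pos_of_xi {s : ℂ} (hs : xi s = 0) : 0 < s.re := by
  by_contra h
  apply xi_ne_zero_of_one_le_re (s := 1 - s) (by simp; linarith)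
  rw [xi_one_sub, hs]

lemma re_lt_one_of_xi {s : ℂ} (hs : xi s = 0) : s.re < 1 := by
  by_contra h
  exact xi_ne_zero_of_one_le_re (s := s) (by linarith) hs

/-- The Mellin integral representing `completedRiemannZeta₀` has an exponentially decaying
integrand, so it is bounded by a Gamma integral. -/
lemma completedZeta₀_growth : ∃ K B : ℝ, 1 ≤ K ∧ 1 ≤ B ∧ ∀ (n : ℕ) (s : ℂ), 1 / 2 ≤ s.re → s.re ≤ n →
    ‖completedRiemannZeta₀ s‖ ≤ K * (n.factorial * B ^ n) := by
  set P := hurwitzEvenFEPair 0 with hP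
  have hst := P.isStrongFEPair_toStrongFEPair
  obtain ⟨p, hp, hO⟩ := isBigO_atTop_evenKernel_sub 0
  set f : ℝ → ℂ := P.f_modif
  set g : ℝ → ℂ := fun t ↦ f t * (Real.exp (p / 2 * t) : ℂ) with hg
  have hfO : f =O[atTop] fun t : ℝ ↦ Real.exp (-p * t) := by
    refine IsBigO.congr' (isBigO_ofReal_left.mpr hO) ?_ .rfl
    filter_upwards [eventually_gt_atTop 1] with x hx
    have : x ∉ Ioo (0:ℝ) 1 := fun h ↦ by linarith [h.2]
    simp [f, WeakFEPair.f_modif, hx, P, hurwitzEvenFEPair, this]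
  have hgi : LocallyIntegrableOn g (Ioi 0) := by
    refine LocallyIntegrableOn.mul_continuousOn P.hf_modif_int (by fun_prop) ?_
    exact isOpen_Ioi.isLocallyClosed
  have hgt : g =O[atTop] fun t : ℝ ↦ t ^ (-(1:ℝ)) := by
    have h1 : g =O[atTop] fun t : ℝ ↦ Real.exp (-p * t) * Real.exp (p / 2 * t) := by
      refine hfO.mul ?_
      exact isBigO_ofReal_left.mpr (isBigO_refl _ _)
    refine h1.trans ?_
    have : (fun t : ℝ ↦ Real.exp (-p * t) * Real.exp (p / 2 * t)) =
        fun t ↦ Real.exp (-(p/2) * t) := by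
      ext t; rw [← Real.exp_add]; ring_nf
    rw [this]
    exact (isLittleO_exp_neg_mul_rpow_atTop (by positivity) _).isBigO
  have hgb : g =O[𝓝[>] 0] fun t : ℝ ↦ t ^ (-(0:ℝ)) := by
    have h1 : f =O[𝓝[>] 0] fun t : ℝ ↦ t ^ (0:ℝ) := hst.hf_zero 0
    have h2 : (fun t : ℝ ↦ (Real.exp (p / 2 * t) : ℂ)) =O[𝓝[>] 0] fun t : ℝ ↦ (1:ℝ) := by
      have hcont : ContinuousAt (fun t : ℝ ↦ (Real.exp (p / 2 * t) : ℂ)) 0 := by fun_prop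
      exact IsBigO.mono (hcont.tendsto.isBigO_one ℝ) nhdsWithin_le_nhds
    refine (h1.mul h2).congr_right fun t ↦ by simp
  have hc : MellinConvergent g (1/4 : ℂ) :=
    mellinConvergent_of_isBigO_rpow (a := 1) (b := 0) hgi hgt (by norm_num) hgb (by norm_num)
  set I := ∫ t in Ioi (0:ℝ), ‖(t : ℂ) ^ ((1/4 : ℂ) - 1) • g t‖ with hI
  have hI0 : 0 ≤ I := integral_nonneg fun t ↦ norm_nonneg _
  refine ⟨I + 1, max 1 (2 / p), by linarith, le_max_left _ _, fun n s hs hn ↦ ?_⟩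
  set Kn : ℝ := n.factorial * (max 1 (2/p)) ^ n with hKn
  have hKn1 : 1 ≤ Kn := by
    have : (1:ℝ) ≤ n.factorial := by exact_mod_cast Nat.factorial_pos n
    have h2 : (1:ℝ) ≤ (max 1 (2/p)) ^ n := one_le_pow₀ (le_max_left _ _)
    nlinarith
  have hbound : ‖mellin f (s / 2)‖ ≤ ∫ t in Ioi (0:ℝ), Kn * ‖(t : ℂ) ^ ((1/4 : ℂ) - 1) • g t‖ := by
    refine norm_integral_le_of_norm_le (hc.norm.const_mul _) ?_
    refine (ae_restrict_iff' measurableSet_Ioi).mpr (.of_forall fun t (ht : 0 < t) ↦ ?_)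
    have e1 : ‖(t : ℂ) ^ (s / 2 - 1)‖ = t ^ (s.re / 2 - 1) := by
      rw [norm_cpow_eq_rpow_re_of_pos ht]; simp
    have e2 : ‖(t : ℂ) ^ ((1/4 : ℂ) - 1)‖ = t ^ ((1/4:ℝ) - 1) := by
      rw [norm_cpow_eq_rpow_re_of_pos ht]; norm_num
    rw [norm_smul, norm_smul, e1, e2, hg]
    simp only [norm_mul, norm_real, Real.norm_eq_abs, Real.abs_exp]
    have key : t ^ (s.re / 2 - 1) ≤ Kn * (t ^ ((1/4:ℝ) - 1) * Real.exp (p / 2 * t)) := by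
      have hsplit : t ^ (s.re / 2 - 1) = t ^ ((1/4:ℝ) - 1) * t ^ (s.re / 2 - 1/4) := by
        rw [← Real.rpow_add ht]; ring_nf
      rw [hsplit, mul_left_comm]
      refine mul_le_mul_of_nonneg_left ?_ (by positivity)
      have hexp1 : 1 ≤ Real.exp (p / 2 * t) := Real.one_le_exp (by positivity)
      rcases le_total t 1 with h | h
      · have := Real.rpow_le_one ht.le h (z := s.re / 2 - 1/4) (by linarith)
        nlinarith
      · have h1 : t ^ (s.re / 2 - 1/4) ≤ t ^ n := by
          rw [← Real.rpow_natCast]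
          exact Real.rpow_le_rpow_of_exponent_le h (by
            have : (0:ℝ) ≤ n := Nat.cast_nonneg n
            linarith)
        have h2 := Real.pow_div_factorial_le_exp (p / 2 * t) (by positivity) n
        rw [div_le_iff₀ (by positivity)] at h2
        have h3 : t ^ n = (p / 2 * t) ^ n * (2 / p) ^ n := by
          rw [← mul_pow]; congr 1; field_simp
        refine h1.trans ?_
        rw [h3, hKn]
        have h4 : (2 / p) ^ n ≤ (max 1 (2/p)) ^ n :=
          pow_le_pow_left₀ (by positivity) (le_max_right _ _) n
        calc _ ≤ (Real.exp (p / 2 * t) * n.factorial) * (max 1 (2/p)) ^ n := by gcongr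
          _ = _ := by ring
    calc _ ≤ Kn * (t ^ ((1/4:ℝ) - 1) * Real.exp (p / 2 * t)) * ‖f t‖ := by gcongr
      _ = _ := by ring
  rw [integral_const_mul, ← hI] at hbound
  have hdef : completedRiemannZeta₀ s = mellin f (s / 2) / 2 := rfl
  rw [hdef, norm_div]
  simp only [Complex.norm_ofNat]
  have : 0 ≤ ‖mellin f (s/2)‖ := norm_nonneg _
  calc _ ≤ ‖mellin f (s/2)‖ := by linarith
    _ ≤ Kn * I := hbound
    _ ≤ _ := by nlinarith

lemma factorial_le_exp (n : ℕ) : (n.factorial : ℝ) ≤ Real.exp (2 * (n:ℝ) ^ (3/2 : ℝ)) := by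
  rcases Nat.eq_zero_or_pos n with rfl | hn
  · simp
  have hn' : (0:ℝ) < n := by exact_mod_cast hn
  have h1 : (n.factorial : ℝ) ≤ (n:ℝ) ^ n := by exact_mod_cast Nat.factorial_le_pow n
  refine h1.trans ?_
  rw [← Real.rpow_natCast, Real.rpow_def_of_pos hn']
  apply Real.exp_le_exp.mpr
  have h2 := Real.log_le_rpow_div hn'.le (ε := 1/2) (by norm_num)
  have h3 : (n:ℝ) ^ (3/2:ℝ) = n ^ (1/2:ℝ) * n := by
    rw [show (3/2:ℝ) = 1/2 + 1 by norm_num, Real.rpow_add hn', Real.rpow_one]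
  rw [h3]
  nlinarith

/-- The function `xi` has order at most `3/2`. Any order below `2` suffices for `hadamard_limit`. -/
lemma xi_growth : ∃ C : ℝ, 0 ≤ C ∧ ∀ (R : ℝ) (s : ℂ), 1 ≤ R → ‖s - 1‖ ≤ R →
    ‖xi s‖ ≤ Real.exp (C * R ^ (3/2:ℝ)) := by
  obtain ⟨K, B, hK, hB, h⟩ := completedZeta₀_growth
  refine ⟨Real.log (13 * K) + 2 * (4:ℝ) ^ (3/2:ℝ) + 4 * Real.log B + 2, ?_, fun R s hR hs ↦ ?_⟩
  · have := Real.log_nonneg (show 1 ≤ 13 * K by linarith)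
    have := Real.log_nonneg hB
    positivity
  -- By the functional equation it suffices to treat `Re s ≥ 1/2`.
  have main : ∀ s : ℂ, 1/2 ≤ s.re → ‖s‖ ≤ R + 1 → ‖s - 1‖ ≤ R + 1 → ‖xi s‖ ≤
      Real.exp ((Real.log (13 * K) + 2 * (4:ℝ) ^ (3/2:ℝ) + 4 * Real.log B + 2) * R ^ (3/2:ℝ)) := by
    intro s hs h1 h2
    set n := ⌈R + 1⌉₊ with hn
    have hsn : s.re ≤ n := (re_le_norm s).trans (h1.trans (Nat.le_ceil _))
    have hnR : (n:ℝ) ≤ 4 * R := by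
      have := Nat.ceil_lt_add_one (show 0 ≤ R + 1 by linarith)
      linarith
    have hz := h n s hs hsn
    have hR32 : R ≤ R ^ (3/2:ℝ) := by
      conv_lhs => rw [← Real.rpow_one R]
      exact Real.rpow_le_rpow_of_exponent_le hR (by norm_num)
    have f1 : (n.factorial : ℝ) ≤ Real.exp (2 * (4:ℝ) ^ (3/2:ℝ) * R ^ (3/2:ℝ)) := by
      refine (factorial_le_exp n).trans (Real.exp_le_exp.mpr ?_)
      rw [mul_assoc, ← Real.mul_rpow (by norm_num) (by linarith)]
      have := Real.rpow_le_rpow (Nat.cast_nonneg n) hnR (z := 3/2) (by norm_num)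
      linarith
    have f2 : B ^ n ≤ Real.exp (4 * Real.log B * R ^ (3/2:ℝ)) := by
      have hl := Real.log_nonneg hB
      rw [← Real.rpow_natCast, Real.rpow_def_of_pos (by linarith)]
      apply Real.exp_le_exp.mpr
      nlinarith
    have f3 : 13 * K ≤ Real.exp (Real.log (13 * K) * R ^ (3/2:ℝ)) := by
      have hl := Real.log_nonneg (show 1 ≤ 13 * K by linarith)
      conv_lhs => rw [← Real.exp_log (show 0 < 13 * K by linarith)]
      apply Real.exp_le_exp.mpr
      nlinarith
    have f4 : R ^ 2 ≤ Real.exp (2 * R ^ (3/2:ℝ)) := by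
      have := Real.add_one_le_exp (R ^ (3/2:ℝ))
      have h3 : R ≤ Real.exp (R ^ (3/2:ℝ)) := by linarith
      rw [two_mul, Real.exp_add, sq]
      exact mul_le_mul h3 h3 (by linarith) (Real.exp_pos _).le
    have : ‖xi s‖ ≤ 13 * K * R ^ 2 * (n.factorial * B ^ n) := by
      have hX : 1 ≤ K * (n.factorial * B ^ n) := by
        have : (1:ℝ) ≤ n.factorial := by exact_mod_cast Nat.factorial_pos n
        have h2 : (1:ℝ) ≤ B ^ n := one_le_pow₀ hB
        have h3 : (1:ℝ) ≤ n.factorial * B ^ n := by nlinarith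
        nlinarith
      set X := K * (n.factorial * B ^ n)
      calc ‖xi s‖ ≤ 1 + ‖s‖ * ‖s - 1‖ * ‖completedRiemannZeta₀ s‖ := by
            unfold xi
            refine (norm_add_le _ _).trans ?_
            simp
        _ ≤ X + (R + 1) * (R + 1) * X := by
            gcongr
        _ ≤ 13 * R ^ 2 * X := by
            rw [← one_add_mul]
            exact mul_le_mul_of_nonneg_right (by nlinarith) (by linarith)
        _ = _ := by ring
    refine this.trans ?_
    calc _ ≤ Real.exp (Real.log (13 * K) * R ^ (3/2:ℝ)) * Real.exp (2 * R ^ (3/2:ℝ)) *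
          (Real.exp (2 * (4:ℝ) ^ (3/2:ℝ) * R ^ (3/2:ℝ)) * Real.exp (4 * Real.log B * R ^ (3/2:ℝ))) := by
            gcongr
      _ = _ := by
        rw [← Real.exp_add, ← Real.exp_add, ← Real.exp_add]; congr 1; ring
  have hs' : ‖s‖ ≤ R + 1 := by
    calc ‖s‖ = ‖(s - 1) + 1‖ := by ring_nf
      _ ≤ ‖s - 1‖ + ‖(1:ℂ)‖ := norm_add_le _ _
      _ ≤ _ := by simp; linarith
  rcases le_total (1/2) s.re with h' | h'
  · exact main s h' hs' (by linarith)
  · rw [← xi_one_sub]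
    refine main _ (by simp; linarith) ?_ ?_
    · rw [norm_sub_rev]; linarith
    · rw [show 1 - s - 1 = -s by ring, norm_neg]; exact hs'

end

/-! ### Logarithmic derivatives and division by zeros -/

noncomputable section

open Complex Set Filter Topology MeasureTheory Metric

/-- A zero-free function of moderate size has a nearly constant logarithmic derivative: write
`g = g 0 * exp h` on the disc, bound `h` by the Borel–Carathéodory theorem, and bound the variation
of `h'` by Cauchy's estimates. -/
lemma logDeriv_variation {g : ℂ → ℂ} (hg : Differentiable ℂ g) {R M : ℝ} (hR : 0 < R) (hM : 0 < M)
    (hne : ∀ z ∈ ball (0:ℂ) R, g z ≠ 0)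
    (hb : ∀ z ∈ ball (0:ℂ) R, ‖g z‖ ≤ Real.exp M * ‖g 0‖) {s : ℂ} (hs : ‖s‖ ≤ R / 8) :
    ‖logDeriv g s - logDeriv g 0‖ ≤ 64 * M / R ^ 2 * ‖s‖ := by
  have hg' : Differentiable ℂ (deriv g) := by
    intro z
    exact ((hg.differentiableOn (s := univ)).deriv isOpen_univ).differentiableAt univ_mem
  have hφ : DifferentiableOn ℂ (logDeriv g) (ball 0 R) := by
    intro z hz
    exact ((hg' z).div (hg z) (hne z hz)).differentiableWithinAt
  obtain ⟨h, h0, hh⟩ := hφ.isExactOn_ball.with_val_at 0 0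
  have hhd : DifferentiableOn ℂ h (ball 0 R) :=
    fun z hz ↦ (hh z hz).differentiableAt.differentiableWithinAt
  have hconst : ∀ z ∈ ball (0:ℂ) R, exp (-h z) * g z = g 0 := by
    have hd : ∀ z ∈ ball (0:ℂ) R, HasDerivAt (fun z ↦ exp (-h z) * g z) 0 z := by
      intro z hz
      have := ((hh z hz).neg.cexp).mul (hg z).hasDerivAt
      refine this.congr_deriv ?_
      have h1 := hne z hz
      rw [logDeriv_apply]
      field_simp
      ring
    intro z hz
    have := (convex_ball (0:ℂ) R).norm_image_sub_le_of_norm_hasDerivWithin_le (C := 0)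
      (fun z hz ↦ (hd z hz).hasDerivWithinAt) (fun z _ ↦ by simp) (mem_ball_self hR) hz
    simp only [zero_mul, norm_le_zero_iff, sub_eq_zero] at this
    rw [this, h0]; simp
  have hre : MapsTo h (ball 0 R) {z | z.re ≤ M} := by
    intro z hz
    have h1 := hconst z hz
    have h2 : ‖g z‖ = Real.exp (h z).re * ‖g 0‖ := by
      rw [← h1, norm_mul, norm_exp, neg_re, ← mul_assoc, ← Real.exp_add]; simp
    have h3 := hb z hz
    rw [h2] at h3
    have h4 : 0 < ‖g 0‖ := norm_pos_iff.mpr (hne 0 (mem_ball_self hR))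
    exact Real.exp_le_exp.mp (le_of_mul_le_mul_right h3 h4)
  have b1 : ∀ z : ℂ, ‖z‖ ≤ R / 2 → ‖h z‖ ≤ 2 * M := by
    intro z hz
    have := borelCaratheodory_zero hM hhd hre hR (z := z) (by simp; linarith) h0
    refine this.trans ?_
    rw [div_le_iff₀ (by linarith)]
    nlinarith
  have b2 : ∀ z : ℂ, ‖z‖ ≤ R / 4 → ‖logDeriv g z‖ ≤ 8 * M / R := by
    intro z hz
    have hzR : z ∈ ball (0:ℂ) R := by simp; linarith
    rw [← (hh z hzR).deriv]
    have hsub : closedBall z (R / 4) ⊆ ball 0 R := by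
      intro w hw
      have : ‖w - z‖ ≤ R / 4 := by simpa [dist_eq_norm] using hw
      have h2 : ‖w‖ ≤ ‖w - z‖ + ‖z‖ := by simpa using norm_add_le (w - z) z
      simp; linarith
    have := norm_deriv_le_of_forall_mem_sphere_norm_le (f := h) (c := z) (R := R / 4) (C := 2 * M)
      (by linarith) ((hhd.mono hsub).diffContOnCl_ball subset_rfl) (by
        intro w hw
        have : ‖w - z‖ = R / 4 := by simpa [dist_eq_norm] using hw
        have h2 : ‖w‖ ≤ ‖w - z‖ + ‖z‖ := by simpa using norm_add_le (w - z) z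
        exact b1 w (by linarith))
    refine this.trans (le_of_eq ?_)
    field_simp; ring
  have b3 : ∀ z ∈ closedBall (0:ℂ) (R / 8), ‖deriv (logDeriv g) z‖ ≤ 64 * M / R ^ 2 := by
    intro z hz
    have hz : ‖z‖ ≤ R / 8 := by simpa using hz
    have hsub : closedBall z (R / 8) ⊆ ball 0 R := by
      intro w hw
      have : ‖w - z‖ ≤ R / 8 := by simpa [dist_eq_norm] using hw
      have h2 : ‖w‖ ≤ ‖w - z‖ + ‖z‖ := by simpa using norm_add_le (w - z) z
      simp; linarith
    have := norm_deriv_le_of_forall_mem_sphere_norm_le (f := logDeriv g) (c := z) (R := R / 8)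
      (C := 8 * M / R)
      (by linarith) ((hφ.mono hsub).diffContOnCl_ball subset_rfl) (by
        intro w hw
        have : ‖w - z‖ = R / 8 := by simpa [dist_eq_norm] using hw
        have h2 : ‖w‖ ≤ ‖w - z‖ + ‖z‖ := by simpa using norm_add_le (w - z) z
        exact b2 w (by linarith))
    refine this.trans (le_of_eq ?_)
    field_simp; ring
  have := (convex_closedBall (0:ℂ) (R / 8)).norm_image_sub_le_of_norm_deriv_le
    (f := logDeriv g) (C := 64 * M / R ^ 2) (x := 0) (y := s)
    (fun z hz ↦ (hφ z (by simp at hz ⊢; linarith)).differentiableAt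
      (isOpen_ball.mem_nhds (by simp at hz ⊢; linarith))) b3 (by simp; linarith) (by simpa using hs)
  simpa using this

/-- Divide out one zero. -/
lemma divide_zero {g : ℂ → ℂ} (hg : Differentiable ℂ g) {ρ : ℂ} (h : analyticOrderAt g ρ ≠ ⊤) :
    ∃ k : ℂ → ℂ, Differentiable ℂ k ∧ k ρ ≠ 0 ∧
      ∀ z, g z = (z - ρ) ^ analyticOrderNatAt g ρ * k z := by
  have hga : AnalyticAt ℂ g ρ := hg.analyticAt ρ
  obtain ⟨k₀, hk₀, hne, heq⟩ := (hga.analyticOrderNatAt_eq_iff h).mp rfl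
  set n := analyticOrderNatAt g ρ
  set k : ℂ → ℂ := fun z ↦ if z = ρ then k₀ ρ else g z / (z - ρ) ^ n with hk
  have hloc : k =ᶠ[𝓝 ρ] k₀ := by
    filter_upwards [heq] with z hz
    simp only [hk]
    split_ifs with hzρ
    · rw [hzρ]
    · rw [hz, smul_eq_mul, mul_div_cancel_left₀]
      exact pow_ne_zero _ (sub_ne_zero.mpr hzρ)
  refine ⟨k, ?_, by simpa [hk], ?_⟩
  · intro z
    by_cases hzρ : z = ρ
    · rw [hzρ]
      exact (hloc.differentiableAt_iff).mpr hk₀.differentiableAt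
    · have : k =ᶠ[𝓝 z] fun z ↦ g z / (z - ρ) ^ n := by
        filter_upwards [isOpen_ne.mem_nhds hzρ] with w hw
        exact if_neg hw
      rw [this.differentiableAt_iff]
      exact (hg z).div (by fun_prop) (pow_ne_zero _ (sub_ne_zero.mpr hzρ))
  · intro z
    by_cases hzρ : z = ρ
    · have := heq.self_of_nhds
      rw [hzρ, this]; simp [hk]
    · simp only [hk, if_neg hzρ]
      rw [mul_div_cancel₀]
      exact pow_ne_zero _ (sub_ne_zero.mpr hzρ)

/-- Divide out finitely many zeros, with their multiplicities. -/
lemma extract_zeros {f : ℂ → ℂ} (hf : Differentiable ℂ f) (hfin : ∀ z, analyticOrderAt f z ≠ ⊤)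
    (S : Finset ℂ) : ∃ g : ℂ → ℂ, Differentiable ℂ g ∧ (∀ ρ ∈ S, g ρ ≠ 0) ∧
      ∀ z, f z = (∏ ρ ∈ S, (z - ρ) ^ analyticOrderNatAt f ρ) * g z := by
  induction S using Finset.induction_on with
  | empty => exact ⟨f, hf, by simp, by simp⟩
  | insert ρ S hρ ih =>
    obtain ⟨g, hg, hgne, hfg⟩ := ih
    set Q : ℂ → ℂ := fun z ↦ ∏ ρ ∈ S, (z - ρ) ^ analyticOrderNatAt f ρ with hQ
    have hQd : Differentiable ℂ Q := by
      simp only [hQ]; fun_prop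
    have hQρ : Q ρ ≠ 0 := by
      simp only [hQ, Finset.prod_ne_zero_iff]
      intro a ha
      exact pow_ne_zero _ (sub_ne_zero.mpr (by rintro rfl; exact hρ ha))
    have hfQ : f = Q * g := by ext z; exact hfg z
    have hQ0 : analyticOrderAt Q ρ = 0 := (hQd.analyticAt ρ).analyticOrderAt_eq_zero.mpr hQρ
    have hord : analyticOrderAt f ρ = analyticOrderAt g ρ := by
      conv_lhs => rw [hfQ]
      rw [analyticOrderAt_mul (hQd.analyticAt ρ) (hg.analyticAt ρ), hQ0, zero_add]
    obtain ⟨k, hk, hkρ, hgk⟩ := divide_zero hg (ρ := ρ) (by rw [← hord]; exact hfin ρ)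
    have hn : analyticOrderNatAt g ρ = analyticOrderNatAt f ρ := by
      simp [analyticOrderNatAt, hord]
    rw [hn] at hgk
    refine ⟨k, hk, ?_, fun z ↦ ?_⟩
    · intro a ha
      rcases Finset.mem_insert.mp ha with rfl | ha
      · exact hkρ
      · intro h0
        apply hgne a ha
        rw [hgk, h0, mul_zero]
    · rw [Finset.prod_insert hρ, hfg z, hgk z]; ring

end

/-! ### The zeros of `xi` and the partial fraction expansion -/

noncomputable section

open Complex Set Filter Topology MeasureTheory Metric

lemma xi_order_ne_top (z : ℂ) : analyticOrderAt xi z ≠ ⊤ := by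
  intro h
  rw [analyticOrderAt_eq_top] at h
  have hA : AnalyticOnNhd ℂ xi univ := fun w _ ↦ differentiable_xi.analyticAt w
  have := hA.eqOn_zero_of_preconnected_of_eventuallyEq_zero isPreconnected_univ (mem_univ z) h
    (mem_univ 1)
  rw [xi_one] at this
  simp at this

/-- The zeros of `xi`, that is, the nontrivial zeros of the Riemann zeta function. -/
abbrev NZ := {ρ : ℂ // xi ρ = 0}

/-- The multiplicity of a zero. -/
def mult (ρ : NZ) : ℕ := analyticOrderNatAt xi ρ.1

lemma mult_pos (ρ : NZ) : 0 < mult ρ := by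
  rw [Nat.pos_iff_ne_zero, mult]
  intro h
  have h2 := Nat.cast_analyticOrderNatAt (xi_order_ne_top ρ.1)
  rw [h, Nat.cast_zero, eq_comm, analyticOrderAt_eq_zero] at h2
  rcases h2 with h2 | h2
  · exact h2 (differentiable_xi.analyticAt _)
  · exact h2 ρ.2

lemma one_le_mult (ρ : NZ) : (1:ℝ) ≤ mult ρ := by exact_mod_cast mult_pos ρ

lemma finite_zeros (R : ℝ) : {ρ : NZ | ‖ρ.1 - 1‖ ≤ R}.Finite := by
  have hfin : {z : ℂ | xi z = 0 ∧ ‖z - 1‖ ≤ R}.Finite := by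
    by_contra hinf
    obtain ⟨z, -, hz⟩ := Set.Infinite.exists_accPt_of_subset_isCompact hinf
      (isCompact_closedBall (1:ℂ) R) (fun z hz ↦ by simpa [dist_eq_norm] using hz.2)
    have hA : AnalyticOnNhd ℂ xi univ := fun w _ ↦ differentiable_xi.analyticAt w
    have hfreq : ∃ᶠ w in 𝓝[≠] z, xi w = 0 := by
      rw [accPt_iff_frequently_nhdsNE] at hz
      exact hz.mono fun w hw ↦ hw.1
    have := hA.eqOn_zero_of_preconnected_of_frequently_eq_zero isPreconnected_univ (mem_univ z) hfreq
      (mem_univ 1)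
    rw [xi_one] at this
    simp at this
  refine Set.Finite.of_finite_image (f := Subtype.val) (hfin.subset ?_) Subtype.val_injective.injOn
  rintro _ ⟨ρ, hρ, rfl⟩
  exact ⟨ρ.2, hρ⟩

/-- The finite set of zeros within distance `R` of `1`. -/
def Zs (R : ℝ) : Finset NZ := (finite_zeros R).toFinset

lemma mem_Zs {R : ℝ} {ρ : NZ} : ρ ∈ Zs R ↔ ‖ρ.1 - 1‖ ≤ R := by simp [Zs]

lemma tendsto_Zs : Tendsto Zs atTop atTop := by
  refine tendsto_atTop_finset_of_monotone ?_ ?_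
  · intro a b hab ρ
    rw [mem_Zs, mem_Zs]; exact fun h ↦ h.trans hab
  · intro ρ
    exact ⟨‖ρ.1 - 1‖, mem_Zs.mpr le_rfl⟩

/-- Partial fractions with the zeros in the disc `‖z - 1‖ ≤ R` and an explicit remainder. Divide
these zeros out; on the circle `‖w - 1‖ = 2R` every factor satisfies `‖w - ρ‖ ≥ ‖1 - ρ‖`, so by the
maximum principle the quotient `g` inherits the growth bound of `xi` relative to `g 1`, and
`logDeriv_variation` applies to it. -/
lemma hadamard_finite {C : ℝ} (hC0 : 0 ≤ C) (hC : ∀ (R : ℝ) (s : ℂ), 1 ≤ R → ‖s - 1‖ ≤ R →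
    ‖xi s‖ ≤ Real.exp (C * R ^ (3/2:ℝ))) {R : ℝ} (hR : 1 ≤ R) {s : ℂ} (hs : xi s ≠ 0)
    (hsR : ‖s - 1‖ ≤ R / 8) :
    ‖(logDeriv xi s - logDeriv xi 1) - ∑ ρ ∈ Zs R, (mult ρ : ℂ) * (1 / (s - ρ) - 1 / (1 - ρ))‖ ≤
      64 * (C * (2 * R) ^ (3/2:ℝ) + 1) / R ^ 2 * ‖s - 1‖ := by
  obtain ⟨g, hg, hgne, hfg⟩ := extract_zeros differentiable_xi xi_order_ne_top
    ((Zs R).map ⟨Subtype.val, Subtype.val_injective⟩)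
  simp only [Finset.prod_map, Function.Embedding.coeFn_mk] at hfg
  have hgne' : ∀ z ∈ closedBall (1:ℂ) R, g z ≠ 0 := by
    intro z hz hgz
    have hxz : xi z = 0 := by rw [hfg, hgz, mul_zero]
    refine hgne z ?_ hgz
    rw [Finset.mem_map]
    exact ⟨⟨z, hxz⟩, mem_Zs.mpr (by simpa [dist_eq_norm] using hz), rfl⟩
  have hld : ∀ z, xi z ≠ 0 → logDeriv xi z =
      ∑ ρ ∈ Zs R, (mult ρ : ℂ) * (1 / (z - ρ)) + logDeriv g z := by
    intro z hz
    have h0 := hz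
    rw [hfg] at h0
    have hzρ : ∀ ρ ∈ Zs R, z - (ρ:ℂ) ≠ 0 := by
      intro ρ _ h
      rw [sub_eq_zero] at h
      exact hz (h ▸ ρ.2)
    have e : xi = fun z ↦ (∏ ρ ∈ Zs R, (z - (ρ:ℂ)) ^ analyticOrderNatAt xi ρ.1) * g z := funext hfg
    conv_lhs => rw [e]
    rw [logDeriv_mul z (left_ne_zero_of_mul h0) (right_ne_zero_of_mul h0) (by fun_prop) (hg z)]
    congr 1
    rw [logDeriv_prod (f := fun (ρ : NZ) (z : ℂ) ↦ (z - (ρ:ℂ)) ^ analyticOrderNatAt xi ρ.1)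
      (fun ρ hρ ↦ pow_ne_zero _ (hzρ ρ hρ)) (fun _ _ ↦ by fun_prop)]
    refine Finset.sum_congr rfl fun ρ hρ ↦ ?_
    rw [logDeriv_fun_pow (by fun_prop)]
    congr 1
    simp [logDeriv_apply]
  have hR2 : 1 ≤ 2 * R := by linarith
  set E := Real.exp (C * (2 * R) ^ (3/2:ℝ)) with hE
  have hnorm1 : (∏ ρ ∈ Zs R, ‖1 - (ρ:ℂ)‖ ^ analyticOrderNatAt xi ρ.1) * ‖g 1‖ = 1 := by
    have := congrArg norm (hfg 1)
    rw [xi_one, norm_mul, norm_prod] at this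
    simpa using this.symm
  set Q := ∏ ρ ∈ Zs R, ‖1 - (ρ:ℂ)‖ ^ analyticOrderNatAt xi ρ.1 with hQ
  have hQ0 : 0 < Q := by
    refine lt_of_le_of_ne (by positivity) ?_
    intro h
    rw [← h] at hnorm1
    simp at hnorm1
  have hsph : ∀ w ∈ sphere (1:ℂ) (2 * R), ‖g w‖ ≤ E * ‖g 1‖ := by
    intro w hw
    have hw : ‖w - 1‖ = 2 * R := by simpa [dist_eq_norm] using hw
    have h1 := hC (2 * R) w hR2 hw.le
    rw [hfg, norm_mul, norm_prod] at h1
    have h2 : Q ≤ ∏ ρ ∈ Zs R, ‖(w - (ρ:ℂ)) ^ analyticOrderNatAt xi ρ.1‖ := by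
      rw [hQ]
      refine Finset.prod_le_prod (fun _ _ ↦ by positivity) fun ρ hρ ↦ ?_
      rw [norm_pow]
      refine pow_le_pow_left₀ (norm_nonneg _) ?_ _
      have h3 := mem_Zs.mp hρ
      have h4 : ‖w - 1‖ ≤ ‖w - ρ.1‖ + ‖ρ.1 - 1‖ := by
        simpa using norm_add_le (w - ρ.1) (ρ.1 - 1)
      rw [norm_sub_rev]
      linarith
    have h5 : Q * ‖g w‖ ≤ E := (mul_le_mul_of_nonneg_right h2 (norm_nonneg _)).trans h1
    have h6 : ‖g w‖ = (Q * ‖g w‖) * ‖g 1‖ := by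
      calc ‖g w‖ = (Q * ‖g 1‖) * ‖g w‖ := by rw [hnorm1, one_mul]
        _ = _ := by ring
    rw [h6]
    gcongr
  have hball : ∀ w ∈ closedBall (1:ℂ) (2 * R), ‖g w‖ ≤ E * ‖g 1‖ := by
    intro w hw
    refine norm_le_of_forall_mem_frontier_norm_le (U := ball (1:ℂ) (2 * R)) isBounded_ball
      hg.diffContOnCl (fun z hz ↦ hsph z (frontier_ball_subset_sphere hz)) ?_
    rw [closure_ball _ (by linarith)]; exact hw
  have hvar := logDeriv_variation (g := fun z ↦ g (1 + z)) (R := R)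
    (M := C * (2 * R) ^ (3/2:ℝ) + 1) (s := s - 1) (by fun_prop) (by linarith) (by positivity)
    (fun z hz ↦ hgne' _ (by simp at hz ⊢; linarith)) (fun z hz ↦ by
      have := hball (1 + z) (by simp at hz ⊢; linarith)
      simp only [add_zero]
      refine this.trans ?_
      gcongr
      rw [hE]; exact Real.exp_le_exp.mpr (by linarith)) hsR
  have hshift : ∀ z, logDeriv (fun z ↦ g (1 + z)) z = logDeriv g (1 + z) := by
    intro z
    simp only [logDeriv_apply]
    rw [deriv_comp_const_add]
  rw [hshift, hshift] at hvar
  simp only [add_sub_cancel, add_zero] at hvar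
  rw [hld s hs, hld 1 (by rw [xi_one]; exact one_ne_zero)]
  refine le_trans (le_of_eq ?_) hvar
  congr 1
  simp only [mul_sub, Finset.sum_sub_distrib]
  ring

/-- The partial fraction expansion of `xi'/xi`: the remainder in `hadamard_finite` is
`O(R^{-1/2})`. -/
lemma hadamard_limit {s : ℂ} (hs : xi s ≠ 0) :
    Tendsto (fun R : ℝ ↦ ∑ ρ ∈ Zs R, (mult ρ : ℂ) * (1 / (s - ρ) - 1 / (1 - ρ))) atTop
      (𝓝 (logDeriv xi s - logDeriv xi 1)) := by
  obtain ⟨C, hC0, hC⟩ := xi_growth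
  rw [tendsto_iff_norm_sub_tendsto_zero]
  have hlim : Tendsto (fun R : ℝ ↦ 64 * (C * (2 * R) ^ (3/2:ℝ) + 1) / R ^ 2 * ‖s - 1‖) atTop (𝓝 0) := by
    have h1 : Tendsto (fun R : ℝ ↦ R ^ (-(1/2:ℝ))) atTop (𝓝 0) := tendsto_rpow_neg_atTop (by norm_num)
    have h2 : Tendsto (fun R : ℝ ↦ R ^ (-(2:ℝ))) atTop (𝓝 0) := tendsto_rpow_neg_atTop (by norm_num)
    have h3 := ((h1.const_mul (64 * C * 2 ^ (3/2:ℝ))).add (h2.const_mul 64)).mul_const ‖s - 1‖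
    simp only [mul_zero, add_zero, zero_mul] at h3
    refine h3.congr' ?_
    filter_upwards [eventually_gt_atTop 0] with R hR
    rw [Real.mul_rpow (by norm_num) hR.le, Real.rpow_neg hR.le 2,
      show (-(1/2:ℝ)) = 3/2 - 2 by norm_num, Real.rpow_sub hR, Real.rpow_two]
    field_simp
  refine squeeze_zero' (.of_forall fun _ ↦ norm_nonneg _) ?_ hlim
  filter_upwards [eventually_ge_atTop 1, eventually_ge_atTop (8 * ‖s - 1‖)] with R hR1 hR2
  rw [norm_sub_rev]
  exact hadamard_finite hC0 hC hR1 hs (by linarith)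

end

/-! ### Numerical values of `γ` and `log π` -/

noncomputable section

open Real Filter Topology

lemma log_one_add_ge {x : ℝ} (hx : 0 ≤ x) :
    x / 2 + x / (2 * (1 + x)) - x ^ 2 / 12 + x ^ 2 / (12 * (1 + x) ^ 2) ≤ log (1 + x) := by
  set f : ℝ → ℝ := fun x ↦ log (1 + x) -
    (x / 2 + x / (2 * (1 + x)) - x ^ 2 / 12 + x ^ 2 / (12 * (1 + x) ^ 2)) with hf
  have hd : ∀ y : ℝ, 0 ≤ y → HasDerivAt f (y ^ 4 / (6 * (1 + y) ^ 3)) y := by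
    intro y hy
    have h1 : (1 + y) ≠ 0 := by positivity
    have hl : HasDerivAt (fun x : ℝ ↦ 1 + x) 1 y := (hasDerivAt_id' y).const_add 1
    have e1 := hl.log h1
    have e2 := (hasDerivAt_id' y).div (hl.const_mul 2) (by positivity)
    have e3 := ((hasDerivAt_pow 2 y)).div ((hl.pow 2).const_mul 12) (by simp only [Pi.pow_apply]; positivity)
    have := e1.sub ((((hasDerivAt_id' y).div_const 2).add e2).sub ((hasDerivAt_pow 2 y).div_const 12) |>.add e3)
    refine this.congr_deriv ?_
    simp only [Pi.pow_apply]
    field_simp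
    ring
  have hmono : MonotoneOn f (Set.Ici 0) := by
    refine monotoneOn_of_deriv_nonneg (convex_Ici 0)
      (fun y hy ↦ (hd y hy).continuousAt.continuousWithinAt) ?_ ?_
    · intro y hy
      rw [interior_Ici] at hy
      exact (hd y hy.le).differentiableAt.differentiableWithinAt
    · intro y hy
      rw [interior_Ici] at hy
      have hy : 0 < y := hy
      rw [(hd y hy.le).deriv]
      positivity
  have := hmono (Set.mem_Ici.mpr le_rfl) (Set.mem_Ici.mpr hx) hx
  simp only [hf] at this
  norm_num at this
  linarith

lemma log_one_add_le {x : ℝ} (hx : 0 ≤ x) :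
    log (1 + x) ≤ x / 2 + x / (2 * (1 + x)) - x ^ 2 / 12 + x ^ 2 / (12 * (1 + x) ^ 2)
      + x ^ 4 / 120 - x ^ 4 / (120 * (1 + x) ^ 4) := by
  set f : ℝ → ℝ := fun x ↦ (x / 2 + x / (2 * (1 + x)) - x ^ 2 / 12 + x ^ 2 / (12 * (1 + x) ^ 2)
      + x ^ 4 / 120 - x ^ 4 / (120 * (1 + x) ^ 4)) - log (1 + x) with hf
  have hd : ∀ y : ℝ, 0 ≤ y → HasDerivAt f (y ^ 3 / 30 - y ^ 3 / (30 * (1 + y) ^ 5)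
      - y ^ 4 / (6 * (1 + y) ^ 3)) y := by
    intro y hy
    have h1 : (1 + y) ≠ 0 := by positivity
    have hl : HasDerivAt (fun x : ℝ ↦ 1 + x) 1 y := (hasDerivAt_id' y).const_add 1
    have e1 := hl.log h1
    have e2 := (hasDerivAt_id' y).div (hl.const_mul 2) (by positivity)
    have e3 := ((hasDerivAt_pow 2 y)).div ((hl.pow 2).const_mul 12) (by simp only [Pi.pow_apply]; positivity)
    have e4 := ((hasDerivAt_pow 4 y)).div ((hl.pow 4).const_mul 120) (by simp only [Pi.pow_apply]; positivity)
    have := (((((hasDerivAt_id' y).div_const 2).add e2).sub ((hasDerivAt_pow 2 y).div_const 12) |>.add e3).add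
      ((hasDerivAt_pow 4 y).div_const 120) |>.sub e4).sub e1
    refine this.congr_deriv ?_
    simp only [Pi.pow_apply]
    field_simp
    ring
  have hmono : MonotoneOn f (Set.Ici 0) := by
    refine monotoneOn_of_deriv_nonneg (convex_Ici 0)
      (fun y hy ↦ (hd y hy).continuousAt.continuousWithinAt) ?_ ?_
    · intro y hy
      rw [interior_Ici] at hy
      exact (hd y hy.le).differentiableAt.differentiableWithinAt
    · intro y hy
      rw [interior_Ici] at hy
      have hy : 0 < y := hy
      rw [(hd y hy.le).deriv]
      have : y ^ 3 / 30 - y ^ 3 / (30 * (1 + y) ^ 5) - y ^ 4 / (6 * (1 + y) ^ 3) =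
          y ^ 5 * (y ^ 3 + 5 * y ^ 2 + 5 * y)/ (30 * (1 + y) ^ 5) := by
        field_simp; ring
      rw [this]
      positivity
  have := hmono (Set.mem_Ici.mpr le_rfl) (Set.mem_Ici.mpr hx) hx
  simp only [hf] at this
  norm_num at this
  linarith

/-- The sequence `H_N - log N - 1/(2N) + 1/(12N²)` with `N = n + 1`. It is the Euler–Maclaurin
approximation to `γ`, with error at most `1/(120 N⁴)`. -/
def gseq (n : ℕ) : ℝ := (harmonic (n + 1) : ℝ) - log ((n : ℝ) + 1) - 1 / (2 * ((n:ℝ) + 1)) +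
  1 / (12 * ((n:ℝ) + 1) ^ 2)

lemma tendsto_gseq : Tendsto gseq atTop (𝓝 eulerMascheroniConstant) := by
  have h1 := (tendsto_add_atTop_iff_nat 1).mpr tendsto_harmonic_sub_log
  have h0 : Tendsto (fun n : ℕ ↦ (1 : ℝ) / ((n:ℝ) + 1)) atTop (𝓝 0) :=
    tendsto_one_div_add_atTop_nhds_zero_nat
  have h2 := (h1.sub (h0.const_mul (1/2))).add ((h0.mul h0).const_mul (1/12))
  simp only [mul_zero, sub_zero, add_zero] at h2
  refine h2.congr fun n ↦ ?_
  simp only [gseq]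
  push_cast
  field_simp

lemma gseq_succ (n : ℕ) : gseq (n + 1) - gseq n =
    (1 / ((n:ℝ) + 1)) / 2 + (1 / ((n:ℝ) + 1)) / (2 * (1 + (1 / ((n:ℝ) + 1)))) - (1 / ((n:ℝ) + 1)) ^ 2 / 12
     + (1 / ((n:ℝ) + 1)) ^ 2 / (12 * (1 + (1 / ((n:ℝ) + 1))) ^ 2) - log (1 + 1 / ((n:ℝ) + 1)) := by
  simp only [gseq, harmonic_succ (n + 1)]
  have hn : (0:ℝ) < (n:ℝ) + 1 := by positivity
  have : log (1 + 1 / ((n:ℝ) + 1)) = log ((n:ℝ) + 1 + 1) - log ((n:ℝ) + 1) := by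
    rw [← log_div (by positivity) (by positivity)]; congr 1; field_simp
  rw [this]
  push_cast
  have e : 1 + 1 / ((n:ℝ) + 1) = (n + 2) / (n + 1) := by field_simp; ring
  rw [e]
  field_simp
  ring

lemma gamma_le_gseq (n : ℕ) : eulerMascheroniConstant ≤ gseq n := by
  have hanti : Antitone gseq := antitone_nat_of_succ_le fun n ↦ by
    have := gseq_succ n
    have h2 := log_one_add_ge (x := 1 / ((n:ℝ) + 1)) (by positivity)
    linarith
  exact hanti.le_of_tendsto tendsto_gseq n

lemma gseq_sub_le_gamma (n : ℕ) : gseq n - 1 / (120 * ((n:ℝ) + 1) ^ 4) ≤ eulerMascheroniConstant := by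
  have hmono : Monotone fun n ↦ gseq n - 1 / (120 * ((n:ℝ) + 1) ^ 4) := monotone_nat_of_le_succ fun n ↦ by
    have := gseq_succ n
    have h2 := log_one_add_le (x := 1 / ((n:ℝ) + 1)) (by positivity)
    have e : 1 + 1 / ((n:ℝ) + 1) = (n + 2) / (n + 1) := by field_simp; ring
    have e2 : (1 / ((n:ℝ) + 1)) ^ 4 / (120 * (1 + (1 / ((n:ℝ) + 1))) ^ 4) =
        1 / (120 * (((n+1 : ℕ):ℝ) + 1) ^ 4) := by
      rw [e]; push_cast; field_simp; ring
    have e3 : (1 / ((n:ℝ) + 1)) ^ 4 / 120 = 1 / (120 * ((n:ℝ) + 1) ^ 4) := by field_simp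
    rw [e2, e3] at h2
    linarith
  have h4 : Tendsto (fun n : ℕ ↦ gseq n - 1 / (120 * ((n:ℝ) + 1) ^ 4)) atTop
      (𝓝 eulerMascheroniConstant) := by
    have h0 : Tendsto (fun n : ℕ ↦ (1 : ℝ) / ((n:ℝ) + 1)) atTop (𝓝 0) :=
      tendsto_one_div_add_atTop_nhds_zero_nat
    have := tendsto_gseq.sub ((h0.pow 4).const_mul (1/120))
    simp only [ne_eq, OfNat.ofNat_ne_zero, not_false_eq_true, zero_pow, mul_zero, sub_zero] at this
    refine this.congr fun n ↦ ?_
    field_simp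
  exact hmono.ge_of_tendsto h4 n

lemma harmonic_64_bounds : (4.743890903 : ℝ) ≤ (harmonic (63 + 1) : ℝ) ∧
    (harmonic (63 + 1) : ℝ) ≤ 4.743890904 := by
  have h1 : (4743890903 / 1000000000 : ℚ) ≤ harmonic (63 + 1) ∧
      harmonic (63 + 1) ≤ 4743890904 / 1000000000 := by
    unfold harmonic
    decide +kernel
  constructor
  · have := (Rat.cast_le (K := ℝ)).mpr h1.1
    norm_num at this ⊢
  · have := (Rat.cast_le (K := ℝ)).mpr h1.2
    norm_num at this ⊢

lemma log_64 : log (((63:ℕ):ℝ) + 1) = 6 * log 2 := by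
  rw [show (((63:ℕ):ℝ) + 1) = 2 ^ 6 by norm_num, log_pow]; norm_num

lemma gamma_gt : 0.57721566 < eulerMascheroniConstant := by
  have h := gseq_sub_le_gamma 63
  simp only [gseq, log_64] at h
  have := harmonic_64_bounds.1
  have := log_two_lt_d9
  norm_num at *
  linarith

lemma gamma_lt : eulerMascheroniConstant < 0.57721567 := by
  have h := gamma_le_gseq 63
  simp only [gseq, log_64] at h
  have := harmonic_64_bounds.2
  have := log_two_gt_d9
  norm_num at *
  linarith

lemma log_pi_gt : 1.144725 < log π := by
  rw [lt_log_iff_exp_lt pi_pos, show (1.144725:ℝ) = 1 + 0.144725 by norm_num, exp_add]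
  have h1 := exp_one_lt_d9
  have h2 := exp_bound' (x := 0.144725) (by norm_num) (by norm_num) (n := 6) (by norm_num)
  simp only [Finset.sum_range_succ, Finset.sum_range_zero, Nat.factorial] at h2
  norm_num at h2
  have h3 := pi_gt_d6
  have h4 := exp_pos 1
  have h5 : rexp 1 * rexp 0.144725 ≤ 2.7182818286 * rexp 0.144725 :=
    mul_le_mul_of_nonneg_right h1.le (exp_pos _).le
  norm_num at *
  linarith

lemma log_pi_lt : log π < 1.14474 := by
  rw [log_lt_iff_lt_exp pi_pos, show (1.14474:ℝ) = 1 + 0.14474 by norm_num, exp_add]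
  have h1 := exp_one_gt_d9
  have h2 := sum_le_exp_of_nonneg (x := 0.14474) (by norm_num) 6
  simp only [Finset.sum_range_succ, Finset.sum_range_zero, Nat.factorial] at h2
  norm_num at h2
  have h3 := pi_lt_d6
  have h5 : 2.7182818283 * rexp 0.14474 ≤ rexp 1 * rexp 0.14474 :=
    mul_le_mul_of_nonneg_right h1.le (exp_pos _).le
  norm_num at *
  linarith

/-- The constant `A = 2 + γ - log 4π`. -/
def cA : ℝ := 2 + eulerMascheroniConstant - log (4 * π)

lemma log_four_pi : log (4 * π) = 2 * log 2 + log π := by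
  rw [log_mul (by norm_num) pi_ne_zero, show (4:ℝ) = 2 ^ 2 by norm_num, log_pow]; norm_num

lemma cA_lt : cA < 0.0462 := by
  have := gamma_lt
  have := log_pi_gt
  have := log_two_gt_d9
  rw [cA, log_four_pi]; linarith

lemma cA_gt : 0.04618 < cA := by
  have := gamma_gt
  have := log_pi_lt
  have := log_two_lt_d9
  rw [cA, log_four_pi]; linarith

end

/-! ### Absolutely convergent sums over the zeros -/

noncomputable section

open Complex Set Filter Topology MeasureTheory Metric

lemma logDeriv_xi_one : logDeriv xi 1 = (cA / 2 : ℂ) := by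
  rw [logDeriv_apply, xi_one, deriv_xi_one, completedRiemannZeta₀_one, cA]
  have : Complex.log (4 * (Real.pi:ℂ)) = ((Real.log (4 * Real.pi) : ℝ) : ℂ) := by
    rw [ofReal_log (by positivity)]; push_cast; rfl
  rw [this]
  push_cast
  ring

lemma deriv_xi_one_sub (s : ℂ) : deriv xi (1 - s) = - deriv xi s := by
  have h1 : xi = fun s ↦ xi (1 - s) := funext fun s ↦ (xi_one_sub s).symm
  have h2 : deriv xi s = - deriv xi (1 - s) := by
    conv_lhs => rw [h1]
    rw [deriv_comp_const_sub]
  rw [h2, neg_neg]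

lemma logDeriv_xi_zero : logDeriv xi 0 = -(cA / 2 : ℂ) := by
  rw [← logDeriv_xi_one, logDeriv_apply, logDeriv_apply, xi_zero, xi_one]
  have := deriv_xi_one_sub 1
  rw [sub_self] at this
  rw [this]; ring

lemma NZ.re_pos (ρ : NZ) : 0 < ρ.1.re := re_pos_of_xi ρ.2
lemma NZ.re_lt (ρ : NZ) : ρ.1.re < 1 := re_lt_one_of_xi ρ.2
lemma NZ.ne_zero (ρ : NZ) : ρ.1 ≠ 0 := fun h ↦ by have := ρ.re_pos; simp [h] at this
lemma NZ.one_sub_ne_zero (ρ : NZ) : 1 - ρ.1 ≠ 0 := fun h ↦ by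
  have := ρ.re_lt; rw [← sub_eq_zero.mp h] at this; simp at this

/-- The symmetry `ρ ↦ 1 - ρ` of the zeros given by the functional equation. -/
def reflZ : NZ ≃ NZ where
  toFun ρ := ⟨1 - ρ.1, by rw [xi_one_sub]; exact ρ.2⟩
  invFun ρ := ⟨1 - ρ.1, by rw [xi_one_sub]; exact ρ.2⟩
  left_inv ρ := by simp
  right_inv ρ := by simp

@[simp] lemma reflZ_coe (ρ : NZ) : (reflZ ρ).1 = 1 - ρ.1 := rfl

lemma order_one_sub (z : ℂ) : analyticOrderAt xi (1 - z) = analyticOrderAt xi z := by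
  have h1 : xi ∘ (fun s ↦ (1 - s)) = xi := funext fun s ↦ xi_one_sub s
  have hd : deriv (fun s : ℂ ↦ 1 - s) z ≠ 0 := by
    simp
  have h := analyticOrderAt_comp_of_deriv_ne_zero (f := xi) (g := fun s : ℂ ↦ 1 - s) (z₀ := z)
    (by fun_prop) hd
  rw [h1] at h
  exact h.symm

@[simp] lemma mult_refl (ρ : NZ) : mult (reflZ ρ) = mult ρ := by
  simp only [mult, reflZ_coe, analyticOrderNatAt, order_one_sub]

/-- `a_ρ = Re (1/ρ + 1/(1-ρ))` -/
def aa (ρ : NZ) : ℝ := (1 / ρ.1 + 1 / (1 - ρ.1)).re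

lemma aa_eq (ρ : NZ) : aa ρ = ρ.1.re / (ρ.1.re ^ 2 + ρ.1.im ^ 2) +
    (1 - ρ.1.re) / ((1 - ρ.1.re) ^ 2 + ρ.1.im ^ 2) := by
  simp only [aa, one_div, add_re, inv_re, normSq_apply, sub_re, sub_im, one_re, one_im]
  ring_nf

lemma aa_ge (ρ : NZ) : 1 / (1 + ρ.1.im ^ 2) ≤ aa ρ := by
  have h0 := ρ.re_pos
  have h1 := ρ.re_lt
  rw [aa_eq]
  set b := ρ.1.re
  set g := ρ.1.im
  have e1 : b / (1 + g ^ 2) ≤ b / (b ^ 2 + g ^ 2) :=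
    div_le_div_of_nonneg_left h0.le (by positivity) (by nlinarith)
  have hb' : 0 < 1 - b := by linarith
  have e2 : (1 - b) / (1 + g ^ 2) ≤ (1 - b) / ((1 - b) ^ 2 + g ^ 2) :=
    div_le_div_of_nonneg_left hb'.le (by positivity) (by nlinarith)
  calc 1 / (1 + g ^ 2) = b / (1 + g ^ 2) + (1 - b) / (1 + g ^ 2) := by ring
    _ ≤ _ := add_le_add e1 e2

lemma aa_pos (ρ : NZ) : 0 < aa ρ := lt_of_lt_of_le (by positivity) (aa_ge ρ)

lemma aa_refl (ρ : NZ) : aa (reflZ ρ) = aa ρ := by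
  simp only [aa, reflZ_coe]; ring_nf

/-- The expansion `hadamard_limit` at `s = 0`, where `xi'/xi` takes the values `∓ cA/2` at `0`
and `1`. -/
lemma tendsto_inv_sum : Tendsto (fun R : ℝ ↦ ∑ ρ ∈ Zs R, (mult ρ : ℂ) * (1 / ρ.1 + 1 / (1 - ρ.1)))
    atTop (𝓝 (cA : ℂ)) := by
  have h := (hadamard_limit (s := 0) (by rw [xi_zero]; exact one_ne_zero)).neg
  rw [logDeriv_xi_zero, logDeriv_xi_one] at h
  have e : -(-(cA / 2 : ℂ) - cA / 2) = cA := by ring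
  rw [e] at h
  refine h.congr fun R ↦ ?_
  rw [← Finset.sum_neg_distrib]
  refine Finset.sum_congr rfl fun ρ _ ↦ ?_
  rw [zero_sub, one_div_neg_eq_neg_one_div]
  ring

/-- All terms are positive, so the convergence along discs is absolute convergence. -/
lemma hasSum_aa : HasSum (fun ρ : NZ ↦ mult ρ * aa ρ) cA := by
  have h : Tendsto (fun R : ℝ ↦ ∑ ρ ∈ Zs R, mult ρ * aa ρ) atTop (𝓝 cA) := by
    have := (continuous_re.tendsto _).comp tendsto_inv_sum
    simp only [ofReal_re] at this
    refine this.congr fun R ↦ ?_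
    simp only [Function.comp, re_sum]
    refine Finset.sum_congr rfl fun ρ _ ↦ ?_
    rw [← ofReal_natCast, re_ofReal_mul]; rfl
  have hnn : ∀ ρ : NZ, 0 ≤ mult ρ * aa ρ := fun ρ ↦ mul_nonneg (Nat.cast_nonneg _) (aa_pos ρ).le
  have hmono : Monotone fun R : ℝ ↦ ∑ ρ ∈ Zs R, mult ρ * aa ρ := by
    intro a b hab
    refine Finset.sum_le_sum_of_subset_of_nonneg ?_ fun ρ _ _ ↦ hnn ρ
    intro ρ
    rw [mem_Zs, mem_Zs]; exact fun h ↦ h.trans hab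
  have hs : Summable fun ρ : NZ ↦ mult ρ * aa ρ := by
    refine summable_of_sum_le hnn (c := cA) fun u ↦ ?_
    obtain ⟨R, hR⟩ := (tendsto_Zs.eventually_ge_atTop u).exists
    calc _ ≤ ∑ ρ ∈ Zs R, mult ρ * aa ρ :=
          Finset.sum_le_sum_of_subset_of_nonneg hR fun ρ _ _ ↦ hnn ρ
      _ ≤ cA := hmono.ge_of_tendsto h R
  have := hs.hasSum.comp tendsto_Zs
  rw [← tendsto_nhds_unique this h]
  exact hs.hasSum

/-- A zero `ρ` and its reflection `1 - ρ` each contribute at least `1/(1 + (Im ρ)²)` to the sum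
`cA < 0.0462`. -/
lemma im_sq_ge (ρ : NZ) : 42.25 ≤ ρ.1.im ^ 2 := by
  have hnn : ∀ ρ : NZ, 0 ≤ mult ρ * aa ρ := fun ρ ↦ mul_nonneg (Nat.cast_nonneg _) (aa_pos ρ).le
  have hA := cA_lt
  by_contra hlt
  push Not at hlt
  have h1 := aa_ge ρ
  have h2 : 1 / 43.25 < 1 / (1 + ρ.1.im ^ 2) := by
    apply one_div_lt_one_div_of_lt (by positivity); linarith
  have hm := one_le_mult ρ
  have haa := aa_pos ρ
  have hma : aa ρ ≤ mult ρ * aa ρ := by nlinarith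
  by_cases heq : reflZ ρ = ρ
  · have h3 := congrArg Subtype.val heq
    simp only [reflZ_coe] at h3
    have him : ρ.1.im = 0 := by
      have := congrArg Complex.im h3; simp at this; linarith
    have h4 := le_hasSum hasSum_aa ρ fun j _ ↦ hnn j
    rw [him] at h1
    norm_num at *
    linarith
  · have h4 := sum_le_hasSum {reflZ ρ, ρ} (fun j _ ↦ hnn j) hasSum_aa
    rw [Finset.sum_pair heq, mult_refl, aa_refl] at h4
    norm_num at *
    linarith

lemma im_sq_pos (ρ : NZ) : 0 < ρ.1.im ^ 2 := by have := im_sq_ge ρ; linarith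

lemma inv_im_sq_le (ρ : NZ) : 1 / ρ.1.im ^ 2 ≤ 1.024 * aa ρ := by
  refine le_trans ?_ (mul_le_mul_of_nonneg_left (aa_ge ρ) (by norm_num))
  have := im_sq_ge ρ
  rw [mul_one_div, div_le_div_iff₀ (by linarith) (by linarith)]
  linarith

/-- The sum `∑ mult ρ / (Im ρ)²` converges. -/
lemma summable_w : Summable fun ρ : NZ ↦ (mult ρ : ℝ) * (1 / ρ.1.im ^ 2) := by
  refine Summable.of_nonneg_of_le (fun ρ ↦ by have := im_sq_pos ρ; positivity) (fun ρ ↦ ?_)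
    (hasSum_aa.summable.mul_left 1.024)
  have := inv_im_sq_le ρ
  have hm := one_le_mult ρ
  calc _ ≤ (mult ρ:ℝ) * (1.024 * aa ρ) := by gcongr
    _ = _ := by ring

lemma tsum_w_le : ∑' ρ : NZ, (mult ρ : ℝ) * (1 / ρ.1.im ^ 2) ≤ 1.024 * cA := by
  rw [← hasSum_aa.tsum_eq, ← tsum_mul_left]
  refine summable_w.tsum_le_tsum (fun ρ ↦ ?_) (hasSum_aa.summable.mul_left _)
  have := inv_im_sq_le ρ
  have hm := one_le_mult ρ
  calc _ ≤ (mult ρ:ℝ) * (1.024 * aa ρ) := by gcongr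
    _ = _ := by ring

lemma norm_inv_le (ρ : NZ) : ‖1 / (ρ.1 * (1 - ρ.1))‖ ≤ 1 / ρ.1.im ^ 2 := by
  rw [norm_div, norm_one, norm_mul]
  apply one_div_le_one_div_of_le (im_sq_pos ρ)
  have h1 : |ρ.1.im| ≤ ‖ρ.1‖ := abs_im_le_norm _
  have h2 : |ρ.1.im| ≤ ‖1 - ρ.1‖ := by simpa using abs_im_le_norm (1 - ρ.1)
  rw [← sq_abs, sq]
  exact mul_le_mul h1 h2 (abs_nonneg _) (norm_nonneg _)

/-- Here `1/(ρ (1-ρ)) = 1/ρ + 1/(1-ρ)`; this is the coefficient of `x^{ρ-1}` in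
`explicit_formula`. -/
lemma hasSum_inv : HasSum (fun ρ : NZ ↦ (mult ρ : ℂ) * (1 / (ρ.1 * (1 - ρ.1)))) (cA : ℂ) := by
  have hs : Summable fun ρ : NZ ↦ (mult ρ : ℂ) * (1 / (ρ.1 * (1 - ρ.1))) := by
    refine Summable.of_norm_bounded summable_w fun ρ ↦ ?_
    rw [norm_mul, norm_natCast]
    exact mul_le_mul_of_nonneg_left (norm_inv_le ρ) (Nat.cast_nonneg _)
  have h1 := hs.hasSum.comp tendsto_Zs
  have h2 : Tendsto (fun R : ℝ ↦ ∑ ρ ∈ Zs R, (mult ρ : ℂ) * (1 / (ρ.1 * (1 - ρ.1)))) atTop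
      (𝓝 (cA : ℂ)) := by
    refine tendsto_inv_sum.congr fun R ↦ Finset.sum_congr rfl fun ρ _ ↦ ?_
    have := ρ.ne_zero
    have := ρ.one_sub_ne_zero
    field_simp
    ring
  rw [← tendsto_nhds_unique h1 h2]
  exact hs.hasSum

lemma NZ.sub_ne_zero {s : ℂ} (hs : 1 < s.re) (ρ : NZ) : s - ρ.1 ≠ 0 := fun h ↦ by
  have := ρ.re_lt; rw [← sub_eq_zero.mp h] at this; linarith

lemma NZ.norm_sub_ge {s : ℂ} (ρ : NZ) : s.re - 1 ≤ ‖s - ρ.1‖ := by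
  have h1 := re_le_norm (s - ρ.1)
  have := ρ.re_lt
  rw [sub_re] at h1
  linarith

lemma hasSum_of_eq {ι α : Type*} [AddCommMonoid α] [TopologicalSpace α] {f g : ι → α} {a b : α}
    (h : HasSum f a) (hf : ∀ i, g i = f i) (hb : b = a) : HasSum g b := by
  rw [funext hf, hb]; exact h

lemma summable_inv_s {s : ℂ} (hs : 1 < s.re) :
    Summable fun ρ : NZ ↦ (mult ρ : ℂ) * (1 / (ρ.1 * (1 - ρ.1) * (s - ρ.1))) := by
  refine Summable.of_norm_bounded (summable_w.mul_right (1 / (s.re - 1))) fun ρ ↦ ?_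
  have h1 := norm_inv_le ρ
  have h2 : 1 / ‖s - ρ.1‖ ≤ 1 / (s.re - 1) :=
    one_div_le_one_div_of_le (by linarith) ρ.norm_sub_ge
  have e : ‖(mult ρ : ℂ) * (1 / (ρ.1 * (1 - ρ.1) * (s - ρ.1)))‖
      = mult ρ * (‖1 / (ρ.1 * (1 - ρ.1))‖ * (1 / ‖s - ρ.1‖)) := by
    simp only [norm_mul, norm_div, norm_natCast, norm_one]
    rw [div_mul_div_comm, one_mul]
  rw [e, mul_assoc]
  have := im_sq_pos ρ
  gcongr

lemma xi_ne {s : ℂ} (hs : 1 < s.re) : xi s ≠ 0 := xi_ne_zero_of_one_le_re hs.le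

/-- The Laplace transform side of the sum over zeros in `explicit_formula`. -/
lemma hasSum_inv_s {s : ℂ} (hs : 1 < s.re) :
    HasSum (fun ρ : NZ ↦ (mult ρ : ℂ) * (1 / (ρ.1 * (1 - ρ.1) * (s - ρ.1))))
      (1 / s * (cA - (logDeriv xi s - cA / 2) / (s - 1))) := by
  have h1 := (summable_inv_s hs).hasSum.comp tendsto_Zs
  have hs0 : s ≠ 0 := fun h ↦ by rw [h] at hs; norm_num at hs
  have hs1 : s - 1 ≠ 0 := fun h ↦ by rw [sub_eq_zero.mp h] at hs; norm_num at hs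
  have h2 := ((hasSum_inv.comp tendsto_Zs).sub ((hadamard_limit (xi_ne hs)).div_const
    (s - 1))).const_mul (1 / s)
  rw [logDeriv_xi_one] at h2
  have h3 := tendsto_nhds_unique (h1.congr' ?_) h2
  · rw [← h3]; exact (summable_inv_s hs).hasSum
  · refine Eventually.of_forall fun R ↦ ?_
    simp only [Function.comp_apply]
    rw [Finset.sum_div, ← Finset.sum_sub_distrib, Finset.mul_sum]
    refine Finset.sum_congr rfl fun ρ _ ↦ ?_
    have := ρ.ne_zero
    have := ρ.one_sub_ne_zero
    have := ρ.sub_ne_zero hs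
    field_simp
    ring

lemma hasSum_logDeriv {s : ℂ} (hs : 1 < s.re) :
    HasSum (fun ρ : NZ ↦ (mult ρ : ℂ) * (1 / (s - ρ.1) - 1 / (1 - ρ.1)))
      (logDeriv xi s - cA / 2) := by
  have hs0 : s ≠ 0 := fun h ↦ by rw [h] at hs; norm_num at hs
  have hs1 : s - 1 ≠ 0 := fun h ↦ by rw [sub_eq_zero.mp h] at hs; norm_num at hs
  have h := ((hasSum_inv.sub ((hasSum_inv_s hs).mul_left s)).mul_left (s - 1))
  refine hasSum_of_eq h (fun ρ ↦ ?_) ?_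
  · have := ρ.ne_zero
    have := ρ.one_sub_ne_zero
    have := ρ.sub_ne_zero hs
    field_simp
    ring
  · field_simp
    ring

/-- Zeros of `xi` paired by the functional equation: the sum converges absolutely. -/
lemma hasSum_pair {s : ℂ} (hs : 1 < s.re) :
    HasSum (fun ρ : NZ ↦ (mult ρ : ℂ) * (1 / (s - ρ.1) + 1 / (s - 1 + ρ.1)))
      (2 * logDeriv xi s) := by
  have h := hasSum_logDeriv hs
  have h' := (reflZ.hasSum_iff).mpr h
  have h2 := (h.add h').add hasSum_inv
  refine hasSum_of_eq h2 (fun ρ ↦ ?_) ?_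
  · simp only [Function.comp_apply, mult_refl, reflZ_coe]
    have := ρ.ne_zero
    have := ρ.one_sub_ne_zero
    have e : s - (1 - ρ.1) = s - 1 + ρ.1 := by ring
    have e2 : (1 - (1 - ρ.1)) = ρ.1 := by ring
    rw [e, e2]
    have : 1 / (ρ.1 * (1 - ρ.1)) = 1 / ρ.1 + 1 / (1 - ρ.1) := by field_simp; ring
    rw [this]; ring
  · ring

end

/-! ### The digamma function -/

noncomputable section

open Complex Set Filter Topology MeasureTheory Metric

/-- The digamma function on the positive reals. -/
def dig (x : ℝ) : ℝ := (digamma x).re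

lemma ne_neg_nat_of_re_pos {z : ℂ} (hz : 0 < z.re) (m : ℕ) : z ≠ -m := fun h ↦ by
  rw [h] at hz
  simp at hz
  linarith [(Nat.cast_nonneg m : (0:ℝ) ≤ m)]

lemma digamma_add_nat {z : ℂ} (hz : 0 < z.re) (N : ℕ) :
    digamma (z + N) = digamma z + ∑ j ∈ Finset.range N, 1 / (z + j) := by
  induction N with
  | zero => simp
  | succ n ih =>
    rw [Finset.sum_range_succ, ← add_assoc, ← ih, Nat.cast_succ, ← add_assoc,
      digamma_apply_add_one, one_div]
    refine ne_neg_nat_of_re_pos ?_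
    simp only [add_re, natCast_re]
    positivity

lemma hasDerivAt_log_Gamma {x : ℝ} (hx : 0 < x) :
    HasDerivAt (Real.log ∘ Real.Gamma) (dig x) x := by
  have h0 : (0:ℝ) < (x:ℂ).re := by simpa
  have h1 : HasDerivAt Complex.Gamma (deriv Complex.Gamma x) (x : ℂ) :=
    (differentiableAt_Gamma _ (ne_neg_nat_of_re_pos h0)).hasDerivAt
  have h2 : HasDerivAt Real.Gamma (deriv Complex.Gamma x).re x := by
    have := h1.real_of_complex
    simpa [Complex.Gamma_ofReal] using this
  have h3 := h2.log (Real.Gamma_pos_of_pos hx).ne'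
  have e : dig x = (deriv Complex.Gamma x).re / Real.Gamma x := by
    rw [dig, digamma_def, logDeriv_apply, Complex.Gamma_ofReal, div_ofReal_re]
  rw [e]; exact h3

lemma log_Gamma_succ {x : ℝ} (hx : 0 < x) :
    (Real.log ∘ Real.Gamma) (x + 1) = (Real.log ∘ Real.Gamma) x + Real.log x := by
  simp only [Function.comp_apply]
  rw [Real.Gamma_add_one hx.ne', Real.log_mul hx.ne' (Real.Gamma_pos_of_pos hx).ne', add_comm]

lemma dig_le_log {x : ℝ} (hx : 0 < x) : dig x ≤ Real.log x := by
  have h := Real.convexOn_log_Gamma.le_slope_of_hasDerivAt (mem_Ioi.mpr hx)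
    (mem_Ioi.mpr (by linarith : 0 < x + 1)) (by linarith) (hasDerivAt_log_Gamma hx)
  rw [slope_def_field, log_Gamma_succ hx] at h
  simpa using h

lemma log_le_dig {x : ℝ} (hx : 0 < x) : Real.log x ≤ dig (x + 1) := by
  have h := Real.convexOn_log_Gamma.slope_le_of_hasDerivAt (mem_Ioi.mpr hx)
    (mem_Ioi.mpr (by linarith : 0 < x + 1)) (by linarith) (hasDerivAt_log_Gamma (by linarith))
  rw [slope_def_field, log_Gamma_succ hx] at h
  simpa using h

lemma dig_add_nat {x : ℝ} (hx : 0 < x) (N : ℕ) :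
    dig (x + N) = dig x + ∑ j ∈ Finset.range N, 1 / (x + j) := by
  have h := digamma_add_nat (z := x) (by simpa) N
  have h2 := congrArg Complex.re h
  simp only [add_re, re_sum] at h2
  rw [dig, dig]
  push_cast
  rw [h2]
  congr 1
  refine Finset.sum_congr rfl fun j _ ↦ ?_
  rw [← ofReal_natCast, ← ofReal_add, ← ofReal_one, ← ofReal_div, ofReal_re]

lemma tendsto_log_sub (a b : ℝ) :
    Tendsto (fun n : ℕ ↦ Real.log (a + n) - Real.log (b + n)) atTop (𝓝 0) := by
  have h1 : Tendsto (fun n : ℕ ↦ (a + n) / (b + n)) atTop (𝓝 1) := by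
    have hb : Tendsto (fun n : ℕ ↦ b + (n:ℝ)) atTop atTop :=
      tendsto_atTop_add_const_left _ _ tendsto_natCast_atTop_atTop
    have h := (hb.inv_tendsto_atTop.const_mul (a - b)).const_add 1
    rw [mul_zero, add_zero] at h
    refine h.congr' ?_
    filter_upwards [hb.eventually_gt_atTop 0] with n hn
    simp only [Pi.inv_apply]
    field_simp
    ring
  have h2 := h1.log one_ne_zero
  rw [Real.log_one] at h2
  have ha : Tendsto (fun n : ℕ ↦ a + (n:ℝ)) atTop atTop :=
      tendsto_atTop_add_const_left _ _ tendsto_natCast_atTop_atTop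
  have hb : Tendsto (fun n : ℕ ↦ b + (n:ℝ)) atTop atTop :=
      tendsto_atTop_add_const_left _ _ tendsto_natCast_atTop_atTop
  refine h2.congr' ?_
  filter_upwards [ha.eventually_gt_atTop 0, hb.eventually_gt_atTop 0] with n h1 h2
  rw [Real.log_div h1.ne' h2.ne']

lemma tendsto_dig_sub_log (x a : ℝ) (hx : 0 < x) :
    Tendsto (fun n : ℕ ↦ dig (x + n) - Real.log (a + n)) atTop (𝓝 0) := by
  refine tendsto_of_tendsto_of_tendsto_of_le_of_le' (tendsto_log_sub (x - 1) a)
    (tendsto_log_sub x a) ?_ ?_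
  · filter_upwards [eventually_ge_atTop 1] with n hn
    have : (1:ℝ) ≤ n := by exact_mod_cast hn
    have h := log_le_dig (x := x - 1 + n) (by linarith)
    rw [show x - 1 + n + 1 = x + n by ring] at h
    linarith
  · refine Eventually.of_forall fun n ↦ ?_
    have h := dig_le_log (x := x + n) (by positivity)
    linarith

/-- Terms of the digamma series. -/
def digT (z : ℂ) (j : ℕ) : ℂ := 1 / (j + 1) - 1 / (z + j)

lemma digT_bound {z : ℂ} {a R : ℝ} (ha : 0 < a) (ha1 : a ≤ 1) (hz : a < z.re) (hR : ‖z‖ < R)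
    (j : ℕ) : ‖digT z j‖ ≤ (R + 1) / a * (1 / ((j:ℝ) + 1) ^ 2) := by
  have hj : (0:ℝ) ≤ j := Nat.cast_nonneg j
  have h1 : a * (j + 1) ≤ ‖z + j‖ := by
    have := re_le_norm (z + j)
    simp only [add_re, natCast_re] at this
    nlinarith
  have hpos : 0 < a * (j + 1) := by positivity
  have h2 : z + j ≠ 0 := norm_pos_iff.mp (hpos.trans_le h1)
  have h3 : (j:ℂ) + 1 ≠ 0 := by exact_mod_cast Nat.succ_ne_zero j
  have e : digT z j = (z - 1) / ((j + 1) * (z + j)) := by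
    rw [digT]; field_simp; ring
  have h4 : ‖(j:ℂ) + 1‖ = j + 1 := by
    rw [← Nat.cast_succ, norm_natCast]; simp
  rw [e, norm_div, norm_mul, h4, div_mul_div_comm, mul_one]
  have h5 : ‖z - 1‖ ≤ R + 1 := (norm_sub_le _ _).trans (by simp; linarith)
  calc ‖z - 1‖ / ((j + 1) * ‖z + j‖) ≤ (R + 1) / ((j + 1) * (a * (j + 1))) := by
        gcongr
        exact (norm_nonneg _).trans h5
    _ = _ := by ring

lemma summable_sq_inv : Summable fun j : ℕ ↦ 1 / ((j:ℝ) + 1) ^ 2 := by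
  have := (summable_nat_add_iff 1).mpr (Real.summable_one_div_nat_pow.mpr one_lt_two)
  simpa using this

lemma summable_digT {z : ℂ} (hz : 0 < z.re) : Summable (digT z) := by
  refine Summable.of_norm_bounded (summable_sq_inv.mul_left _)
    (digT_bound (a := min 1 (z.re / 2)) (R := ‖z‖ + 1) (by positivity) (min_le_left _ _) ?_ (by linarith))
  exact (min_le_right _ _).trans_lt (by linarith)

lemma differentiableOn_digT : DifferentiableOn ℂ (fun z ↦ ∑' j, digT z j) {z | 0 < z.re} := by
  intro z hz
  have hz : 0 < z.re := hz
  let U : Set ℂ := {w | min 1 (z.re / 2) < w.re} ∩ {w | ‖w‖ < ‖z‖ + 1}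
  have hU : IsOpen U := (isOpen_lt continuous_const continuous_re).inter
    (isOpen_lt continuous_norm continuous_const)
  have hzU : z ∈ U := ⟨(min_le_right _ _).trans_lt (by linarith : z.re / 2 < z.re), by simp⟩
  have hm : 0 < min 1 (z.re / 2) := by positivity
  have := differentiableOn_tsum_of_summable_norm (F := fun j z ↦ digT z j) (U := U)
    (summable_sq_inv.mul_left ((‖z‖ + 1 + 1) / min 1 (z.re / 2))) ?_ hU ?_
  · exact ((this z hzU).differentiableAt (hU.mem_nhds hzU)).differentiableWithinAt
  · intro j w hw
    have h2 : w + j ≠ 0 := fun h ↦ by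
      have h3 := congrArg re h
      simp only [add_re, natCast_re, zero_re] at h3
      have : min 1 (z.re / 2) < w.re := hw.1
      linarith [(Nat.cast_nonneg j : (0:ℝ) ≤ j)]
    unfold digT
    refine DifferentiableAt.differentiableWithinAt ?_
    fun_prop (disch := assumption)
  · intro j w hw
    exact digT_bound hm (min_le_left _ _) hw.1 hw.2 j

lemma digT_real {x : ℝ} (hx : 0 < x) :
    ∑' j, digT x j = digamma x + Real.eulerMascheroniConstant := by
  have h1 := (summable_digT (z := (x:ℂ)) (by simpa)).hasSum.tendsto_sum_nat
  have hreal : digamma x = (dig x : ℂ) := by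
    have : digamma (x:ℂ) = logDeriv Complex.Gamma x := rfl
    rw [dig, this, logDeriv_apply, Complex.Gamma_ofReal]
    have h1 : HasDerivAt Complex.Gamma (deriv Complex.Gamma x) (x : ℂ) :=
      (differentiableAt_Gamma _ (ne_neg_nat_of_re_pos (by simpa))).hasDerivAt
    have h2 : HasDerivAt (fun y : ℝ ↦ (Real.Gamma y : ℂ)) (deriv Complex.Gamma x) x := by
      simpa [Complex.Gamma_ofReal] using h1.comp_ofReal
    have h3 : HasDerivAt (fun y : ℝ ↦ (Real.Gamma y : ℂ)) ((deriv Real.Gamma x : ℝ) : ℂ) x :=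
      (Real.differentiableAt_Gamma fun m ↦ by linarith [(Nat.cast_nonneg m : (0:ℝ) ≤ m)]).hasDerivAt.ofReal_comp
    rw [h2.unique h3, ← ofReal_div, ofReal_re]
  have h2 : Tendsto (fun n : ℕ ↦ ((dig x + Real.eulerMascheroniConstant + ((dig (1 + n) - Real.log (1 + n))
      - (dig (x + n) - Real.log (1 + n))) : ℝ) : ℂ)) atTop
      (𝓝 ((dig x + Real.eulerMascheroniConstant + (0 - 0) : ℝ) : ℂ)) := by
    refine (continuous_ofReal.tendsto _).comp ?_
    exact ((tendsto_dig_sub_log 1 1 one_pos).sub (tendsto_dig_sub_log x 1 hx)).const_add _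
  have h3 := tendsto_nhds_unique (h1.congr fun n ↦ ?_) h2
  · rw [h3, hreal]; push_cast; ring
  · rw [dig_add_nat hx, dig_add_nat one_pos]
    have : dig 1 = - Real.eulerMascheroniConstant := by
      rw [dig, ofReal_one, digamma_one]; simp
    rw [this]
    simp only [digT, Finset.sum_sub_distrib]
    push_cast
    have e : ∀ i ∈ Finset.range n, (1:ℂ) / (i + 1) = 1 / (1 + i) := fun i _ ↦ by rw [add_comm]
    rw [Finset.sum_congr rfl e]
    ring

lemma isOpen_re_pos : IsOpen {z : ℂ | 0 < z.re} := isOpen_lt continuous_const continuous_re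

lemma differentiableOn_digamma : DifferentiableOn ℂ digamma {z | 0 < z.re} := by
  have hd : DifferentiableOn ℂ Complex.Gamma {z | 0 < z.re} := fun z hz ↦
    (differentiableAt_Gamma _ (ne_neg_nat_of_re_pos hz)).differentiableWithinAt
  have : DifferentiableOn ℂ (fun z ↦ deriv Complex.Gamma z / Complex.Gamma z) {z | 0 < z.re} :=
    (hd.deriv isOpen_re_pos).fun_div hd fun z hz ↦ Gamma_ne_zero_of_re_pos hz
  exact this

/-- The series `digamma z + γ = ∑ (1/(j+1) - 1/(z+j))` on the right half plane. -/
lemma hasSum_digT {z : ℂ} (hz : 0 < z.re) :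
    HasSum (digT z) (digamma z + Real.eulerMascheroniConstant) := by
  have h1 : AnalyticOnNhd ℂ (fun z ↦ ∑' j, digT z j) {z | 0 < z.re} :=
    differentiableOn_digT.analyticOnNhd isOpen_re_pos
  have h2 : AnalyticOnNhd ℂ (fun z ↦ digamma z + Real.eulerMascheroniConstant) {z | 0 < z.re} :=
    (differentiableOn_digamma.add_const _).analyticOnNhd isOpen_re_pos
  have h3 : IsPreconnected {z : ℂ | 0 < z.re} := (convex_halfSpace_re_gt 0).isPreconnected
  have h4 := h1.eqOn_of_preconnected_of_frequently_eq h2 h3 (z₀ := 1) (by simp) ?_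
  · have := h4 hz
    simp only at this
    rw [← this]
    exact (summable_digT hz).hasSum
  · have ht : Tendsto (fun n : ℕ ↦ ((1 + 1 / ((n:ℝ) + 1) : ℝ) : ℂ)) atTop (𝓝[≠] 1) := by
      refine tendsto_nhdsWithin_iff.mpr ⟨?_, Eventually.of_forall fun n ↦ ?_⟩
      · have := (tendsto_one_div_add_atTop_nhds_zero_nat (𝕜 := ℝ)).const_add 1
        rw [add_zero] at this
        exact (continuous_ofReal.tendsto _).comp this
      · have : (0:ℝ) < 1 / ((n:ℝ) + 1) := by positivity
        simp only [mem_compl_iff, mem_singleton_iff]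
        intro h
        have h' : 1 + 1 / ((n:ℝ) + 1) = 1 := by exact_mod_cast h
        linarith
    refine ht.frequently (Frequently.of_forall fun n ↦ ?_)
    exact digT_real (by positivity)

end

/-! ### An explicit Stirling bound -/

noncomputable section

open Complex Set Filter Topology MeasureTheory Metric

lemma log_ratio_le {t : ℝ} (h0 : 0 ≤ t) (h1 : t < 1) :
    Real.log (1 + t) - Real.log (1 - t) ≤ 2 * t + 2 / 3 * t ^ 3 / (1 - t ^ 2) := by
  have hs := Real.hasSum_log_sub_log_of_abs_lt_one (x := t) (by rw [abs_lt]; constructor <;> linarith)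
  have ht2 : t ^ 2 < 1 := by nlinarith
  have hg := ((hasSum_geometric_of_lt_one (sq_nonneg t) ht2).mul_left (2 / 3 * t)).add
    (hasSum_ite_eq (0:ℕ) (4 / 3 * t))
  have := hasSum_le (fun k ↦ ?_) hs hg
  · refine this.trans (le_of_eq ?_)
    have : 1 - t ^ 2 ≠ 0 := by linarith
    field_simp
    ring
  · rcases Nat.eq_zero_or_pos k with rfl | hk
    · simp; linarith
    · rw [if_neg hk.ne', add_zero]
      have hk' : (1:ℝ) ≤ k := by exact_mod_cast hk
      have : (2:ℝ) * (1 / (2 * k + 1)) ≤ 2 / 3 := by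
        rw [mul_one_div, div_le_div_iff₀ (by positivity) (by norm_num)]; linarith
      calc (2:ℝ) * (1 / (2 * k + 1)) * t ^ (2 * k + 1) ≤ 2 / 3 * t ^ (2 * k + 1) := by gcongr
        _ = _ := by rw [pow_succ, pow_mul]; ring

/-- Comparison of one term of the digamma series with an integral over `[w - 1/2, w + 1/2]`; the
midpoint error telescopes. -/
lemma dig_term {w y : ℝ} (hw : 1 ≤ w) :
    -(w / (w ^ 2 + y ^ 2)) ≤ 1 / 2 * Real.log ((w - 1 / 2) ^ 2 + y ^ 2)
      - 1 / 2 * Real.log ((w + 1 / 2) ^ 2 + y ^ 2)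
      + 1 / 12 * (1 / (w - 1 / 2) ^ 2 - 1 / (w + 1 / 2) ^ 2) := by
  set S := w ^ 2 + y ^ 2 with hS
  have hSw : w ^ 2 ≤ S := by nlinarith [sq_nonneg y]
  have hS1 : 1 ≤ S := by nlinarith
  set Q := S + 1 / 4 with hQ
  have hQ0 : 0 < Q := by linarith
  have hwQ : w < Q := by nlinarith [sq_nonneg (w - 1 / 2)]
  set t := w / Q with ht
  have ht0 : 0 ≤ t := by positivity
  have ht1 : t < 1 := (div_lt_one hQ0).mpr hwQ
  have e1 : (w - 1 / 2) ^ 2 + y ^ 2 = Q * (1 - t) := by rw [ht]; field_simp; rw [hQ, hS]; ring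
  have e2 : (w + 1 / 2) ^ 2 + y ^ 2 = Q * (1 + t) := by rw [ht]; field_simp; rw [hQ, hS]; ring
  rw [e1, e2, Real.log_mul hQ0.ne' (by linarith), Real.log_mul hQ0.ne' (by linarith)]
  have h := log_ratio_le ht0 ht1
  have key : t + 1 / 3 * t ^ 3 / (1 - t ^ 2) - w / S ≤
      1 / 12 * (1 / (w - 1 / 2) ^ 2 - 1 / (w + 1 / 2) ^ 2) := by
    have hA : 0 < (w ^ 2 - 1 / 4) := by nlinarith
    have hB : (w ^ 2 - 1 / 4) ^ 2 ≤ Q ^ 2 - w ^ 2 := by rw [hQ]; nlinarith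
    have hB0 : 0 < Q ^ 2 - w ^ 2 := by nlinarith
    have f1 : 1 / 12 * (1 / (w - 1 / 2) ^ 2 - 1 / (w + 1 / 2) ^ 2) =
        w / 12 * (2 / (w ^ 2 - 1 / 4) ^ 2) := by
      obtain ⟨p, hp⟩ : ∃ p, p = w - 1 / 2 := ⟨_, rfl⟩
      have h3 : p ≠ 0 := by linarith
      have h4 : p + 1 ≠ 0 := by linarith
      rw [show w = p + 1 / 2 by linarith, show (p + 1 / 2) ^ 2 - 1 / 4 = p * (p + 1) by ring,
        show p + 1 / 2 - 1 / 2 = p by ring, show p + 1 / 2 + 1 / 2 = p + 1 by ring]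
      field_simp; ring
    have f2 : t + 1 / 3 * t ^ 3 / (1 - t ^ 2) - w / S =
        w / 12 * ((4 * S * w ^ 2 - 3 * (Q ^ 2 - w ^ 2)) / (S * Q * (Q ^ 2 - w ^ 2))) := by
      have e3 : 1 - t ^ 2 = (Q ^ 2 - w ^ 2) / Q ^ 2 := by rw [ht]; field_simp
      rw [e3, ht]
      have : S ≠ 0 := by linarith
      have : Q ≠ 0 := hQ0.ne'
      have : Q ^ 2 - w ^ 2 ≠ 0 := hB0.ne'
      field_simp
      rw [hQ]
      ring
    rw [f1, f2]
    refine mul_le_mul_of_nonneg_left ?_ (by linarith)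
    refine le_trans (b := 2 / (Q ^ 2 - w ^ 2)) ?_ (by gcongr)
    rw [div_le_div_iff₀ (by positivity) hB0]
    have : 4 * S * w ^ 2 - 3 * (Q ^ 2 - w ^ 2) ≤ 2 * (S * Q) := by rw [hQ]; nlinarith
    nlinarith
  have e5 : (2 / 3 * t ^ 3 / (1 - t ^ 2)) = 2 * (1 / 3 * t ^ 3 / (1 - t ^ 2)) := by ring
  rw [e5] at h
  linarith

lemma sum_tele {x y : ℝ} (hx : 1 ≤ x) (N : ℕ) :
    ∑ j ∈ Finset.range N, -((x + j) / ((x + j) ^ 2 + y ^ 2)) ≤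
      1 / 2 * Real.log ((x - 1 / 2) ^ 2 + y ^ 2) + 1 / 12 * (1 / (x - 1 / 2) ^ 2)
      - 1 / 2 * Real.log ((x + N - 1 / 2) ^ 2 + y ^ 2) - 1 / 12 * (1 / (x + N - 1 / 2) ^ 2) := by
  induction N with
  | zero => simp
  | succ n ih =>
    rw [Finset.sum_range_succ]
    have h := dig_term (w := x + n) (y := y) (by linarith [(Nat.cast_nonneg n : (0:ℝ) ≤ n)])
    push_cast
    rw [show x + (n + 1) - 1 / 2 = x + n + 1 / 2 by ring]
    linarith

/-- An explicit form of Stirling's bound for the digamma function. -/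
lemma re_digamma_le {x : ℝ} (y : ℝ) (hx : 3 / 2 ≤ x) :
    (digamma (x + y * I)).re ≤ 1 / 2 * Real.log ((x - 1 / 2) ^ 2 + y ^ 2)
      + 1 / 12 * (1 / (x - 1 / 2) ^ 2) := by
  have hz : 0 < ((x:ℂ) + y * I).re := by simp; linarith
  have h1 := (hasSum_re (hasSum_digT hz)).tendsto_sum_nat
  have h2 := le_of_tendsto h1 (b := 1 / 2 * Real.log ((x - 1 / 2) ^ 2 + y ^ 2)
      + 1 / 12 * (1 / (x - 1 / 2) ^ 2) + Real.eulerMascheroniConstant) ?_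
  · simp only [add_re, ofReal_re] at h2 ⊢
    linarith
  · refine Eventually.of_forall fun N ↦ ?_
    have hre : ∀ j : ℕ, (digT (x + y * I) j).re = 1 / (1 + (j:ℝ)) - (x + j) / ((x + j) ^ 2 + y ^ 2) := by
      intro j
      have : (1:ℂ) / (j + 1) = ((1 / (1 + (j:ℝ)) : ℝ) : ℂ) := by push_cast; rw [add_comm]
      rw [digT, sub_re, this, ofReal_re, one_div (_ + _ : ℂ), inv_re, normSq_apply]
      simp
      ring
    simp only [hre, Finset.sum_sub_distrib]
    have h3 := dig_add_nat one_pos N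
    have h5 : dig 1 = - Real.eulerMascheroniConstant := by
      rw [dig, ofReal_one, digamma_one]; simp
    have h4 := dig_le_log (x := 1 + N) (by positivity)
    have h6 := sum_tele (x := x) (y := y) (by linarith) N
    rw [Finset.sum_neg_distrib] at h6
    have hN : (0:ℝ) ≤ N := Nat.cast_nonneg N
    have h7 : Real.log (1 + N) ≤ 1 / 2 * Real.log ((x + N - 1 / 2) ^ 2 + y ^ 2) := by
      have : 2 * Real.log (1 + N) ≤ Real.log ((x + N - 1 / 2) ^ 2 + y ^ 2) := by
        rw [← Real.log_rpow (by positivity)]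
        apply Real.log_le_log (by positivity)
        norm_num
        nlinarith [sq_nonneg y]
      linarith
    have h8 : 0 ≤ 1 / 12 * (1 / (x + N - 1 / 2) ^ 2) := by positivity
    linarith

end

/-! ### Logarithmic derivative of zeta -/

noncomputable section

open Complex Set Filter Topology MeasureTheory Metric
open scoped ArithmeticFunction

/-- The Dirichlet series `∑ Λ(n) n^{-s}`. -/
def VM (s : ℂ) : ℂ := LSeries (fun n ↦ ((Λ n : ℝ) : ℂ)) s

lemma VM_eq {s : ℂ} (hs : 1 < s.re) : VM s = -deriv riemannZeta s / riemannZeta s :=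
  ArithmeticFunction.LSeries_vonMangoldt_eq_deriv_riemannZeta_div hs

/-- The logarithmic derivative of `xi s = (s - 1) π^{-s/2} Γ(s/2 + 1) ζ(s) · 2`, rewritten for
`-ζ'/ζ`. -/
lemma VM_eq_xi {s : ℂ} (hs : 1 < s.re) :
    VM s = 1 / (s - 1) - 1 / 2 * Real.log Real.pi + 1 / 2 * digamma (s / 2 + 1)
      - logDeriv xi s := by
  have hs1 : s ≠ 1 := fun h ↦ by rw [h] at hs; norm_num at hs
  have hs1' : s - 1 ≠ 0 := sub_ne_zero.mpr hs1
  have hz : riemannZeta s ≠ 0 := riemannZeta_ne_zero_of_one_le_re hs.le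
  have hre : 0 < (s / 2 + 1).re := by simp; linarith
  have hG : Complex.Gamma (s / 2 + 1) ≠ 0 := Gamma_ne_zero_of_re_pos hre
  have hπ : (Real.pi : ℂ) ≠ 0 := by exact_mod_cast Real.pi_ne_zero
  have d1 : HasDerivAt (fun s : ℂ ↦ s - 1) 1 s := (hasDerivAt_id s).sub_const 1
  have d2 : HasDerivAt (fun s : ℂ ↦ (Real.pi : ℂ) ^ (-s / 2))
      ((Real.pi : ℂ) ^ (-s / 2) * Complex.log Real.pi * (-1 / 2)) s :=
    ((hasDerivAt_id s).neg.div_const 2).const_cpow (Or.inl hπ)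
  have d3 : HasDerivAt (fun s : ℂ ↦ Complex.Gamma (s / 2 + 1))
      (deriv Complex.Gamma (s / 2 + 1) * (1 / 2)) s := by
    have h1 := (differentiableAt_Gamma _ (ne_neg_nat_of_re_pos hre)).hasDerivAt
    exact h1.comp s (((hasDerivAt_id s).div_const 2).add_const 1)
  have d4 := (differentiableAt_riemannZeta hs1).hasDerivAt
  have d := (((d1.const_mul 2).mul d2).mul d3).mul d4
  have hev : xi =ᶠ[𝓝 s] fun s ↦ 2 * (s - 1) * (Real.pi : ℂ) ^ (-s / 2) * Complex.Gamma (s / 2 + 1)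
      * riemannZeta s := by
    have : IsOpen {s : ℂ | 1 < s.re} := isOpen_lt continuous_const continuous_re
    filter_upwards [this.mem_nhds hs] with w hw
    have hw : 1 < w.re := hw
    exact xi_eq_zeta (by linarith) (fun h ↦ by rw [h] at hw; norm_num at hw)
  have d' := (HasDerivAt.congr_of_eventuallyEq d hev).deriv
  rw [VM_eq hs, logDeriv_apply, d', hev.self_of_nhds, digamma_def, logDeriv_apply,
    ofReal_log Real.pi_pos.le]
  have : (Real.pi : ℂ) ^ (-s / 2) ≠ 0 := by simp [cpow_eq_zero_iff, hπ]
  simp only [Pi.mul_apply]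
  generalize Complex.Gamma (s / 2 + 1) = G at *
  generalize deriv Complex.Gamma (s / 2 + 1) = G' at *
  generalize (Real.pi : ℂ) ^ (-s / 2) = p at *
  field_simp
  ring

lemma hasSum_VM_re {σ t : ℝ} (hσ : 1 < σ) :
    HasSum (fun n : ℕ ↦ Λ n * (n:ℝ) ^ (-σ) * Real.cos (t * Real.log n)) (VM (σ + t * I)).re := by
  have hs : 1 < ((σ:ℂ) + t * I).re := by simpa
  have h := hasSum_re (ArithmeticFunction.LSeriesSummable_vonMangoldt hs).LSeriesHasSum
  refine hasSum_of_eq h (fun n ↦ ?_) rfl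
  rcases Nat.eq_zero_or_pos n with rfl | hn
  · simp
  · have hn' : (0:ℝ) < n := by exact_mod_cast hn
    have hc : (n:ℂ) ≠ 0 := by exact_mod_cast hn.ne'
    rw [LSeries.term_of_ne_zero hn.ne', div_eq_mul_inv, ← cpow_neg, re_ofReal_mul, mul_assoc]
    congr 1
    rw [neg_add, cpow_add _ _ hc, ← ofReal_neg, ← ofReal_natCast n, ← ofReal_cpow hn'.le,
      re_ofReal_mul, cpow_def_of_ne_zero (by exact_mod_cast hn'.ne'), ← ofReal_log hn'.le]
    congr 1
    rw [show (Real.log n : ℂ) * -(t * I) = ((-(t * Real.log n) : ℝ) : ℂ) * I by push_cast; ring,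
      exp_ofReal_mul_I_re, Real.cos_neg]

/-- From `3 + 4 cos θ + cos 2θ = 2 (1 + cos θ)² ≥ 0`. -/
lemma three_four_one {σ : ℝ} (t : ℝ) (hσ : 1 < σ) :
    0 ≤ 3 * (VM σ).re + 4 * (VM (σ + t * I)).re + (VM (σ + (2 * t : ℝ) * I)).re := by
  have h0 := hasSum_VM_re (t := 0) hσ
  have h := ((h0.mul_left 3).add ((hasSum_VM_re (t := t) hσ).mul_left 4)).add
    (hasSum_VM_re (t := 2 * t) hσ)
  simp only [ofReal_zero, zero_mul, add_zero, Real.cos_zero] at h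
  refine h.nonneg fun n ↦ ?_
  have e : Real.cos (2 * t * Real.log n) = 2 * Real.cos (t * Real.log n) ^ 2 - 1 := by
    rw [← Real.cos_two_mul]; ring_nf
  rw [e]
  have : 0 ≤ Λ n * (n:ℝ) ^ (-σ) := mul_nonneg ArithmeticFunction.vonMangoldt_nonneg (by positivity)
  nlinarith [mul_nonneg this (sq_nonneg (Real.cos (t * Real.log n) + 1))]

lemma VM_re_nonneg {σ : ℝ} (hσ : 1 < σ) : 0 ≤ (VM σ).re := by
  have h0 := hasSum_VM_re (t := 0) hσ
  simp only [ofReal_zero, zero_mul, add_zero, Real.cos_zero, mul_one] at h0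
  exact h0.nonneg fun n ↦ mul_nonneg ArithmeticFunction.vonMangoldt_nonneg (by positivity)

end

/-! ### Zero-free region -/

noncomputable section

open Complex Set Filter Topology MeasureTheory Metric
open scoped ArithmeticFunction

lemma re_one_div_nonneg {z : ℂ} (h : 0 ≤ z.re) : 0 ≤ (1 / z).re := by
  rw [one_div, inv_re]; exact div_nonneg h (normSq_nonneg _)

lemma re_pair_nonneg {s : ℂ} (hs : 1 < s.re) (ρ : NZ) :
    0 ≤ (1 / (s - ρ.1) + 1 / (s - 1 + ρ.1)).re := by
  rw [add_re]
  refine add_nonneg (re_one_div_nonneg ?_) (re_one_div_nonneg ?_)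
  · rw [sub_re]; linarith [ρ.re_lt]
  · rw [add_re, sub_re, one_re]; linarith [ρ.re_pos]

lemma hasSum_pair_re {s : ℂ} (hs : 1 < s.re) :
    HasSum (fun ρ : NZ ↦ (mult ρ : ℝ) * (1 / (s - ρ.1) + 1 / (s - 1 + ρ.1)).re)
      (2 * (logDeriv xi s).re) := by
  refine hasSum_of_eq (hasSum_re (hasSum_pair hs)) (fun ρ ↦ ?_) ?_
  · rw [← ofReal_natCast, re_ofReal_mul]
  · rw [show (2:ℂ) = ((2:ℝ):ℂ) by norm_num, re_ofReal_mul]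

lemma re_P_nonneg {s : ℂ} (hs : 1 < s.re) : 0 ≤ (logDeriv xi s).re := by
  have := (hasSum_pair_re hs).nonneg fun ρ ↦
    mul_nonneg (Nat.cast_nonneg _) (re_pair_nonneg hs ρ)
  linarith

/-- In `Re (xi'/xi)` at height `Im ρ` all pairs of zeros contribute nonnegatively, and all but
the term of `ρ` itself may be dropped. -/
lemma re_P_ge (ρ : NZ) {σ : ℝ} (hσ : 1 < σ) :
    1 / (σ - ρ.1.re) ≤ (logDeriv xi (σ + ρ.1.im * I)).re := by
  set s : ℂ := σ + ρ.1.im * I with hs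
  have hs1 : 1 < s.re := by simpa [hs]
  have hne : ρ ≠ reflZ ρ := by
    intro h
    have h1 := congrArg (fun ρ : NZ ↦ ρ.1.im) h
    simp only [reflZ_coe, sub_im, one_im] at h1
    have h2 : ρ.1.im = 0 := by linarith
    have := im_sq_pos ρ
    rw [h2] at this; norm_num at this
  have h := (hasSum_pair_re hs1)
  have h2 := sum_le_hasSum {ρ, reflZ ρ} (fun ρ _ ↦
    mul_nonneg (Nat.cast_nonneg _) (re_pair_nonneg hs1 ρ)) h
  rw [Finset.sum_pair hne, mult_refl] at h2
  have e1 : s - 1 + (reflZ ρ).1 = s - ρ.1 := by rw [reflZ_coe]; ring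
  have e2 : s - (reflZ ρ).1 = s - 1 + ρ.1 := by rw [reflZ_coe]; ring
  rw [e1, e2] at h2
  have e3 : (1 / (s - ρ.1)).re = 1 / (σ - ρ.1.re) := by
    have : s - ρ.1 = ((σ - ρ.1.re : ℝ) : ℂ) := by
      apply Complex.ext <;> simp [hs]
    rw [this, ← ofReal_one, ← ofReal_div, ofReal_re]
  have h4 : 0 ≤ (1 / (s - 1 + ρ.1)).re := by
    refine re_one_div_nonneg ?_
    rw [add_re, sub_re, one_re]; linarith [ρ.re_pos]
  rw [add_re, add_re, e3] at h2
  have h5 : 0 < 1 / (σ - ρ.1.re) := by have := ρ.re_lt; apply one_div_pos.mpr; linarith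
  have hm := one_le_mult ρ
  nlinarith

lemma VM_re_le {δ : ℝ} (hδ : 0 < δ) (t : ℝ) :
    (VM ((1 + δ : ℝ) + t * I)).re ≤ δ / (δ ^ 2 + t ^ 2) - 1 / 2 * Real.log Real.pi
      + 1 / 2 * (1 / 2 * Real.log ((1 + δ / 2) ^ 2 + (t / 2) ^ 2) + 1 / 12)
      - (logDeriv xi ((1 + δ : ℝ) + t * I)).re := by
  have hs : 1 < (((1 + δ : ℝ) : ℂ) + t * I).re := by simpa
  rw [VM_eq_xi hs, sub_re, add_re, sub_re]
  have e1 : (1 / (((1 + δ : ℝ) : ℂ) + t * I - 1)).re = δ / (δ ^ 2 + t ^ 2) := by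
    rw [one_div, inv_re, normSq_apply]; simp; ring
  have e2 : (1 / 2 * (Real.log Real.pi : ℂ)).re = 1 / 2 * Real.log Real.pi := by
    rw [show (1 / 2 * (Real.log Real.pi : ℂ)) = ((1 / 2 * Real.log Real.pi : ℝ) : ℂ) by push_cast; ring,
      ofReal_re]
  have e3 : (((1 + δ : ℝ) : ℂ) + t * I) / 2 + 1 = ((3 / 2 + δ / 2 : ℝ) : ℂ) + ((t / 2 : ℝ) : ℂ) * I := by
    push_cast; ring
  have h := re_digamma_le (x := 3 / 2 + δ / 2) (t / 2) (by linarith)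
  rw [show 3 / 2 + δ / 2 - 1 / 2 = 1 + δ / 2 by ring] at h
  have h2 : 1 / (1 + δ / 2) ^ 2 ≤ 1 := by
    rw [div_le_one (by positivity)]; nlinarith
  rw [e1, e2, e3, show (1 / 2 : ℂ) = ((1 / 2 : ℝ) : ℂ) by push_cast; ring, re_ofReal_mul]
  linarith

/-- The `3-4-1` inequality on the line `Re s = 1 + δ`, keeping only the zero `ρ` in the middle
term. -/
lemma zf_ineq (ρ : NZ) {δ : ℝ} (hδ : 0 < δ) (hδ2 : δ ≤ 1 / 2) :
    4 / (δ + (1 - ρ.1.re)) ≤ 3 / δ + 2.5 * (Real.log |ρ.1.im| - 2) := by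
  set t := ρ.1.im with ht
  have h341 := three_four_one t (σ := 1 + δ) (by linarith)
  have v0 := VM_re_le hδ 0
  have v1 := VM_re_le hδ t
  have v2 := VM_re_le hδ (2 * t)
  have p0 := re_P_nonneg (s := ((1 + δ : ℝ) : ℂ)) (by simpa)
  have p1 := re_P_ge ρ (σ := 1 + δ) (by linarith)
  have p2 := re_P_nonneg (s := ((1 + δ : ℝ) : ℂ) + ((2 * t : ℝ) : ℂ) * I) (by simpa)
  rw [← ht] at p1
  rw [show 4 / (δ + (1 - ρ.1.re)) = 4 * (1 / (1 + δ - ρ.1.re)) by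
    rw [show δ + (1 - ρ.1.re) = 1 + δ - ρ.1.re by ring]; ring]
  simp only [ofReal_zero, zero_mul, add_zero] at v0
  have ht2 : 42.25 ≤ t ^ 2 := im_sq_ge ρ
  have ht0 : 0 < |t| := abs_pos.mpr fun h ↦ by rw [h] at ht2; norm_num at ht2
  have htt : (0:ℝ) < t ^ 2 := by linarith
  have l0 : Real.log ((1 + δ / 2) ^ 2 + (0 / 2) ^ 2) ≤ 2 * 0.25 := by
    rw [zero_div, zero_pow two_ne_zero, add_zero, Real.log_pow]
    have := Real.log_le_sub_one_of_pos (by linarith : 0 < 1 + δ / 2)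
    push_cast
    linarith
  have hX : (1 + δ / 2) ^ 2 ≤ 1.5625 := by nlinarith
  have hlog : Real.log (t ^ 2) = 2 * Real.log |t| := by rw [← sq_abs, Real.log_pow]; norm_num
  have l2 : Real.log ((1 + δ / 2) ^ 2 + (2 * t / 2) ^ 2) ≤ 2 * Real.log |t| + 0.037 := by
    have : (1 + δ / 2) ^ 2 + (2 * t / 2) ^ 2 ≤ t ^ 2 * 1.037 := by nlinarith
    refine (Real.log_le_log (by positivity) this).trans ?_
    rw [Real.log_mul htt.ne' (by norm_num), hlog]
    have := Real.log_le_sub_one_of_pos (by norm_num : (0:ℝ) < 1.037)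
    linarith
  have l4 : Real.log (1 / 4) ≤ -1.386 := by
    rw [one_div, Real.log_inv, show (4:ℝ) = 2 ^ 2 by norm_num, Real.log_pow]
    have := Real.log_two_gt_d9
    push_cast; linarith
  have l1 : Real.log ((1 + δ / 2) ^ 2 + (t / 2) ^ 2) ≤ 2 * Real.log |t| + 0.148 - 1.386 := by
    have : (1 + δ / 2) ^ 2 + (t / 2) ^ 2 ≤ t ^ 2 * (1 / 4) * 1.148 := by nlinarith
    refine (Real.log_le_log (by positivity) this).trans ?_
    rw [Real.log_mul (by positivity) (by norm_num), Real.log_mul htt.ne' (by norm_num), hlog]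
    have := Real.log_le_sub_one_of_pos (by norm_num : (0:ℝ) < 1.148)
    linarith
  have q0 : δ / (δ ^ 2 + 0 ^ 2) = 1 / δ := by field_simp; ring
  have q1 : δ / (δ ^ 2 + t ^ 2) ≤ 0.012 := by
    rw [div_le_iff₀ (by positivity)]; nlinarith
  have q2 : δ / (δ ^ 2 + (2 * t) ^ 2) ≤ 0.003 := by
    rw [div_le_iff₀ (by positivity)]; nlinarith
  have := log_pi_gt
  rw [q0] at v0
  rw [show 3 / δ = 3 * (1 / δ) by ring]
  linarith

/-- The distance `min β (1 - β)` of a zero with real part `β` to the boundary of the critical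
strip. -/
def dd (ρ : NZ) : ℝ := min ρ.1.re (1 - ρ.1.re)

lemma dd_pos (ρ : NZ) : 0 < dd ρ := lt_min ρ.re_pos (by linarith [ρ.re_lt])

/-- `zf_ineq` for whichever of `ρ` and `1 - ρ` is closer to the line `Re s = 1`. -/
lemma zf_ineq' (ρ : NZ) {δ : ℝ} (hδ : 0 < δ) (hδ2 : δ ≤ 1 / 2) :
    4 / (δ + dd ρ) ≤ 3 / δ + 2.5 * (Real.log |ρ.1.im| - 2) := by
  rcases min_choice ρ.1.re (1 - ρ.1.re) with h | h
  · have := zf_ineq (reflZ ρ) hδ hδ2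
    rw [dd, h]
    simpa [reflZ_coe] using this
  · rw [dd, h]; exact zf_ineq ρ hδ hδ2

lemma log_im_ge (ρ : NZ) : 1.848 ≤ Real.log |ρ.1.im| := by
  have h := im_sq_ge ρ
  have h1 : 6.5 ≤ |ρ.1.im| := by
    rw [← sq_abs] at h
    nlinarith [abs_nonneg ρ.1.im]
  refine le_trans ?_ (Real.log_le_log (by norm_num) h1)
  have h2 := Real.one_sub_inv_le_log_of_pos (by norm_num : (0:ℝ) < 0.8125)
  have h3 := Real.log_two_gt_d9
  rw [show (6.5:ℝ) = 2 ^ 3 * 0.8125 by norm_num, Real.log_mul (by norm_num) (by norm_num),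
    Real.log_pow]
  norm_num at *
  linarith

/-- An explicit classical zero-free region. With `K = 2.5 (log |Im ρ| - 2)` the choice
`δ = 0.464 / K` (as `0.464 ≈ 2√3 - 3`) is optimal in `zf_ineq'`; for small `K` the choice
`δ = 1/2` suffices. -/
lemma inv_dd_le (ρ : NZ) : 1 / dd ρ ≤ 35 * (Real.log |ρ.1.im| - 1.7) := by
  have hL := log_im_ge ρ
  have hd := dd_pos ρ
  set L := Real.log |ρ.1.im|
  set d := dd ρ
  obtain ⟨K, hK⟩ : ∃ K, K = 2.5 * (L - 2) := ⟨_, rfl⟩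
  have hLK : L = K / 2.5 + 2 := by rw [hK]; ring
  rcases le_total 0.928 K with h | h
  · have h0 : 0 < K := by linarith
    have z := zf_ineq' ρ (δ := 0.464 / K) (by positivity) (by
      rw [div_le_iff₀ h0]; linarith)
    rw [← hK, div_le_iff₀ (by positivity)] at z
    have z2 : 4 * 0.464 ≤ 3.464 * (0.464 + d * K) := by
      have e : (3 / (0.464 / K) + K) * (0.464 / K + d) = 3.464 / 0.464 * (0.464 + d * K) := by
        field_simp; ring
      rw [e] at z
      linarith
    rw [div_le_iff₀ hd, hLK]
    nlinarith
  · have z := zf_ineq' ρ (δ := 1 / 2) (by norm_num) le_rfl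
    rw [← hK, div_le_iff₀ (by positivity)] at z
    rw [div_le_iff₀ hd, hLK]
    have hK0 : -0.38 ≤ K := by rw [hK]; linarith
    have : 2 - K ≤ (2 * (6 + K)) * d := by norm_num at z ⊢; linarith
    have h2 : 2 * (6 + K) ≤ (14 * K + 10.5) * (2 - K) := by nlinarith
    nlinarith

end

/-! ### The sum of `log |γ| / γ²` over the zeros -/

noncomputable section

open Complex Set Filter Topology MeasureTheory Metric
open scoped ArithmeticFunction

lemma pair_re_ge {σ : ℝ} (hσ : 1 < σ) (ρ : NZ) :
    (2 * σ - 1) * (1 / (σ ^ 2 + ρ.1.im ^ 2)) ≤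
      (1 / ((σ:ℂ) - ρ.1) + 1 / ((σ:ℂ) - 1 + ρ.1)).re := by
  have h0 := ρ.re_pos
  have h1 := ρ.re_lt
  have hg := im_sq_pos ρ
  rw [add_re, one_div, one_div, one_div, inv_re, inv_re, normSq_apply, normSq_apply]
  simp only [sub_re, ofReal_re, sub_im, ofReal_im, add_re, add_im, one_re, one_im]
  set b := ρ.1.re
  set g := ρ.1.im
  have e1 : (σ - b) * (1 / (σ ^ 2 + g ^ 2)) ≤ (σ - b) / ((σ - b) * (σ - b) + (0 - g) * (0 - g)) := by
    rw [div_eq_mul_one_div (σ - b)]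
    refine mul_le_mul_of_nonneg_left (one_div_le_one_div_of_le ?_ ?_) (by linarith) <;> nlinarith
  have e2 : (σ - 1 + b) * (1 / (σ ^ 2 + g ^ 2)) ≤
      (σ - 1 + b) / ((σ - 1 + b) * (σ - 1 + b) + (0 - 0 + g) * (0 - 0 + g)) := by
    rw [div_eq_mul_one_div (σ - 1 + b)]
    refine mul_le_mul_of_nonneg_left (one_div_le_one_div_of_le ?_ ?_) (by linarith) <;> nlinarith
  calc _ = (σ - b) * (1 / (σ ^ 2 + g ^ 2)) + (σ - 1 + b) * (1 / (σ ^ 2 + g ^ 2)) := by ring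
    _ ≤ _ := add_le_add e1 e2

lemma re_P_le {σ : ℝ} (hσ : 1 < σ) : (logDeriv xi σ).re ≤
    1 / (σ - 1) - 1 / 2 * Real.log Real.pi + 1 / 2 * Real.log (σ / 2 + 1) := by
  have h := congrArg re (VM_eq_xi (s := σ) (by simpa))
  have h0 := VM_re_nonneg hσ
  have hd := dig_le_log (x := σ / 2 + 1) (by linarith)
  rw [dig] at hd
  push_cast at hd
  rw [sub_re, add_re, sub_re] at h
  have e1 : (1 / ((σ:ℂ) - 1)).re = 1 / (σ - 1) := by
    rw [← ofReal_one, ← ofReal_sub, ← ofReal_div, ofReal_re]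
  have e2 : (1 / 2 * (Real.log Real.pi : ℂ)).re = 1 / 2 * Real.log Real.pi := by
    rw [show (1 / 2 * (Real.log Real.pi : ℂ)) = ((1 / 2 * Real.log Real.pi : ℝ) : ℂ) by push_cast; ring,
      ofReal_re]
  rw [e1, e2, show (1 / 2 : ℂ) = ((1 / 2 : ℝ) : ℂ) by push_cast; ring, re_ofReal_mul] at h
  linarith

/-- For large `σ` the size of `xi'/xi` at `σ` is governed by Stirling's formula. -/
lemma sum_inv_le (S : Finset NZ) {σ : ℝ} (hσ : 30 ≤ σ) :
    ∑ ρ ∈ S, (mult ρ : ℝ) * (1 / (σ ^ 2 + ρ.1.im ^ 2)) ≤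
      60 / 118 * ((Real.log σ - 1.837872) / σ + 4.07 / σ ^ 2) := by
  have h1 : (1:ℝ) < σ := by linarith
  have h := sum_le_hasSum S (fun ρ _ ↦
    mul_nonneg (Nat.cast_nonneg _) (re_pair_nonneg (s := (σ:ℂ)) (by simpa) ρ)) (hasSum_pair_re (s := (σ:ℂ)) (by simpa))
  have h2 : (2 * σ - 1) * ∑ ρ ∈ S, (mult ρ : ℝ) * (1 / (σ ^ 2 + ρ.1.im ^ 2)) ≤
      2 * (logDeriv xi σ).re := by
    refine le_trans ?_ h
    rw [Finset.mul_sum]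
    refine Finset.sum_le_sum fun ρ _ ↦ ?_
    rw [mul_left_comm]
    exact mul_le_mul_of_nonneg_left (pair_re_ge h1 ρ) (Nat.cast_nonneg _)
  have h3 := re_P_le h1
  have h4 : Real.log (σ / 2 + 1) ≤ Real.log σ - Real.log 2 + 2 / σ := by
    rw [show σ / 2 + 1 = σ / 2 * (1 + 2 / σ) by field_simp, Real.log_mul (by positivity) (by positivity),
      Real.log_div (by positivity) (by norm_num)]
    have := Real.log_le_sub_one_of_pos (by positivity : 0 < 1 + 2 / σ)
    linarith
  have h5 : 1 / (σ - 1) ≤ 1.035 / σ := by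
    rw [div_le_div_iff₀ (by linarith) (by linarith)]; linarith
  have h6 := log_pi_gt
  have h7 := Real.log_two_gt_d9
  have h8 : 0 ≤ Real.log σ - 1.837872 := by
    have := Real.log_le_log (by norm_num) (by linarith : (16:ℝ) ≤ σ)
    rw [show (16:ℝ) = 2 ^ 4 by norm_num, Real.log_pow] at this
    push_cast at this
    linarith
  have h9 : (2 * σ - 1) * ∑ ρ ∈ S, (mult ρ : ℝ) * (1 / (σ ^ 2 + ρ.1.im ^ 2)) ≤
      Real.log σ - 1.837872 + 4.07 / σ := by
    have e : 4.07 / σ = 2 * (1.035 / σ) + 2 / σ := by ring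
    rw [e]
    linarith
  have h10 : 0 ≤ Real.log σ - 1.837872 + 4.07 / σ := by positivity
  calc _ ≤ (Real.log σ - 1.837872 + 4.07 / σ) / (2 * σ - 1) := by
        rw [le_div_iff₀ (by linarith)]; linarith
    _ ≤ (Real.log σ - 1.837872 + 4.07 / σ) / (118 / 60 * σ) := by
        gcongr; linarith
    _ = _ := by field_simp

/-- The sum decreases in `σ`, and at `σ = 1` it is at most `cA` by `aa_ge`. -/
lemma sum_inv_le_A (S : Finset NZ) {σ : ℝ} (hσ : 1 ≤ σ) :
    ∑ ρ ∈ S, (mult ρ : ℝ) * (1 / (σ ^ 2 + ρ.1.im ^ 2)) ≤ cA := by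
  refine le_trans ?_ (sum_le_hasSum S (fun ρ _ ↦
    mul_nonneg (Nat.cast_nonneg _) (aa_pos ρ).le) hasSum_aa)
  refine Finset.sum_le_sum fun ρ _ ↦ mul_le_mul_of_nonneg_left ?_ (Nat.cast_nonneg _)
  refine le_trans ?_ (aa_ge ρ)
  have := im_sq_pos ρ
  gcongr
  nlinarith

/-- Antiderivative (in `σ`) of `∑ m_ρ / (σ (σ² + γ²))`. -/
def Psi (S : Finset NZ) (σ : ℝ) : ℝ :=
  ∑ ρ ∈ S, (mult ρ : ℝ) * (1 / ρ.1.im ^ 2 * (Real.log σ - 1 / 2 * Real.log (σ ^ 2 + ρ.1.im ^ 2)))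

lemma hasDerivAt_Psi (S : Finset NZ) {σ : ℝ} (hσ : 0 < σ) :
    HasDerivAt (Psi S) ((∑ ρ ∈ S, (mult ρ : ℝ) * (1 / (σ ^ 2 + ρ.1.im ^ 2))) / σ) σ := by
  rw [Finset.sum_div]
  unfold Psi
  refine HasDerivAt.fun_sum fun ρ _ ↦ ?_
  have hg := im_sq_pos ρ
  rw [mul_div_assoc]
  refine HasDerivAt.const_mul _ ?_
  have h1 := Real.hasDerivAt_log hσ.ne'
  have h2 : HasDerivAt (fun σ : ℝ ↦ Real.log (σ ^ 2 + ρ.1.im ^ 2)) (2 * σ / (σ ^ 2 + ρ.1.im ^ 2)) σ := by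
    have := ((hasDerivAt_pow 2 σ).add_const (ρ.1.im ^ 2)).log (by positivity)
    simpa using this
  refine ((h1.sub (h2.const_mul (1 / 2))).const_mul (1 / ρ.1.im ^ 2)).congr_deriv ?_
  generalize ρ.1.im ^ 2 = g at *
  field_simp
  ring

lemma Psi_step1 (S : Finset NZ) : Psi S 30 - cA * Real.log 30 ≤ Psi S 1 := by
  have hd : ∀ σ ∈ Icc (1:ℝ) 30, HasDerivAt (fun σ ↦ Psi S σ - cA * Real.log σ)
      ((∑ ρ ∈ S, (mult ρ : ℝ) * (1 / (σ ^ 2 + ρ.1.im ^ 2))) / σ - cA * σ⁻¹) σ := fun σ hσ ↦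
    (hasDerivAt_Psi S (by linarith [hσ.1])).sub
      ((Real.hasDerivAt_log (by linarith [hσ.1])).const_mul cA)
  have h := antitoneOn_of_deriv_nonpos (convex_Icc (1:ℝ) 30)
    (fun σ hσ ↦ (hd σ hσ).continuousAt.continuousWithinAt)
    (fun σ hσ ↦ (hd σ (interior_subset hσ)).differentiableAt.differentiableWithinAt) ?_
  · have := h (left_mem_Icc.mpr (by norm_num)) (right_mem_Icc.mpr (by norm_num)) (by norm_num)
    simpa using this
  · intro σ hσ
    have hσ := interior_subset hσ
    have h0 : 0 < σ := by linarith [hσ.1]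
    rw [(hd σ hσ).deriv, div_eq_mul_inv, ← sub_mul]
    exact mul_nonpos_of_nonpos_of_nonneg (by linarith [sum_inv_le_A S hσ.1]) (by positivity)

/-- Antiderivative of the majorant on `[30, ∞)`. -/
def Hm (σ : ℝ) : ℝ := 60 / 118 * (-((Real.log σ - 0.837872) / σ) - 2.035 * (1 / σ ^ 2))

lemma hasDerivAt_Hm {σ : ℝ} (hσ : 0 < σ) :
    HasDerivAt Hm (60 / 118 * ((Real.log σ - 1.837872) / σ + 4.07 / σ ^ 2) / σ) σ := by
  have h1 := ((Real.hasDerivAt_log hσ.ne').sub_const 0.837872).div (hasDerivAt_id σ) hσ.ne'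
  have h2 : HasDerivAt (fun σ : ℝ ↦ 1 / σ ^ 2) (-(2 * σ) / (σ ^ 2) ^ 2) σ := by
    have := (hasDerivAt_pow 2 σ).fun_inv (by positivity)
    simpa [one_div] using this
  have := ((h1.neg).sub (h2.const_mul 2.035)).const_mul (60 / 118)
  refine this.congr_deriv ?_
  simp only [id]
  field_simp
  ring

lemma Psi_step2 (S : Finset NZ) {T : ℝ} (hT : 30 ≤ T) : Psi S T - Hm T ≤ Psi S 30 - Hm 30 := by
  have hd : ∀ σ ∈ Icc (30:ℝ) T, HasDerivAt (fun σ ↦ Psi S σ - Hm σ)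
      ((∑ ρ ∈ S, (mult ρ : ℝ) * (1 / (σ ^ 2 + ρ.1.im ^ 2))) / σ -
        60 / 118 * ((Real.log σ - 1.837872) / σ + 4.07 / σ ^ 2) / σ) σ := fun σ hσ ↦
    (hasDerivAt_Psi S (by linarith [hσ.1])).sub (hasDerivAt_Hm (by linarith [hσ.1]))
  have h := antitoneOn_of_deriv_nonpos (convex_Icc (30:ℝ) T)
    (fun σ hσ ↦ (hd σ hσ).continuousAt.continuousWithinAt)
    (fun σ hσ ↦ (hd σ (interior_subset hσ)).differentiableAt.differentiableWithinAt) ?_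
  · exact h (left_mem_Icc.mpr hT) (right_mem_Icc.mpr hT) hT
  · intro σ hσ
    have hσ := interior_subset hσ
    have h0 : 0 < σ := by linarith [hσ.1]
    rw [(hd σ hσ).deriv, div_eq_mul_inv, div_eq_mul_inv, ← sub_mul]
    exact mul_nonpos_of_nonpos_of_nonneg (by linarith [sum_inv_le S hσ.1]) (by positivity)

lemma tendsto_Psi (S : Finset NZ) : Tendsto (Psi S) atTop (𝓝 0) := by
  rw [show (0:ℝ) = ∑ ρ ∈ S, (mult ρ : ℝ) * (1 / ρ.1.im ^ 2 * (-(1 / 2) * Real.log 1)) by simp]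
  refine tendsto_finsetSum _ fun ρ _ ↦ ?_
  refine Tendsto.const_mul _ (Tendsto.const_mul _ ?_)
  have hg := im_sq_pos ρ
  have h1 : Tendsto (fun σ : ℝ ↦ 1 + ρ.1.im ^ 2 * (σ⁻¹) ^ 2) atTop (𝓝 1) := by
    have := (((tendsto_inv_atTop_zero (𝕜 := ℝ)).pow 2).const_mul (ρ.1.im ^ 2)).const_add 1
    simpa using this
  refine ((h1.log one_ne_zero).const_mul (-(1 / 2))).congr' ?_
  filter_upwards [eventually_gt_atTop 0] with σ hσ
  rw [show σ ^ 2 + ρ.1.im ^ 2 = σ ^ 2 * (1 + ρ.1.im ^ 2 * (σ⁻¹) ^ 2) by field_simp,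
    Real.log_mul (by positivity) (by positivity), Real.log_pow]
  push_cast
  ring

/-- Since `Psi` vanishes at infinity, `-Psi S 1` is the integral over `[1, ∞)` of
`∑ mult ρ / (σ (σ² + (Im ρ)²))`. The sum is at most `cA` on `[1, 30]` and is bounded by
`sum_inv_le` beyond, with antiderivative `Hm`. -/
lemma Psi_one_ge (S : Finset NZ) : -0.202 ≤ Psi S 1 := by
  have h1 := Psi_step1 S
  have h2 : -Hm 30 ≥ - (Psi S 30) := by
    have hH : ∀ T : ℝ, 30 ≤ T → Hm T ≤ 0 := by
      intro T hT
      have h8 : 0 ≤ Real.log T - 0.837872 := by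
        have := Real.log_le_log (by norm_num) (by linarith : (16:ℝ) ≤ T)
        rw [show (16:ℝ) = 2 ^ 4 by norm_num, Real.log_pow] at this
        push_cast at this
        have := Real.log_two_gt_d9
        linarith
      have a : 0 ≤ (Real.log T - 0.837872) / T := div_nonneg h8 (by linarith)
      have b : 0 ≤ 1 / T ^ 2 := by positivity
      rw [Hm]; linarith
    have := le_of_tendsto (tendsto_Psi S) (b := Psi S 30 - Hm 30) (by
      filter_upwards [eventually_ge_atTop 30] with T hT
      have := Psi_step2 S hT
      linarith [hH T hT])
    linarith
  have l30 : Real.log 30 ≤ 3.4033 := by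
    rw [show (30:ℝ) = 2 ^ 5 * 0.9375 by norm_num, Real.log_mul (by norm_num) (by norm_num), Real.log_pow]
    have := Real.log_le_sub_one_of_pos (by norm_num : (0:ℝ) < 0.9375)
    have := Real.log_two_lt_d9
    push_cast
    linarith
  have hA := cA_lt
  have hA0 := cA_gt
  have h30 : -Hm 30 ≤ 0.0447 := by
    rw [Hm]; norm_num; linarith
  nlinarith

/-- The sum `∑ mult ρ log |Im ρ| / (Im ρ)²`; its partial sums are at most
`-Psi S 1`. -/
lemma summable_wlog : Summable (fun ρ : NZ ↦ (mult ρ : ℝ) * (1 / ρ.1.im ^ 2 * Real.log |ρ.1.im|)) ∧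
    ∑' ρ : NZ, (mult ρ : ℝ) * (1 / ρ.1.im ^ 2 * Real.log |ρ.1.im|) ≤ 0.202 := by
  have h0 : ∀ ρ : NZ, 0 ≤ (mult ρ : ℝ) * (1 / ρ.1.im ^ 2 * Real.log |ρ.1.im|) := fun ρ ↦ by
    have := im_sq_pos ρ
    have := log_im_ge ρ
    have : 0 ≤ Real.log |ρ.1.im| := by linarith
    positivity
  have h1 : ∀ S : Finset NZ, ∑ ρ ∈ S, (mult ρ : ℝ) * (1 / ρ.1.im ^ 2 * Real.log |ρ.1.im|) ≤ 0.202 := by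
    intro S
    have h := Psi_one_ge S
    have e : ∑ ρ ∈ S, (mult ρ : ℝ) * (1 / ρ.1.im ^ 2 * Real.log |ρ.1.im|) ≤ - Psi S 1 := by
      rw [Psi, ← Finset.sum_neg_distrib]
      refine Finset.sum_le_sum fun ρ _ ↦ ?_
      have hg := im_sq_pos ρ
      rw [← mul_neg, ← mul_neg, Real.log_one]
      refine mul_le_mul_of_nonneg_left (mul_le_mul_of_nonneg_left ?_ (by positivity)) (Nat.cast_nonneg _)
      have : Real.log (ρ.1.im ^ 2) ≤ Real.log (1 ^ 2 + ρ.1.im ^ 2) :=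
        Real.log_le_log hg (by linarith)
      rw [← sq_abs, Real.log_pow, sq_abs] at this
      rw [one_pow] at this ⊢
      push_cast at this
      linarith
    linarith
  have hs := summable_of_sum_le h0 h1
  exact ⟨hs, hs.tsum_le_of_sum_le h1⟩

lemma tsum_w_ge : cA ≤ ∑' ρ : NZ, (mult ρ : ℝ) * (1 / ρ.1.im ^ 2) := by
  rw [← hasSum_aa.tsum_eq]
  refine hasSum_aa.summable.tsum_le_tsum (fun ρ ↦ ?_) summable_w
  refine mul_le_mul_of_nonneg_left ?_ (Nat.cast_nonneg _)
  refine le_trans ?_ (norm_inv_le ρ)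
  refine le_trans (le_of_eq ?_) (re_le_norm _)
  rw [aa]
  congr 1
  have := ρ.ne_zero
  have := ρ.one_sub_ne_zero
  field_simp
  ring

/-- The weighted sum of the reciprocal distances of the zeros to the boundary of the strip. -/
lemma summable_wd : Summable (fun ρ : NZ ↦ (mult ρ : ℝ) * (1 / ρ.1.im ^ 2 * (1 / dd ρ))) ∧
    ∑' ρ : NZ, (mult ρ : ℝ) * (1 / ρ.1.im ^ 2 * (1 / dd ρ)) ≤ 4.323 := by
  obtain ⟨hs, hle⟩ := summable_wlog
  have h2 := (hs.mul_left 35).sub (summable_w.mul_left (35 * 1.7))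
  have hb : ∀ ρ : NZ, (mult ρ : ℝ) * (1 / ρ.1.im ^ 2 * (1 / dd ρ)) ≤
      35 * ((mult ρ : ℝ) * (1 / ρ.1.im ^ 2 * Real.log |ρ.1.im|)) -
        35 * 1.7 * ((mult ρ : ℝ) * (1 / ρ.1.im ^ 2)) := fun ρ ↦ by
    have hg := im_sq_pos ρ
    have := inv_dd_le ρ
    calc _ ≤ (mult ρ : ℝ) * (1 / ρ.1.im ^ 2 * (35 * (Real.log |ρ.1.im| - 1.7))) := by gcongr
      _ = _ := by ring
  have hs3 : Summable (fun ρ : NZ ↦ (mult ρ : ℝ) * (1 / ρ.1.im ^ 2 * (1 / dd ρ))) := by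
    refine Summable.of_nonneg_of_le (fun ρ ↦ ?_) hb h2
    have := dd_pos ρ
    positivity
  refine ⟨hs3, (hs3.tsum_le_tsum hb h2).trans ?_⟩
  rw [(hs.mul_left 35).tsum_sub (summable_w.mul_left (35 * 1.7)), tsum_mul_left, tsum_mul_left]
  have := tsum_w_ge
  have := cA_gt
  nlinarith

end

/-! ### Laplace transforms on the line `Re z = 2` -/

noncomputable section

open Complex Set Filter Topology MeasureTheory Metric
open scoped ArithmeticFunction FourierTransform

/-- The point `2 + iy`. -/
def zl (y : ℝ) : ℂ := 2 + y * I

lemma zl_re (y : ℝ) : (zl y).re = 2 := by simp [zl]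

lemma norm_exp_zl (y u : ℝ) : ‖cexp (-(zl y) * u)‖ = Real.exp (-2 * u) := by
  rw [norm_exp]; congr 1; simp [zl]

/-- `f` has Laplace transform `L` along the line `Re z = 2`. -/
def HasLap (f : ℝ → ℂ) (L : ℂ → ℂ) : Prop := ∀ y : ℝ,
  IntegrableOn (fun u : ℝ ↦ cexp (-(zl y) * u) * f u) (Ioi 0) ∧
    ∫ u in Ioi (0:ℝ), cexp (-(zl y) * u) * f u = L (zl y)

lemma HasLap.add {f g : ℝ → ℂ} {L M : ℂ → ℂ} (hf : HasLap f L) (hg : HasLap g M) :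
    HasLap (fun u ↦ f u + g u) (fun z ↦ L z + M z) := fun y ↦ by
  simp only [mul_add]
  exact ⟨(hf y).1.add (hg y).1, by rw [integral_add (hf y).1 (hg y).1, (hf y).2, (hg y).2]⟩

lemma HasLap.sub {f g : ℝ → ℂ} {L M : ℂ → ℂ} (hf : HasLap f L) (hg : HasLap g M) :
    HasLap (fun u ↦ f u - g u) (fun z ↦ L z - M z) := fun y ↦ by
  simp only [mul_sub]
  exact ⟨(hf y).1.sub (hg y).1, by rw [integral_sub (hf y).1 (hg y).1, (hf y).2, (hg y).2]⟩

lemma HasLap.const_mul {f : ℝ → ℂ} {L : ℂ → ℂ} (hf : HasLap f L) (c : ℂ) :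
    HasLap (fun u ↦ c * f u) (fun z ↦ c * L z) := fun y ↦ by
  simp only [mul_left_comm _ c]
  exact ⟨(hf y).1.const_mul c, by rw [integral_const_mul, (hf y).2]⟩

lemma hasLap_exp {a : ℂ} (ha : a.re < 2) :
    HasLap (fun u ↦ cexp (a * u)) (fun z ↦ 1 / (z - a)) := fun y ↦ by
  have h : (a - zl y).re < 0 := by rw [sub_re, zl_re]; linarith
  have e : ∀ u : ℝ, cexp (-(zl y) * u) * cexp (a * u) = cexp ((a - zl y) * u) := fun u ↦ by
    rw [← Complex.exp_add]; ring_nf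
  simp only [e]
  refine ⟨integrableOn_exp_mul_complex_Ioi h 0, ?_⟩
  rw [integral_exp_mul_complex_Ioi h 0]
  simp
  rw [← neg_sub (zl y) a, neg_div_neg_eq, one_div]

lemma hasLap_one : HasLap (fun _ ↦ 1) (fun z ↦ 1 / z) := by
  have := hasLap_exp (a := 0) (by simp)
  simpa using this

lemma hasLap_id : HasLap (fun u ↦ (u : ℂ)) (fun z ↦ 1 / z ^ 2) := fun y ↦ by
  have hr : 0 < (zl y).re := by rw [zl_re]; norm_num
  have hz : zl y ≠ 0 := fun h ↦ by rw [h] at hr; simp at hr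
  have hintg : IntegrableOn (fun u : ℝ ↦ cexp (-(zl y) * u) * (u : ℂ)) (Ioi 0) := by
    refine Integrable.mono' (integrableOn_exp_mul_Ioi (a := -1) (by norm_num) 0) ?_ ?_
    · exact (Continuous.aestronglyMeasurable (by fun_prop))
    · refine (ae_restrict_iff' measurableSet_Ioi).mpr (Eventually.of_forall fun u hu ↦ ?_)
      have hu0 : (0:ℝ) < u := hu
      rw [norm_mul, norm_exp_zl, norm_real, Real.norm_of_nonneg hu0.le]
      calc Real.exp (-2 * u) * u ≤ Real.exp (-2 * u) * Real.exp u := by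
            gcongr; linarith [Real.add_one_le_exp u]
        _ = Real.exp (-1 * u) := by rw [← Real.exp_add]; ring_nf
  refine ⟨hintg, ?_⟩
  have hd : ∀ u ∈ Ici (0:ℝ), HasDerivAt
      (fun u : ℝ ↦ -(((u:ℂ) / zl y + 1 / zl y ^ 2) * cexp (-(zl y) * u)))
      (cexp (-(zl y) * u) * (u : ℂ)) u := fun u _ ↦ by
    have h1 : HasDerivAt (fun u : ℝ ↦ (u:ℂ)) 1 u := ofRealCLM.hasDerivAt
    have h2 := (((h1.div_const (zl y)).add_const (1 / zl y ^ 2)).mul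
      ((h1.const_mul (-(zl y))).cexp)).neg
    refine h2.congr_deriv ?_
    generalize cexp (-(zl y) * u) = E
    field_simp
    ring
  have hlim : Tendsto (fun u : ℝ ↦ -(((u:ℂ) / zl y + 1 / zl y ^ 2) * cexp (-(zl y) * u)))
      atTop (𝓝 0) := by
    rw [tendsto_zero_iff_norm_tendsto_zero]
    have h1 : Tendsto (fun u : ℝ ↦ (1 / ‖zl y‖) * (u * Real.exp (-2 * u)) +
        (1 / ‖zl y‖ ^ 2) * Real.exp (-2 * u)) atTop (𝓝 0) := by
      have e1 : Tendsto (fun u : ℝ ↦ u * Real.exp (-2 * u)) atTop (𝓝 0) := by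
        have := Real.tendsto_pow_mul_exp_neg_atTop_nhds_zero 1
        have h3 := this.comp (tendsto_id.const_mul_atTop (show (0:ℝ) < 2 by norm_num))
        have h4 := h3.const_mul (1/2:ℝ)
        simp only [mul_zero] at h4
        refine h4.congr fun u ↦ ?_
        simp only [Function.comp, id, pow_one]; ring_nf
      have e2 : Tendsto (fun u : ℝ ↦ Real.exp (-2 * u)) atTop (𝓝 0) :=
        Real.tendsto_exp_atBot.comp (tendsto_id.const_mul_atTop_of_neg (by norm_num))
      have e3 := (e1.const_mul (1 / ‖zl y‖)).add (e2.const_mul (1 / ‖zl y‖ ^ 2))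
      rwa [mul_zero, mul_zero, add_zero] at e3
    refine squeeze_zero' (Eventually.of_forall fun u ↦ norm_nonneg _) ?_ h1
    filter_upwards [eventually_ge_atTop 0] with u hu
    rw [norm_neg, norm_mul, norm_exp_zl]
    calc ‖(u:ℂ) / zl y + 1 / zl y ^ 2‖ * Real.exp (-2 * u)
        ≤ (u / ‖zl y‖ + 1 / ‖zl y‖ ^ 2) * Real.exp (-2 * u) := by
          gcongr
          refine (norm_add_le _ _).trans (le_of_eq ?_)
          rw [norm_div, norm_div, norm_real, Real.norm_of_nonneg hu, norm_pow, norm_one]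
      _ = _ := by ring
  rw [integral_Ioi_of_hasDerivAt_of_tendsto' hd hintg hlim]
  simp

/-- Uniqueness for Laplace transforms, by Fourier inversion. -/
lemma HasLap.eq_zero {f : ℝ → ℂ} {L : ℂ → ℂ} (hf : HasLap f L) (hL : ∀ y, L (zl y) = 0)
    (hc : ContinuousOn f (Ioi 0)) {u : ℝ} (hu : 0 < u) : f u = 0 := by
  set g : ℝ → ℂ := (Ioi (0:ℝ)).indicator (fun u : ℝ ↦ cexp (-(zl 0) * u) * f u) with hg
  have hgi : Integrable g := (integrable_indicator_iff measurableSet_Ioi).mpr (hf 0).1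
  have hF : 𝓕 g = 0 := by
    funext w
    rw [Real.fourier_real_eq_integral_exp_smul]
    have e : ∀ v : ℝ, cexp (((-2 * Real.pi * v * w : ℝ) : ℂ) * I) • g v =
        (Ioi (0:ℝ)).indicator (fun u : ℝ ↦ cexp (-(zl (2 * Real.pi * w)) * u) * f u) v := by
      intro v
      by_cases hv : v ∈ Ioi (0:ℝ)
      · rw [hg, indicator_of_mem hv, indicator_of_mem hv, smul_eq_mul, ← mul_assoc, ← Complex.exp_add]
        congr 2
        simp only [zl]; push_cast; ring
      · rw [hg, indicator_of_notMem hv, indicator_of_notMem hv, smul_zero]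
    simp only [e]
    rw [integral_indicator measurableSet_Ioi, (hf _).2, hL]
    rfl
  have hca : ContinuousAt g u := by
    have h1 : ContinuousAt (fun u : ℝ ↦ cexp (-(zl 0) * u) * f u) u := by
      refine ContinuousAt.mul (by fun_prop) (hc.continuousAt (Ioi_mem_nhds hu))
    refine h1.congr ?_
    filter_upwards [Ioi_mem_nhds hu] with v hv
    rw [hg, indicator_of_mem hv]
  have h := hgi.fourierInv_fourier_eq (by rw [hF]; exact integrable_zero _ _ _) hca
  rw [hF] at h
  have h0 : g u = 0 := by
    rw [← h, Real.fourierInv_eq]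
    simp
  rw [hg, indicator_of_mem (show u ∈ Ioi 0 from hu)] at h0
  exact (mul_eq_zero.mp h0).resolve_left (Complex.exp_ne_zero _)

lemma HasLap.tsum {ι : Type*} [Countable ι] {f : ι → ℝ → ℂ} {L : ι → ℂ → ℂ}
    (hf : ∀ i, HasLap (f i) (L i))
    (hs : Summable fun i ↦ ∫ u in Ioi (0:ℝ), ‖cexp (-(zl 0) * u) * f i u‖)
    (hi : ∀ y, IntegrableOn (fun u : ℝ ↦ cexp (-(zl y) * u) * ∑' i, f i u) (Ioi 0)) :
    HasLap (fun u ↦ ∑' i, f i u) (fun z ↦ ∑' i, L i z) := fun y ↦ by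
  refine ⟨hi y, ?_⟩
  simp only [norm_mul, norm_exp_zl] at hs
  have h := hasSum_integral_of_summable_integral_norm (fun i ↦ (hf i y).1) (by
    simpa only [norm_mul, norm_exp_zl] using hs)
  simp only [tsum_mul_left] at h
  rw [← h.tsum_eq]
  exact tsum_congr fun i ↦ (hf i y).2

/-- Termwise Laplace transforms for a series dominated by a convergent multiple of `e^u`. -/
lemma HasLap.tsum_bdd {ι : Type*} [Countable ι] {f : ι → ℝ → ℂ} {L : ι → ℂ → ℂ} {b : ι → ℝ}
    (hf : ∀ i, HasLap (f i) (L i)) (hc : ∀ i, ContinuousOn (f i) (Ioi 0))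
    (hb : ∀ i u, 0 < u → ‖f i u‖ ≤ b i * Real.exp u) (hs : Summable b) :
    ContinuousOn (fun u ↦ ∑' i, f i u) (Ioi 0) ∧
    HasLap (fun u ↦ ∑' i, f i u) (fun z ↦ ∑' i, L i z) := by
  have hcont : ContinuousOn (fun u ↦ ∑' i, f i u) (Ioi 0) := by
    have h1 : ContinuousOn (fun u : ℝ ↦ ∑' i, cexp (-u) * f i u) (Ioi 0) := by
      refine continuousOn_tsum (fun i ↦ ContinuousOn.mul (by fun_prop) (hc i)) hs fun i u hu ↦ ?_
      rw [norm_mul, norm_exp]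
      calc Real.exp (-(u:ℂ)).re * ‖f i u‖ ≤ Real.exp (-(u:ℂ)).re * (b i * Real.exp u) := by
            gcongr; exact hb i u hu
        _ = b i := by rw [neg_re, ofReal_re, Real.exp_neg]; field_simp
    have h2 : ContinuousOn (fun u : ℝ ↦ cexp u * ∑' i, cexp (-u) * f i u) (Ioi 0) :=
      ContinuousOn.mul (by fun_prop) h1
    refine h2.congr fun u _ ↦ ?_
    simp only []
    rw [tsum_mul_left, ← mul_assoc, ← Complex.exp_add, add_neg_cancel, Complex.exp_zero, one_mul]
  have hexp : IntegrableOn (fun u : ℝ ↦ Real.exp (-1 * u)) (Ioi 0) :=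
    integrableOn_exp_mul_Ioi (by norm_num) 0
  have hee : ∀ u : ℝ, Real.exp (-2 * u) * Real.exp u = Real.exp (-1 * u) := fun u ↦ by
    rw [← Real.exp_add]; ring_nf
  refine ⟨hcont, HasLap.tsum hf ?_ fun y ↦ ?_⟩
  · refine Summable.of_nonneg_of_le (fun i ↦ integral_nonneg fun u ↦ norm_nonneg _) (fun i ↦ ?_)
      (hs.mul_right (∫ u in Ioi (0:ℝ), Real.exp (-1 * u)))
    rw [← integral_const_mul]
    refine setIntegral_mono_on (hf i 0).1.norm (hexp.const_mul _) measurableSet_Ioi fun u hu ↦ ?_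
    rw [norm_mul, norm_exp_zl, ← hee, ← mul_assoc, mul_comm (b i), mul_assoc]
    exact mul_le_mul_of_nonneg_left (hb i u hu) (Real.exp_pos _).le
  · refine Integrable.mono' (hexp.mul_const (∑' i, b i)) ?_ ?_
    · refine ContinuousOn.aestronglyMeasurable ?_ measurableSet_Ioi
      exact ContinuousOn.mul (by fun_prop) hcont
    · refine (ae_restrict_iff' measurableSet_Ioi).mpr (Eventually.of_forall fun u hu ↦ ?_)
      rw [norm_mul, norm_exp_zl, ← hee, mul_assoc]
      refine mul_le_mul_of_nonneg_left ?_ (Real.exp_pos _).le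
      rw [mul_comm]
      exact tsum_of_norm_bounded (hs.hasSum.mul_right _) fun i ↦ hb i u hu

end

/-! ### The arithmetic side of the explicit formula -/

noncomputable section

open Complex Set Filter Topology MeasureTheory Metric
open scoped ArithmeticFunction

/-- `DD x = ∑_{n ≤ x} Λ(n) (1/n - 1/x) = ∫_1^x ψ(t) t⁻² dt`. -/
def DD (x : ℝ) : ℝ := ∑ n ∈ Finset.Ioc 0 ⌊x⌋₊, Λ n * (1 / n - 1 / x)

/-- The summands of `DD (e^u)`, extended by zero. -/
def ff (n : ℕ) (u : ℝ) : ℝ := Λ n * max (1 / n - Real.exp (-u)) 0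

lemma tsum_ff (u : ℝ) : ∑' n, ff n u = DD (Real.exp u) := by
  rw [DD, tsum_eq_sum (s := Finset.Ioc 0 ⌊Real.exp u⌋₊)]
  · refine Finset.sum_congr rfl fun n hn ↦ ?_
    rw [Finset.mem_Ioc] at hn
    have h1 : (n:ℝ) ≤ Real.exp u := (Nat.le_floor_iff (Real.exp_pos u).le).mp hn.2
    have h0 : (0:ℝ) < n := by exact_mod_cast hn.1
    rw [ff, max_eq_left, Real.exp_neg, one_div (Real.exp u)]
    rw [Real.exp_neg, sub_nonneg, one_div]
    exact inv_anti₀ h0 h1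
  · intro n hn
    rw [Finset.mem_Ioc, not_and_or] at hn
    rcases Nat.eq_zero_or_pos n with h | h
    · simp [ff, h]
    · have h1 : ¬ n ≤ ⌊Real.exp u⌋₊ := by tauto
      rw [Nat.le_floor_iff (Real.exp_pos u).le, not_le] at h1
      rw [ff, max_eq_right, mul_zero]
      rw [Real.exp_neg, sub_nonpos, one_div]
      exact inv_anti₀ (Real.exp_pos _) h1.le

lemma ff_nonneg (n : ℕ) (u : ℝ) : 0 ≤ ff n u :=
  mul_nonneg ArithmeticFunction.vonMangoldt_nonneg (le_max_right _ _)

lemma ff_le (n : ℕ) (u : ℝ) : ff n u ≤ Λ n / n ^ 2 * Real.exp u := by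
  rcases Nat.eq_zero_or_pos n with h | h
  · simp [ff, h]
  have hn : (0:ℝ) < n := by exact_mod_cast h
  rw [ff, div_mul_eq_mul_div, mul_div_assoc]
  refine mul_le_mul_of_nonneg_left (max_le ?_ (by positivity)) ArithmeticFunction.vonMangoldt_nonneg
  rw [Real.exp_neg]
  have hE := Real.exp_pos u
  generalize Real.exp u = E at *
  rw [div_sub' hn.ne', div_le_div_iff₀ hn (by positivity)]
  have : 0 ≤ n * (n * E⁻¹ ) := by positivity
  have h2 : (E - n) ^ 2 ≥ 0 := sq_nonneg _
  have h3 : E * E⁻¹ = 1 := mul_inv_cancel₀ hE.ne'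
  nlinarith [mul_nonneg (mul_nonneg hn.le (inv_nonneg.mpr hE.le)) h2, mul_pos hn hE]

lemma summable_vM_sq : Summable fun n : ℕ ↦ Λ n / (n:ℝ) ^ 2 := by
  have h := (ArithmeticFunction.LSeriesSummable_vonMangoldt (s := 2) (by norm_num)).norm
  refine h.congr fun n ↦ ?_
  rcases Nat.eq_zero_or_pos n with h | h
  · simp [h]
  rw [LSeries.term_of_ne_zero h.ne', norm_div, norm_real,
    Real.norm_of_nonneg ArithmeticFunction.vonMangoldt_nonneg]
  norm_cast

/-- `∫ e^{-zu} max (1/n - e^{-u}) 0 du = n^{-z-1} / (z (z+1))`. -/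
lemma hasLap_ff (n : ℕ) : HasLap (fun u ↦ (ff n u : ℂ))
    (fun z ↦ LSeries.term (fun n ↦ ((Λ n : ℝ) : ℂ)) (z + 1) n * (1 / (z * (z + 1)))) := fun y ↦ by
  rcases Nat.eq_zero_or_pos n with h | h
  · simp [ff, h]
  have hn : (0:ℝ) < n := by exact_mod_cast h
  have hn1 : (1:ℝ) ≤ n := by exact_mod_cast h
  have hnc : (n:ℂ) ≠ 0 := by exact_mod_cast hn.ne'
  have hlog : 0 ≤ Real.log n := Real.log_nonneg hn1
  set z := zl y with hz
  have hzr : z.re = 2 := zl_re y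
  have hz0 : z ≠ 0 := fun h ↦ by rw [h] at hzr; simp at hzr
  have hz1 : z + 1 ≠ 0 := fun h ↦ by
    have := congrArg re h; rw [add_re, hzr] at this; norm_num at this
  have e : EqOn (fun u : ℝ ↦ cexp (-z * u) * (ff n u : ℂ))
      ((Ioi (Real.log n)).indicator fun u : ℝ ↦
        (Λ n : ℂ) * ((1 / n : ℂ) * cexp (-z * u) - cexp (-(z + 1) * u))) (Ioi 0) := by
    intro u _
    simp only []
    by_cases hu : Real.log n < u
    · rw [indicator_of_mem (show u ∈ Ioi _ from hu), ff, max_eq_left]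
      · push_cast
        rw [show -(z + 1) * u = -z * u + -u by ring, Complex.exp_add]
        ring
      · rw [Real.exp_neg, sub_nonneg, one_div]
        exact inv_anti₀ hn ((Real.log_lt_iff_lt_exp hn).mp hu).le
    · rw [indicator_of_notMem (show u ∉ Ioi _ from hu), ff, max_eq_right]
      · simp
      · rw [Real.exp_neg, sub_nonpos, one_div]
        exact inv_anti₀ (Real.exp_pos _) ((Real.le_log_iff_exp_le hn).mp (not_lt.mp hu))
  have i1 : IntegrableOn (fun u : ℝ ↦ cexp (-z * u)) (Ioi (Real.log n)) :=
    integrableOn_exp_mul_complex_Ioi (by rw [neg_re, hzr]; norm_num) _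
  have i2 : IntegrableOn (fun u : ℝ ↦ cexp (-(z+1) * u)) (Ioi (Real.log n)) :=
    integrableOn_exp_mul_complex_Ioi (by rw [neg_re, add_re, hzr]; norm_num) _
  have i3 : IntegrableOn (fun u : ℝ ↦
        (Λ n : ℂ) * ((1 / n : ℂ) * cexp (-z * u) - cexp (-(z + 1) * u))) (Ioi (Real.log n)) :=
    ((i1.const_mul _).sub i2).const_mul _
  refine ⟨?_, ?_⟩
  · refine IntegrableOn.congr_fun ?_ e.symm measurableSet_Ioi
    exact ((integrable_indicator_iff measurableSet_Ioi).mpr i3).integrableOn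
  · rw [setIntegral_congr_fun measurableSet_Ioi e, setIntegral_indicator measurableSet_Ioi,
      Ioi_inter_Ioi, sup_eq_right.mpr hlog, integral_const_mul,
      integral_sub (i1.const_mul _) i2, integral_const_mul,
      integral_exp_mul_complex_Ioi (by rw [neg_re, hzr]; norm_num) _,
      integral_exp_mul_complex_Ioi (by rw [neg_re, add_re, hzr]; norm_num) _]
    simp only []
    rw [LSeries.term_of_ne_zero h.ne']
    have e1 : cexp (-z * (Real.log n : ℝ)) = n * (n ^ (z+1) : ℂ)⁻¹ := by
      rw [← cpow_neg, cpow_def_of_ne_zero hnc, ← natCast_log]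
      nth_rewrite 1 [← Complex.exp_log hnc]
      rw [← Complex.exp_add, ← natCast_log]
      ring_nf
    have e2 : cexp (-(z+1) * (Real.log n : ℝ)) = (n ^ (z+1) : ℂ)⁻¹ := by
      rw [← cpow_neg, cpow_def_of_ne_zero hnc, ← natCast_log]
      ring_nf
    rw [e1, e2]
    have hp : (n:ℂ) ^ (z + 1) ≠ 0 := by simp [cpow_eq_zero_iff, hnc]
    generalize (n:ℂ) ^ (z + 1) = P at *
    generalize (Λ n : ℂ) = l
    field_simp
    ring

lemma hasLap_DD : ContinuousOn (fun u ↦ (DD (Real.exp u) : ℂ)) (Ioi 0) ∧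
    HasLap (fun u ↦ (DD (Real.exp u) : ℂ)) (fun z ↦ VM (z + 1) * (1 / (z * (z + 1)))) := by
  have h := HasLap.tsum_bdd hasLap_ff (b := fun n ↦ Λ n / (n:ℝ) ^ 2) (fun n ↦ by
      unfold ff; fun_prop) (fun n u _ ↦ by
      rw [norm_real, Real.norm_of_nonneg (ff_nonneg n u)]; exact ff_le n u) summable_vM_sq
  simp only [tsum_mul_right] at h
  have e : ∀ u, ∑' n, (ff n u : ℂ) = (DD (Real.exp u) : ℂ) := fun u ↦ by
    rw [← tsum_ff]; exact (ofReal_tsum _).symm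
  simp only [e] at h
  exact h

end

/-! ### The explicit formula -/

noncomputable section

open Complex Set Filter Topology MeasureTheory Metric
open scoped ArithmeticFunction

instance : Countable NZ := by
  have h := (summable_w).countable_support
  have : Function.support (fun ρ : NZ ↦ (mult ρ : ℝ) * (1 / ρ.1.im ^ 2)) = univ := by
    ext ρ
    simp only [Function.mem_support, mem_univ, iff_true]
    have h1 := one_le_mult ρ
    have h2 := im_sq_pos ρ
    positivity
  rw [this] at h
  exact countable_univ_iff.mp h

/-- Coefficients of the contribution of the trivial zeros. -/
def cj (j : ℕ) : ℝ := 1 / ((2 * j + 2) * (2 * j + 3))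

lemma cj_pos (j : ℕ) : 0 < cj j := by unfold cj; positivity

lemma digamma_three_half : digamma (3 / 2) = 2 - Real.eulerMascheroniConstant - 2 * Real.log 2 := by
  have h := digamma_apply_add_one (s := 1 / 2) (fun m h ↦ by
    have := congrArg re h
    norm_num at this
    have h0 : (0:ℝ) ≤ m := by positivity
    linarith)
  rw [show (1 / 2 : ℂ) + 1 = 3 / 2 by norm_num, digamma_one_half] at h
  rw [h, ofReal_log (by norm_num)]
  push_cast
  norm_num
  ring

lemma hasSum_cj : HasSum (fun j ↦ (cj j : ℂ)) ((1 - Real.log 2 : ℝ) : ℂ) := by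
  have h := (hasSum_digT (z := 3 / 2) (by norm_num)).mul_left (1 / 2)
  refine hasSum_of_eq h (fun j ↦ ?_) ?_
  · have h1 : (j:ℂ) + 1 ≠ 0 := by exact_mod_cast (Nat.succ_ne_zero j)
    have h2 : (2 * j + 3 : ℂ) ≠ 0 := by exact_mod_cast (by omega : 2 * j + 3 ≠ 0)
    have h3 : (2 * j + 2 : ℂ) ≠ 0 := by exact_mod_cast (by omega : 2 * j + 2 ≠ 0)
    have h4 : (3 / 2 + j : ℂ) ≠ 0 := by
      intro h; apply h2; linear_combination 2 * h
    have e1 : (1 / (3 / 2 + j) : ℂ) = 2 / (2 * j + 3) := by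
      rw [div_eq_div_iff h4 h2]; ring
    rw [digT, cj, e1]; push_cast
    field_simp
    ring
  · rw [digamma_three_half]; push_cast; ring

lemma hasSum_cj_s {s : ℂ} (hs : 1 < s.re) : HasSum (fun j : ℕ ↦ (cj j : ℂ) * (1 / (s + 2 * j + 2)))
    (1 / s * ((1 - Real.log 2 : ℝ) - 1 / 2 * (digamma (s / 2 + 1) - digamma (3 / 2)) / (s - 1))) := by
  have hs0 : s ≠ 0 := fun h ↦ by rw [h] at hs; norm_num at hs
  have hs1 : s - 1 ≠ 0 := fun h ↦ by rw [sub_eq_zero.mp h] at hs; norm_num at hs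
  have h := (hasSum_cj.sub (((hasSum_digT (z := s / 2 + 1) (by simp; linarith)).sub
    (hasSum_digT (z := 3 / 2) (by norm_num))).mul_left (1 / 2 / (s - 1)))).mul_left (1 / s)
  refine hasSum_of_eq h (fun j ↦ ?_) ?_
  · have h1 : (j:ℂ) + 1 ≠ 0 := by exact_mod_cast (Nat.succ_ne_zero j)
    have h2 : (2 * j + 3 : ℂ) ≠ 0 := by exact_mod_cast (by omega : 2 * j + 3 ≠ 0)
    have h3 : (2 * j + 2 : ℂ) ≠ 0 := by exact_mod_cast (by omega : 2 * j + 2 ≠ 0)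
    have h4 : (3 / 2 + j : ℂ) ≠ 0 := by
      intro h; apply h2; linear_combination 2 * h
    have h5 : s + 2 * j + 2 ≠ 0 := by
      intro h
      have := congrArg re h
      simp at this
      have h0 : (0:ℝ) ≤ j := by positivity
      linarith
    have h6 : s / 2 + 1 + j ≠ 0 := by
      intro h; apply h5; linear_combination 2 * h
    have e1 : (1 / (3 / 2 + j) : ℂ) = 2 / (2 * j + 3) := by
      rw [div_eq_div_iff h4 h2]; ring
    have e2 : (1 / (s / 2 + 1 + j) : ℂ) = 2 / (s + 2 * j + 2) := by
      rw [div_eq_div_iff h6 h5]; ring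
    rw [digT, digT, cj, e1, e2]; push_cast
    field_simp
    ring
  · ring

/-- The explicit formula for `DD`. Both sides are continuous in `u` and have the same Laplace
transform: by `VM_eq_xi` at `s = z + 1`, the transform `-ζ'/ζ(s) / (s (s-1))` of `DD (e^u)` splits
into a rational part, the digamma part (`hasSum_cj_s`) and the sum over zeros (`hasSum_inv_s`). -/
lemma explicit_formula {u : ℝ} (hu : 0 < u) :
    (u : ℂ) - (1 + Real.eulerMascheroniConstant) - DD (Real.exp u) =
      -(∑' ρ : NZ, (mult ρ : ℂ) * (1 / (ρ.1 * (1 - ρ.1))) * cexp ((ρ.1 - 1) * u))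
      + (∑' j : ℕ, (cj j : ℂ) * cexp (-(2 * j + 3) * u))
      - Real.log (2 * Real.pi) * cexp (-1 * u) := by
  have hZ := HasLap.tsum_bdd (ι := NZ)
    (f := fun ρ u ↦ (mult ρ : ℂ) * (1 / (ρ.1 * (1 - ρ.1))) * cexp ((ρ.1 - 1) * u))
    (L := fun ρ z ↦ (mult ρ : ℂ) * (1 / (ρ.1 * (1 - ρ.1))) * (1 / (z - (ρ.1 - 1))))
    (b := fun ρ ↦ mult ρ * (1 / ρ.1.im ^ 2))
    (fun ρ ↦ (hasLap_exp (by rw [sub_re, one_re]; linarith [NZ.re_lt ρ])).const_mul _)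
    (fun ρ ↦ by fun_prop) (fun ρ u hu ↦ by
      rw [norm_mul, norm_mul, norm_exp]
      have h1 := norm_inv_le ρ
      have h2 : ((ρ.1 - 1) * (u:ℂ)).re ≤ u := by
        simp; nlinarith [NZ.re_lt ρ]
      rw [norm_natCast]
      gcongr) summable_w
  have hT := HasLap.tsum_bdd (ι := ℕ)
    (f := fun j u ↦ (cj j : ℂ) * cexp (-(2 * j + 3) * u))
    (L := fun j z ↦ (cj j : ℂ) * (1 / (z - (-(2 * j + 3)))))
    (b := fun j ↦ cj j)
    (fun j ↦ (hasLap_exp (by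
      simp; have h0 : (0:ℝ) ≤ j := by positivity
      linarith)).const_mul _)
    (fun j ↦ by fun_prop) (fun j u hu ↦ by
      rw [norm_mul, norm_exp, norm_real, Real.norm_of_nonneg (cj_pos j).le]
      have h2 : (-(2 * (j:ℂ) + 3) * (u:ℂ)).re ≤ u := by
        simp
        have h0 : (0:ℝ) ≤ j := by positivity
        nlinarith [mul_nonneg h0 hu.le]
      have := (cj_pos j).le
      gcongr) (by exact_mod_cast hasSum_cj.summable)
  have hE := (hasLap_exp (a := -1) (by norm_num)).const_mul (Real.log (2 * Real.pi) : ℂ)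
  have hF := (hasLap_id.sub (hasLap_one.const_mul
    (1 + Real.eulerMascheroniConstant : ℂ))).sub hasLap_DD.2
  have hall := hF.sub ((hT.2.sub hZ.2).sub hE)
  have key := hall.eq_zero (u := u) (fun y ↦ ?_) ?_ hu
  · rw [mul_one] at key
    linear_combination key
  · have hz := zl_re y
    have hz0 : zl y ≠ 0 := fun h ↦ by rw [h] at hz; simp at hz
    have hs : 1 < (zl y + 1).re := by rw [add_re, hz]; norm_num
    have hz1 : zl y + 1 ≠ 0 := fun h ↦ by rw [h] at hs; norm_num at hs
    have t1 : ∑' ρ : NZ, (mult ρ : ℂ) * (1 / (ρ.1 * (1 - ρ.1))) * (1 / (zl y - (ρ.1 - 1)))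
        = 1 / (zl y + 1) * (cA - (logDeriv xi (zl y + 1) - cA / 2) / (zl y + 1 - 1)) := by
      rw [← (hasSum_inv_s hs).tsum_eq]
      refine tsum_congr fun ρ ↦ ?_
      rw [show zl y - (ρ.1 - 1) = zl y + 1 - ρ.1 by ring, mul_assoc, one_div_mul_one_div]
    have t2 : ∑' j : ℕ, (cj j : ℂ) * (1 / (zl y - (-(2 * j + 3))))
        = 1 / (zl y + 1) * ((1 - Real.log 2 : ℝ) -
          1 / 2 * (digamma ((zl y + 1) / 2 + 1) - digamma (3 / 2)) / (zl y + 1 - 1)) := by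
      rw [← (hasSum_cj_s hs).tsum_eq]
      refine tsum_congr fun ρ ↦ ?_
      congr 3
      ring
    rw [t1, t2, VM_eq_xi hs, digamma_three_half]
    have e1 : Real.log (2 * Real.pi) = Real.log 2 + Real.log Real.pi :=
      Real.log_mul (by norm_num) Real.pi_ne_zero
    have e2 : cA = 2 + Real.eulerMascheroniConstant - (2 * Real.log 2 + Real.log Real.pi) := by
      rw [cA, Real.log_mul (by norm_num) Real.pi_ne_zero, show (4:ℝ) = 2 ^ 2 by norm_num,
        Real.log_pow]; push_cast; ring
    rw [e1, e2]
    push_cast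
    rw [add_sub_cancel_right, sub_neg_eq_add]
    generalize logDeriv xi (zl y + 1) = X
    generalize digamma ((zl y + 1) / 2 + 1) = D
    generalize zl y = z at *
    generalize (Real.log 2 : ℂ) = a
    generalize (Real.log Real.pi : ℂ) = b
    generalize (Real.eulerMascheroniConstant : ℂ) = g
    field_simp
    ring
  · refine ContinuousOn.sub (ContinuousOn.sub (by fun_prop) hasLap_DD.1) ?_
    exact (hT.1.sub hZ.1).sub (by fun_prop)

end

/-! ### Bounds for the error term -/

noncomputable section

open Complex Set Filter Topology MeasureTheory Metric
open scoped ArithmeticFunction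

/-- `FF x = log x - 1 - γ - DD x`, the error term in the asymptotics of `∫_1^x ψ(t) t⁻² dt`. -/
def FF (x : ℝ) : ℝ := Real.log x - (1 + Real.eulerMascheroniConstant) - DD x

/-- The exponents `β - 1` and `-β` attached to `ρ` and `1 - ρ` are `-dd ρ` and a number at most
`-1/2`, in some order. -/
lemma exp_pair_le (ρ : NZ) {u : ℝ} (hu : 0 < u) :
    Real.exp ((ρ.1.re - 1) * u) + Real.exp (-ρ.1.re * u) ≤
      Real.exp (-(dd ρ) * u) + Real.exp (-u / 2) := by
  rcases le_total ρ.1.re (1 - ρ.1.re) with h | h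
  · rw [dd, min_eq_left h, add_comm]
    gcongr
    nlinarith
  · rw [dd, min_eq_right h]
    have : Real.exp ((ρ.1.re - 1) * u) = Real.exp (-(1 - ρ.1.re) * u) := by ring_nf
    rw [this]
    gcongr
    nlinarith

/-- The explicit formula with absolute values taken in every term. The sum over zeros is
averaged with its image under `ρ ↦ 1 - ρ`: of the two exponentials only one can be larger than
`e^{-u/2}`, which gains a factor of two. -/
lemma abs_FF_le {u : ℝ} (hu : 0 < u) {b : NZ → ℝ} {B : ℝ} 
    (hb : ∀ ρ, Real.exp (-(dd ρ) * u) ≤ b ρ)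
    (hs : Summable fun ρ : NZ ↦ (mult ρ : ℝ) * (1 / ρ.1.im ^ 2 * b ρ))
    (hB : ∑' ρ : NZ, (mult ρ : ℝ) * (1 / ρ.1.im ^ 2 * b ρ) ≤ B) :
    |FF (Real.exp u)| ≤ 1 / 2 * B + 0.0237 * Real.exp (-u / 2) + 2.2 * Real.exp (-u) := by
  have hF : ((FF (Real.exp u) : ℝ) : ℂ) = -(∑' ρ : NZ, (mult ρ : ℂ) * (1 / (ρ.1 * (1 - ρ.1))) * cexp ((ρ.1 - 1) * u))
      + (∑' j : ℕ, (cj j : ℂ) * cexp (-(2 * j + 3) * u))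
      - Real.log (2 * Real.pi) * cexp (-1 * u) := by
    rw [← explicit_formula hu, FF, Real.log_exp]; push_cast; ring
  have hw : ∀ ρ : NZ, 0 < 1 / ρ.1.im ^ 2 := fun ρ ↦ one_div_pos.mpr (im_sq_pos ρ)
  have hsum1 : Summable fun ρ : NZ ↦ (mult ρ : ℝ) * (1 / ρ.1.im ^ 2) * Real.exp ((ρ.1.re - 1) * u) := by
    refine Summable.of_nonneg_of_le (fun ρ ↦ by have := hw ρ; positivity) (fun ρ ↦ ?_) summable_w
    have h1 : Real.exp ((ρ.1.re - 1) * u) ≤ 1 := Real.exp_le_one_iff.mpr (by nlinarith [ρ.re_lt])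
    have := hw ρ
    exact mul_le_of_le_one_right (by positivity) h1
  have hrefl : ∀ ρ : NZ, (mult (reflZ ρ) : ℝ) * (1 / (reflZ ρ).1.im ^ 2) * Real.exp (((reflZ ρ).1.re - 1) * u)
      = (mult ρ : ℝ) * (1 / ρ.1.im ^ 2) * Real.exp (-ρ.1.re * u) := fun ρ ↦ by
    rw [mult_refl, reflZ_coe]; simp
  have hsum2 : Summable fun ρ : NZ ↦ (mult ρ : ℝ) * (1 / ρ.1.im ^ 2) * Real.exp (-ρ.1.re * u) := by
    refine ((reflZ.summable_iff).mpr hsum1).congr fun ρ ↦ ?_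
    exact hrefl ρ
  have heq : ∑' ρ : NZ, (mult ρ : ℝ) * (1 / ρ.1.im ^ 2) * Real.exp (-ρ.1.re * u)
      = ∑' ρ : NZ, (mult ρ : ℝ) * (1 / ρ.1.im ^ 2) * Real.exp ((ρ.1.re - 1) * u) := by
    rw [← reflZ.tsum_eq (fun ρ : NZ ↦ (mult ρ : ℝ) * (1 / ρ.1.im ^ 2) * Real.exp ((ρ.1.re - 1) * u))]
    exact tsum_congr fun ρ ↦ (hrefl ρ).symm
  have hA : ‖∑' ρ : NZ, (mult ρ : ℂ) * (1 / (ρ.1 * (1 - ρ.1))) * cexp ((ρ.1 - 1) * u)‖ ≤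
      1 / 2 * B + 0.0237 * Real.exp (-u / 2) := by
    have h1 : ‖∑' ρ : NZ, (mult ρ : ℂ) * (1 / (ρ.1 * (1 - ρ.1))) * cexp ((ρ.1 - 1) * u)‖ ≤
        ∑' ρ : NZ, (mult ρ : ℝ) * (1 / ρ.1.im ^ 2) * Real.exp ((ρ.1.re - 1) * u) := by
      refine tsum_of_norm_bounded hsum1.hasSum fun ρ ↦ ?_
      rw [norm_mul, norm_mul, norm_exp, norm_natCast]
      have := norm_inv_le ρ
      have e : ((ρ.1 - 1) * (u:ℂ)).re = (ρ.1.re - 1) * u := by simp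
      rw [e]
      gcongr
    have h2 : ∑' ρ : NZ, (mult ρ : ℝ) * (1 / ρ.1.im ^ 2) * Real.exp ((ρ.1.re - 1) * u) +
        ∑' ρ : NZ, (mult ρ : ℝ) * (1 / ρ.1.im ^ 2) * Real.exp (-ρ.1.re * u) ≤
        ∑' ρ : NZ, (mult ρ : ℝ) * (1 / ρ.1.im ^ 2 * b ρ) +
          (∑' ρ : NZ, (mult ρ : ℝ) * (1 / ρ.1.im ^ 2)) * Real.exp (-u / 2) := by
      rw [← hsum1.tsum_add hsum2, ← tsum_mul_right, ← hs.tsum_add (summable_w.mul_right _)]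
      refine (hsum1.add hsum2).tsum_le_tsum (fun ρ ↦ ?_) (hs.add (summable_w.mul_right _))
      have h3 := exp_pair_le ρ hu
      have h4 := hb ρ
      have h5 : 0 ≤ (mult ρ : ℝ) * (1 / ρ.1.im ^ 2) := by have := hw ρ; positivity
      rw [← mul_add, ← mul_assoc, ← mul_add]
      exact mul_le_mul_of_nonneg_left (by linarith) h5
    have h6 : (∑' ρ : NZ, (mult ρ : ℝ) * (1 / ρ.1.im ^ 2)) * Real.exp (-u / 2) ≤ 0.0474 * Real.exp (-u / 2) := by
      gcongr
      exact tsum_w_le.trans (by linarith [cA_lt])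
    linarith
  have hT : ‖∑' j : ℕ, (cj j : ℂ) * cexp (-(2 * j + 3) * u)‖ ≤ 0.31 * Real.exp (-u) := by
    have hc : HasSum cj (1 - Real.log 2) := by exact_mod_cast hasSum_cj
    refine (tsum_of_norm_bounded (hc.mul_right (Real.exp (-u))) fun j ↦ ?_).trans ?_
    · rw [norm_mul, norm_exp, norm_real, Real.norm_of_nonneg (cj_pos j).le]
      have h2 : (-(2 * (j:ℂ) + 3) * (u:ℂ)).re ≤ -u := by
        simp
        have h0 : (0:ℝ) ≤ j := by positivity
        nlinarith [mul_nonneg h0 hu.le]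
      have := (cj_pos j).le
      gcongr
    · gcongr
      linarith [Real.log_two_gt_d9]
  have hE : ‖(Real.log (2 * Real.pi) : ℂ) * cexp (-1 * u)‖ ≤ 1.85 * Real.exp (-u) := by
    have e : (-1 * (u:ℂ)).re = -u := by simp
    rw [norm_mul, norm_exp, norm_real, e, Real.log_mul (by norm_num) Real.pi_ne_zero,
      Real.norm_of_nonneg (by linarith [Real.log_two_gt_d9, log_pi_gt])]
    gcongr
    linarith [Real.log_two_lt_d9, log_pi_lt]
  rw [← Real.norm_eq_abs, ← norm_real, hF]
  refine (norm_sub_le _ _).trans ?_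
  have := norm_add_le (-(∑' ρ : NZ, (mult ρ : ℂ) * (1 / (ρ.1 * (1 - ρ.1))) * cexp ((ρ.1 - 1) * u)))
    (∑' j : ℕ, (cj j : ℂ) * cexp (-(2 * j + 3) * u))
  rw [norm_neg] at this
  linarith [Real.exp_pos (-u)]

lemma exp_neg_le_of_nat (n : ℕ) {u : ℝ} (hu : (n:ℝ) ≤ u) : Real.exp (-u) ≤ (1 / 2.718) ^ n := by
  calc Real.exp (-u) ≤ Real.exp (-n) := by gcongr
    _ = (1 / Real.exp 1) ^ n := by rw [Real.exp_neg, one_div, inv_pow, ← Real.exp_nat_mul, mul_one]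
    _ ≤ _ := by
      gcongr
      linarith [Real.exp_one_gt_d9]

/-- `abs_FF_le` with `b = 1`. -/
lemma FF_triv {u : ℝ} (hu : 11 ≤ u) : |FF (Real.exp u)| ≤ 0.0239 := by
  have h := abs_FF_le (u := u) (by linarith) (b := fun _ ↦ 1) (B := 0.0474)
    (fun ρ ↦ Real.exp_le_one_iff.mpr (by nlinarith [dd_pos ρ]))
    (by simpa only [mul_one] using summable_w)
    (by simp only [mul_one]; exact tsum_w_le.trans (by linarith [cA_lt]))
  have h1 := exp_neg_le_of_nat 11 (u := u) (by exact_mod_cast hu)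
  have h2 := exp_neg_le_of_nat 5 (u := u / 2) (by push_cast; linarith)
  rw [← neg_div] at h2
  norm_num at h1 h2
  linarith

/-- `abs_FF_le` with `e^{-du} ≤ 1/(e d u)` and the bound of `summable_wd` for the sum of
`1/dd ρ`. -/
lemma FF_decay {u : ℝ} (hu : 20 ≤ u) : |FF (Real.exp u)| ≤ 0.8 / u := by
  have hu0 : 0 < u := by linarith
  have h := abs_FF_le (u := u) hu0 (b := fun ρ ↦ 1 / dd ρ * (1 / (2.718 * u))) (B := 4.323 * (1 / (2.718 * u)))
    (fun ρ ↦ by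
      have hd := dd_pos ρ
      have h1 := Real.add_one_le_exp (dd ρ * u - 1)
      have h2 : Real.exp (dd ρ * u - 1) * Real.exp 1 = Real.exp (dd ρ * u) := by
        rw [← Real.exp_add]; ring_nf
      have h4 : 2.718 * (dd ρ * u) ≤ Real.exp (dd ρ * u) := by
        rw [← h2]
        have : 0 < dd ρ * u := by positivity
        nlinarith [Real.exp_one_gt_d9]
      rw [neg_mul, Real.exp_neg, one_div_mul_one_div, one_div]
      refine inv_anti₀ (by positivity) ?_
      linarith)
    (by simpa only [mul_assoc] using summable_wd.1.mul_right (1 / (2.718 * u)))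
    (by
      have : ∀ ρ : NZ, (mult ρ : ℝ) * (1 / ρ.1.im ^ 2 * (1 / dd ρ * (1 / (2.718 * u)))) =
        (mult ρ : ℝ) * (1 / ρ.1.im ^ 2 * (1 / dd ρ)) * (1 / (2.718 * u)) := fun ρ ↦ by ring
      simp only [this]
      rw [tsum_mul_right]
      gcongr
      exact summable_wd.2)
  have h2 : Real.exp (-u / 2) ≤ 0.048 / u := by
    have h3 := Real.pow_div_factorial_le_exp (u / 2) (by linarith) 4
    rw [neg_div, Real.exp_neg, inv_le_comm₀ (Real.exp_pos _) (by positivity), inv_div]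
    refine le_trans ?_ h3
    rw [div_le_div_iff₀ (by norm_num) (by positivity)]
    norm_num [Nat.factorial]
    have : (20:ℝ) ^ 3 ≤ u ^ 3 := by gcongr
    nlinarith
  have h3 : Real.exp (-u) ≤ 0.00012 / u := by
    have e : Real.exp (-u) = Real.exp (-u / 2) * Real.exp (-u / 2) := by
      rw [← Real.exp_add]; ring_nf
    rw [e]
    refine (mul_le_mul h2 h2 (Real.exp_pos _).le (by positivity)).trans ?_
    rw [div_mul_div_comm, div_le_div_iff₀ (by positivity) hu0]
    nlinarith
  refine h.trans ?_
  have e : 1 / 2 * (4.323 * (1 / (2.718 * u))) = 4.323 / 5.436 / u := by field_simp; norm_num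
  rw [e]
  have : 4.323 / 5.436 / u + 0.0237 * (0.048 / u) + 2.2 * (0.00012 / u) ≤ 0.8 / u := by
    rw [← mul_div_assoc, ← mul_div_assoc, ← add_div, ← add_div]
    gcongr
    norm_num
  linarith

end

/-! ### From `FF` to the weighted prime power sum -/

noncomputable section

open Set Filter Topology MeasureTheory
open scoped ArithmeticFunction

/-- `hh u = 1 / (x log x)` at `x = e^u`. -/
def hh (u : ℝ) : ℝ := Real.exp (-u) / u

/-- `vv = 1/u + 1/u²`, so that `hh' = - e^{-u} vv`. -/
def vv (u : ℝ) : ℝ := 1 / u + 1 / u ^ 2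

/-- `TT u = ∑_{n ≤ e^u} Λ(n) (1/(n log n) - 1/(e^u u))`. -/
def TT (u : ℝ) : ℝ := ∑ n ∈ Finset.Ioc 0 ⌊Real.exp u⌋₊, Λ n * (hh (Real.log n) - hh u)

/-- `qq u = TT u - log u + 1/u`, which tends to `γ`. -/
def qq (u : ℝ) : ℝ := TT u - Real.log u + 1 / u

/-- `GG = qq + FF · vv` has the (right) derivative `FF · vv'`. -/
def GG (u : ℝ) : ℝ := qq u + FF (Real.exp u) * vv u

lemma hasDerivAt_hh {u : ℝ} (hu : 0 < u) : HasDerivAt hh (-(Real.exp (-u) * vv u)) u := by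
  have h := ((hasDerivAt_neg u).exp).div (hasDerivAt_id u) hu.ne'
  refine h.congr_deriv ?_
  simp only [id, vv]
  field_simp
  ring

lemma hh_antitone : AntitoneOn hh (Ioi 0) := by
  intro a ha b hb hab
  have ha : 0 < a := ha
  unfold hh
  gcongr

lemma expneg_antitone : AntitoneOn (fun u : ℝ ↦ Real.exp (-u)) (Ioi 0) := by
  intro a ha b hb hab
  simp only []
  gcongr

/-- Right derivative of a truncated decreasing function. -/
lemma max_deriv {k : ℝ → ℝ} (hk : AntitoneOn k (Ioi 0)) {c u d : ℝ} (hc : 0 < c) (hu : 0 < u)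
    (hd : HasDerivAt k d u) :
    HasDerivWithinAt (fun w ↦ max (k c - k w) 0) (if c ≤ u then -d else 0) (Ici u) u := by
  split_ifs with h
  · have h1 : HasDerivWithinAt (fun w ↦ k c - k w) (-d) (Ici u) u :=
      (hd.const_sub (k c)).hasDerivWithinAt
    refine h1.congr (fun w hw ↦ ?_) ?_
    · have : u ≤ w := hw
      exact max_eq_left (sub_nonneg.mpr (hk hc (show 0 < w by linarith) (by linarith)))
    · exact max_eq_left (sub_nonneg.mpr (hk hc hu h))
  · push Not at h
    have : HasDerivAt (fun w ↦ max (k c - k w) 0) 0 u := by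
      refine (hasDerivAt_const u (0:ℝ)).congr_of_eventuallyEq ?_
      filter_upwards [Ioo_mem_nhds hu h] with w hw
      exact max_eq_right (sub_nonpos.mpr (hk hw.1 hc hw.2.le))
    exact this.hasDerivWithinAt

/-- Truncated sums agree with the floor sums. -/
lemma sum_floor_eq {k : ℝ → ℝ} (hk : AntitoneOn k (Ioi 0)) {u b : ℝ} (hu : 0 < u) (hub : u ≤ b) :
    ∑ n ∈ Finset.Ioc 0 ⌊Real.exp u⌋₊, Λ n * (k (Real.log n) - k u) =
    ∑ n ∈ Finset.Ioc 1 ⌊Real.exp b⌋₊, Λ n * max (k (Real.log n) - k u) 0 := by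
  have hsub : Finset.Ioc 1 ⌊Real.exp u⌋₊ ⊆ Finset.Ioc 1 ⌊Real.exp b⌋₊ :=
    Finset.Ioc_subset_Ioc_right (Nat.floor_mono (Real.exp_le_exp.mpr hub))
  have hsub2 : Finset.Ioc 1 ⌊Real.exp u⌋₊ ⊆ Finset.Ioc 0 ⌊Real.exp u⌋₊ :=
    Finset.Ioc_subset_Ioc_left (by norm_num)
  rw [← Finset.sum_subset hsub, ← Finset.sum_subset hsub2]
  · refine Finset.sum_congr rfl fun n hn ↦ ?_
    rw [Finset.mem_Ioc] at hn
    have h1 : (n:ℝ) ≤ Real.exp u := (Nat.le_floor_iff (Real.exp_pos u).le).mp hn.2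
    have hn1 : (1:ℝ) < n := by exact_mod_cast hn.1
    rw [max_eq_left]
    refine sub_nonneg.mpr (hk (Real.log_pos hn1) hu ?_)
    rwa [Real.log_le_iff_le_exp (by linarith)]
  · intro n hn hn'
    rw [Finset.mem_Ioc] at hn hn'
    have : n = 1 := by omega
    simp [this]
  · intro n hn hn'
    rw [Finset.mem_Ioc] at hn hn'
    have h1 : ¬ n ≤ ⌊Real.exp u⌋₊ := by tauto
    rw [Nat.le_floor_iff (Real.exp_pos u).le, not_le] at h1
    have hn1 : (1:ℝ) < n := by exact_mod_cast hn.1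
    rw [max_eq_right, mul_zero]
    refine sub_nonpos.mpr (hk hu (Real.log_pos hn1) ?_)
    rw [Real.le_log_iff_exp_le (by linarith)]; exact h1.le

lemma DD_eq_sum {u b : ℝ} (hu : 0 < u) (hub : u ≤ b) : DD (Real.exp u) =
    ∑ n ∈ Finset.Ioc 1 ⌊Real.exp b⌋₊, Λ n * max (Real.exp (-Real.log n) - Real.exp (-u)) 0 := by
  rw [← sum_floor_eq expneg_antitone hu hub, DD]
  refine Finset.sum_congr rfl fun n hn ↦ ?_
  rw [Finset.mem_Ioc] at hn
  have hn1 : (0:ℝ) < n := by exact_mod_cast hn.1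
  rw [Real.exp_neg, Real.exp_neg, Real.exp_log hn1, one_div, one_div]

/-- The right derivative of `DD (e^u)` as a sum. -/
def dsum (N : ℕ) (u : ℝ) : ℝ :=
  ∑ n ∈ Finset.Ioc 1 N, Λ n * (if Real.log n ≤ u then Real.exp (-u) else 0)

/-- Partial summation. The jumps of the sums cancel in the continuous function `GG`, whose right
derivative is `FF · vv'` with `|vv'| = 1/u² + 2/u³`; the claim is the mean value inequality for
right derivatives. -/
lemma GG_diff {a b : ℝ} (ha : 0 < a) (hab : a ≤ b) {B B' : ℝ → ℝ}
    (hB : ∀ u ∈ Icc a b, HasDerivAt B (B' u) u)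
    (hF : ∀ u ∈ Ico a b, |FF (Real.exp u)| * (1 / u ^ 2 + 2 / u ^ 3) ≤ B' u) :
    |GG b - GG a| ≤ B b - B a := by
  set N := ⌊Real.exp b⌋₊
  set TN : ℝ → ℝ := fun u ↦ ∑ n ∈ Finset.Ioc 1 N, Λ n * max (hh (Real.log n) - hh u) 0 with hTN
  set DN : ℝ → ℝ := fun u ↦ ∑ n ∈ Finset.Ioc 1 N, Λ n *
    max (Real.exp (-Real.log n) - Real.exp (-u)) 0 with hDN
  set GN : ℝ → ℝ := fun u ↦ TN u - Real.log u + 1 / u +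
    (u - (1 + Real.eulerMascheroniConstant) - DN u) * vv u with hGN
  have hFN : ∀ u ∈ Icc a b, FF (Real.exp u) = u - (1 + Real.eulerMascheroniConstant) - DN u := by
    intro u hu
    have hu0 : 0 < u := by linarith [hu.1]
    rw [FF, Real.log_exp, DD_eq_sum hu0 hu.2]
  have hG : ∀ u ∈ Icc a b, GG u = GN u := by
    intro u hu
    have hu0 : 0 < u := by linarith [hu.1]
    rw [GG, qq, TT, sum_floor_eq hh_antitone hu0 hu.2, hFN u hu]
  have hlogn : ∀ n ∈ Finset.Ioc 1 N, 0 < Real.log n := fun n hn ↦ by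
    rw [Finset.mem_Ioc] at hn
    exact Real.log_pos (by exact_mod_cast hn.1)
  have dT : ∀ u, 0 < u → HasDerivWithinAt TN (dsum N u * vv u) (Ici u) u := by
    intro u hu
    have h := HasDerivWithinAt.fun_sum (u := Finset.Ioc 1 N) (x := u) (s := Ici u) (fun n hn ↦
      (max_deriv hh_antitone (hlogn n hn) hu (hasDerivAt_hh hu)).const_mul (Λ n))
    refine h.congr_deriv ?_
    rw [dsum, Finset.sum_mul]
    refine Finset.sum_congr rfl fun n _ ↦ ?_
    split_ifs <;> ring
  have dD : ∀ u, 0 < u → HasDerivWithinAt DN (dsum N u) (Ici u) u := by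
    intro u hu
    have h := HasDerivWithinAt.fun_sum (u := Finset.Ioc 1 N) (x := u) (s := Ici u) (fun n hn ↦
      (max_deriv expneg_antitone (hlogn n hn) hu ((hasDerivAt_neg u).exp)).const_mul (Λ n))
    refine h.congr_deriv ?_
    rw [dsum]
    refine Finset.sum_congr rfl fun n _ ↦ ?_
    split_ifs <;> ring
  have dV : ∀ u, 0 < u → HasDerivAt vv (-(1 / u ^ 2 + 2 / u ^ 3)) u := by
    intro u hu
    have h1 := (hasDerivAt_const u (1:ℝ)).div (hasDerivAt_id u) hu.ne'
    have h2 := (hasDerivAt_const u (1:ℝ)).div ((hasDerivAt_id u).pow 2) (pow_ne_zero 2 hu.ne')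
    refine (h1.add h2).congr_deriv ?_
    simp only [Pi.pow_apply, id]
    field_simp
    ring
  have dG : ∀ u, 0 < u → HasDerivWithinAt GN
      (-((u - (1 + Real.eulerMascheroniConstant) - DN u) * (1 / u ^ 2 + 2 / u ^ 3))) (Ici u) u := by
    intro u hu
    have h1 := (hasDerivAt_const u (1:ℝ)).div (hasDerivAt_id u) hu.ne'
    have h := (((dT u hu).sub (Real.hasDerivAt_log hu.ne').hasDerivWithinAt).add
      h1.hasDerivWithinAt).add ((((hasDerivAt_id u).hasDerivWithinAt.sub_const
        (1 + Real.eulerMascheroniConstant)).sub (dD u hu)).mul (dV u hu).hasDerivWithinAt)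
    refine h.congr_deriv ?_
    simp only [id, vv, Pi.sub_apply]
    field_simp
    ring
  have hcont : ContinuousOn GN (Icc a b) := by
    have hne : ∀ u ∈ Icc a b, u ≠ 0 := fun u hu ↦ by linarith [hu.1]
    have hne2 : ∀ u ∈ Icc a b, u ^ 2 ≠ 0 := fun u hu ↦ pow_ne_zero 2 (hne u hu)
    simp only [hGN, hTN, hDN, hh, vv]
    fun_prop (disch := assumption)
  have key := image_norm_le_of_norm_deriv_right_le_deriv_boundary' (f := fun u ↦ GN u - GN a)
    (f' := fun u ↦ -((u - (1 + Real.eulerMascheroniConstant) - DN u) * (1 / u ^ 2 + 2 / u ^ 3)))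
    (a := a) (b := b) (hcont.sub continuousOn_const)
    (fun u hu ↦ (dG u (by linarith [hu.1])).sub_const _)
    (B := fun u ↦ B u - B a) (B' := B') (by simp)
    (fun u hu ↦ ((hB u hu).continuousAt.continuousWithinAt).sub continuousWithinAt_const)
    (fun u hu ↦ ((hB u (Ico_subset_Icc_self hu)).sub_const _).hasDerivWithinAt)
    (fun u hu ↦ by
      have hu0 : 0 < u := by linarith [hu.1]
      have := hF u hu
      rw [hFN u (Ico_subset_Icc_self hu)] at this
      rw [norm_neg, norm_mul, Real.norm_eq_abs, Real.norm_of_nonneg (by positivity)]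
      exact this) (right_mem_Icc.mpr hab)
  rw [hG b (right_mem_Icc.mpr hab), hG a (left_mem_Icc.mpr hab)]
  exact key

end

/-! ### The constant in Mertens' theorem -/

noncomputable section

open Set Filter Topology MeasureTheory
open scoped ArithmeticFunction

/-- Coefficients of `log ζ`. -/
def la (n : ℕ) : ℂ := ((Λ n / Real.log n : ℝ) : ℂ)

lemma la_nonneg (n : ℕ) : 0 ≤ Λ n / Real.log n :=
  div_nonneg ArithmeticFunction.vonMangoldt_nonneg (Real.log_natCast_nonneg n)

lemma abscissa_la : LSeries.abscissaOfAbsConv la ≤ 1 := by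
  refine LSeries.abscissaOfAbsConv_le_of_le_const ⟨1, fun n _ ↦ ?_⟩
  rw [la, Complex.norm_real, Real.norm_of_nonneg (la_nonneg n)]
  exact div_le_one_of_le₀ ArithmeticFunction.vonMangoldt_le_log (Real.log_natCast_nonneg n)

lemma abscissa_lt {s : ℂ} (hs : 1 < s.re) : LSeries.abscissaOfAbsConv la < s.re :=
  abscissa_la.trans_lt (by exact_mod_cast hs)

lemma logMul_la : LSeries.logMul la = fun n ↦ ((Λ n : ℝ) : ℂ) := by
  funext n
  rw [LSeries.logMul, la, ← Complex.natCast_log, ← Complex.ofReal_mul]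
  congr 1
  rcases eq_or_ne (Real.log n) 0 with h | h
  · have : n = 0 ∨ n = 1 := by
      rw [Real.log_eq_zero] at h
      rcases h with h | h | h
      · left; exact_mod_cast h
      · right; exact_mod_cast h
      · have : (0:ℝ) ≤ n := by positivity
        linarith
    rcases this with rfl | rfl <;> simp
  · field_simp

/-- The quotient `exp (∑ la n n^{-s}) / ζ(s)` has derivative zero and tends to `1` as
`s → +∞` along the reals. -/
lemma exp_la {s : ℂ} (hs : 1 < s.re) : Complex.exp (LSeries la s) = riemannZeta s := by
  set S : Set ℂ := {s : ℂ | 1 < s.re} with hS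
  have hSo : IsOpen S := isOpen_lt continuous_const Complex.continuous_re
  have hSc : IsPreconnected S := (convex_halfSpace_re_gt 1).isPreconnected
  set g : ℂ → ℂ := fun s ↦ Complex.exp (LSeries la s) / riemannZeta s with hg
  have hd : ∀ z ∈ S, HasDerivAt g 0 z := by
    intro z hz
    have hz : 1 < z.re := hz
    have hz1 : z ≠ 1 := fun h ↦ by rw [h] at hz; norm_num at hz
    have hne : riemannZeta z ≠ 0 := riemannZeta_ne_zero_of_one_le_re hz.le
    have h1 := (LSeries_hasDerivAt (abscissa_lt hz)).cexp
    have h2 := (differentiableAt_riemannZeta hz1).hasDerivAt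
    refine (h1.div h2 hne).congr_deriv ?_
    rw [logMul_la]
    have h3 := VM_eq hz
    rw [VM] at h3
    rw [h3]
    field_simp
    ring
  have hconst : ∀ x ∈ S, ∀ y ∈ S, g x = g y := fun x hx y hy ↦ hSo.is_const_of_deriv_eq_zero hSc
    (fun z hz ↦ (hd z hz).differentiableAt.differentiableWithinAt) (fun z hz ↦ (hd z hz).deriv) hx hy
  have hlim : Tendsto (fun x : ℝ ↦ g x) atTop (𝓝 1) := by
    have h1 : Tendsto (fun x : ℝ ↦ LSeries la x) atTop (𝓝 0) := by
      have := LSeries.tendsto_atTop (f := la) (abscissa_la.trans_lt (by exact EReal.coe_lt_top 1))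
      simpa [la] using this
    have h2 : Tendsto (fun x : ℝ ↦ riemannZeta x) atTop (𝓝 1) := by
      have := LSeries.tendsto_atTop (f := 1) (by
        rw [LSeries.abscissaOfAbsConv_one]; exact EReal.coe_lt_top 1)
      refine this.congr' ?_
      filter_upwards [eventually_gt_atTop 1] with x hx
      exact LSeries_one_eq_riemannZeta (by simpa using hx)
    have h3 := (Complex.continuous_exp.tendsto 0).comp h1
    rw [Complex.exp_zero] at h3
    have h4 := h3.div h2 one_ne_zero
    rw [div_one] at h4
    exact h4
  have hgs : g s = 1 := by
    refine tendsto_nhds_unique ?_ hlim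
    refine tendsto_const_nhds.congr' ?_
    filter_upwards [eventually_gt_atTop 1] with x hx
    exact hconst s hs x (show 1 < (x:ℂ).re by simpa using hx)
  have hne : riemannZeta s ≠ 0 := riemannZeta_ne_zero_of_one_le_re hs.le
  rw [hg] at hgs
  exact (div_eq_one_iff_eq hne).mp hgs

/-- `log ζ(1 + δ)` as a real series. -/
def Lr (δ : ℝ) : ℝ := ∑' n : ℕ, Λ n * hh (Real.log n) * (n:ℝ) ^ (-δ)

lemma la_term {δ : ℝ} (n : ℕ) : LSeries.term la ((1 + δ : ℝ) : ℂ) n =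
    ((Λ n * hh (Real.log n) * (n:ℝ) ^ (-δ) : ℝ) : ℂ) := by
  rcases Nat.eq_zero_or_pos n with h | h
  · simp [h]
  have hn : (0:ℝ) < n := by exact_mod_cast h
  rw [LSeries.term_of_ne_zero h.ne', la, ← Complex.ofReal_natCast, ← Complex.ofReal_cpow hn.le,
    ← Complex.ofReal_div]
  congr 1
  rw [hh, Real.exp_neg, Real.exp_log hn, Real.rpow_add hn, Real.rpow_neg hn.le, Real.rpow_one]
  have : (n:ℝ) ^ δ ≠ 0 := (Real.rpow_pos_of_pos hn _).ne'
  rcases eq_or_ne (Real.log n) 0 with h | h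
  · simp [h]
  · field_simp

lemma summable_Lr {δ : ℝ} (hδ : 0 < δ) :
    Summable fun n : ℕ ↦ Λ n * hh (Real.log n) * (n:ℝ) ^ (-δ) := by
  have h : LSeriesSummable la ((1 + δ : ℝ) : ℂ) :=
    LSeriesSummable_of_abscissaOfAbsConv_lt_re (abscissa_lt (by simpa using hδ))
  rw [LSeriesSummable] at h
  have e : LSeries.term la ((1 + δ : ℝ) : ℂ) =
    fun n ↦ ((Λ n * hh (Real.log n) * (n:ℝ) ^ (-δ) : ℝ) : ℂ) := funext la_term
  rw [e] at h
  exact_mod_cast h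

lemma exp_Lr {δ : ℝ} (hδ : 0 < δ) : ((Real.exp (Lr δ) : ℝ) : ℂ) = riemannZeta (1 + δ) := by
  have h := exp_la (s := ((1 + δ : ℝ) : ℂ)) (by simpa using hδ)
  rw [LSeries, tsum_congr la_term, ← Complex.ofReal_tsum] at h
  rw [Complex.ofReal_exp, Lr, h]
  push_cast; rfl

/-- `log ζ(1 + δ) = -log δ + o(1)`, from the simple pole of `ζ` with residue one. -/
lemma tendsto_Lr : Tendsto (fun δ ↦ Lr δ + Real.log δ) (𝓝[>] 0) (𝓝 0) := by
  have h1 : Tendsto (fun δ : ℝ ↦ (1 + δ : ℂ)) (𝓝[>] 0) (𝓝[≠] 1) := by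
    refine tendsto_nhdsWithin_iff.mpr ⟨?_, ?_⟩
    · have : Continuous fun δ : ℝ ↦ (1 + δ : ℂ) := by fun_prop
      have h := this.tendsto 0
      simp only [Complex.ofReal_zero, add_zero] at h
      exact h.mono_left nhdsWithin_le_nhds
    · filter_upwards [self_mem_nhdsWithin] with δ hδ
      have : (δ:ℂ) ≠ 0 := by exact_mod_cast (ne_of_gt hδ)
      simpa using this
  have h2 := riemannZeta_residue_one.comp h1
  have h3 : Tendsto (fun δ : ℝ ↦ δ * Real.exp (Lr δ)) (𝓝[>] 0) (𝓝 1) := by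
    have h4 : Tendsto (fun δ : ℝ ↦ ((δ * Real.exp (Lr δ) : ℝ) : ℂ)) (𝓝[>] 0) (𝓝 ((1:ℝ):ℂ)) := by
      rw [Complex.ofReal_one]
      refine h2.congr' ?_
      filter_upwards [self_mem_nhdsWithin] with δ hδ
      simp only [Function.comp]
      rw [Complex.ofReal_mul, exp_Lr hδ, add_sub_cancel_left]
    exact_mod_cast (Complex.continuous_re.tendsto _).comp h4
  have h5 := (Real.continuousAt_log one_ne_zero).tendsto.comp h3
  rw [Real.log_one] at h5
  refine h5.congr' ?_
  filter_upwards [self_mem_nhdsWithin] with δ hδ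
  simp only [Function.comp]
  rw [Real.log_mul (ne_of_gt hδ) (Real.exp_pos _).ne', Real.log_exp, add_comm]

/-- `Γ'(1) = -γ`, as an integral. -/
lemma integral_exp_log : IntegrableOn (fun t ↦ Real.exp (-t) * Real.log t) (Ioi 0) ∧
    ∫ t in Ioi (0:ℝ), Real.exp (-t) * Real.log t = -Real.eulerMascheroniConstant := by
  have h := Complex.hasDerivAt_GammaIntegral (s := 1) (by norm_num)
  have h2 : HasDerivAt Complex.GammaIntegral (-Real.eulerMascheroniConstant) 1 := by
    refine Complex.hasDerivAt_Gamma_one.congr_of_eventuallyEq ?_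
    have : IsOpen {s : ℂ | 0 < s.re} := isOpen_lt continuous_const Complex.continuous_re
    filter_upwards [this.mem_nhds (show 0 < (1:ℂ).re by norm_num)] with s hs
    exact (Complex.Gamma_eq_integral hs).symm
  have h3 := h.unique h2
  have e : ∀ t : ℝ, (t:ℂ) ^ ((1:ℂ) - 1) * ((Real.log t : ℝ) * (Real.exp (-t) : ℝ)) =
      ((Real.exp (-t) * Real.log t : ℝ) : ℂ) := fun t ↦ by
    rw [sub_self, Complex.cpow_zero]; push_cast; ring
  simp only [e] at h3
  rw [integral_complex_ofReal] at h3
  have h4 : ∫ t in Ioi (0:ℝ), Real.exp (-t) * Real.log t = -Real.eulerMascheroniConstant := by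
    exact_mod_cast h3
  refine ⟨?_, h4⟩
  by_contra hni
  rw [integral_undef hni] at h4
  linarith [gamma_gt]

end

noncomputable section

open Set Filter Topology MeasureTheory
open scoped ArithmeticFunction

lemma hh_nonneg {u : ℝ} (hu : 0 ≤ u) : 0 ≤ hh u := div_nonneg (Real.exp_pos _).le hu

lemma ww_nonneg (n : ℕ) : 0 ≤ Λ n * hh (Real.log n) :=
  mul_nonneg ArithmeticFunction.vonMangoldt_nonneg (hh_nonneg (Real.log_natCast_nonneg n))

lemma exp_integral {δ c : ℝ} (hδ : 0 < δ) :
    ∫ u in Ici c, δ * Real.exp (-δ * u) = Real.exp (-δ * c) := by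
  rw [integral_Ici_eq_integral_Ioi, integral_const_mul, integral_exp_mul_Ioi (by linarith)]
  field_simp

/-- Laplace transform of the lower bound for `TT`, on a finite range. -/
lemma laplace_fin {L U δ M : ℝ} (hU : 1 ≤ U) (hT : ∀ u ≥ U, Real.log u + L ≤ TT u) (hδ : 0 < δ)
    (hI : IntegrableOn (fun u ↦ δ * Real.exp (-δ * u) * (Real.log u + L)) (Ioi U)) :
    ∫ u in Ioc U M, δ * Real.exp (-δ * u) * (Real.log u + L) ≤ Lr δ := by
  set S := Finset.Ioc 0 ⌊Real.exp M⌋₊ with hS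
  have hE : ∀ c, IntegrableOn (fun u ↦ δ * Real.exp (-δ * u)) (Ici c) := fun c ↦ by
    rw [integrableOn_Ici_iff_integrableOn_Ioi]
    exact (integrableOn_exp_mul_Ioi (by linarith) c).const_mul δ
  have hintg : ∀ n : ℕ, IntegrableOn (fun u ↦ Λ n * hh (Real.log n) *
      (Ici (Real.log n)).indicator (fun u ↦ δ * Real.exp (-δ * u)) u) (Ioc U M) := fun n ↦
    (((hE U).mono_set (fun x hx ↦ hx.1.le)).indicator measurableSet_Ici).const_mul _
  calc ∫ u in Ioc U M, δ * Real.exp (-δ * u) * (Real.log u + L)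
      ≤ ∫ u in Ioc U M, ∑ n ∈ S, Λ n * hh (Real.log n) *
          (Ici (Real.log n)).indicator (fun u ↦ δ * Real.exp (-δ * u)) u := by
        refine setIntegral_mono_on (hI.mono_set (fun x hx ↦ hx.1))
          (integrable_finsetSum _ fun n _ ↦ hintg n) measurableSet_Ioc fun u hu ↦ ?_
        have hu0 : 0 < u := by linarith [hu.1]
        have hpos : 0 ≤ δ * Real.exp (-δ * u) := by positivity
        calc δ * Real.exp (-δ * u) * (Real.log u + L) ≤ δ * Real.exp (-δ * u) * TT u :=
              mul_le_mul_of_nonneg_left (hT u hu.1.le) hpos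
          _ ≤ δ * Real.exp (-δ * u) * ∑ n ∈ Finset.Ioc 0 ⌊Real.exp u⌋₊, Λ n * hh (Real.log n) := by
              refine mul_le_mul_of_nonneg_left (Finset.sum_le_sum fun n _ ↦ ?_) hpos
              exact mul_le_mul_of_nonneg_left (by linarith [hh_nonneg hu0.le])
                ArithmeticFunction.vonMangoldt_nonneg
          _ = ∑ n ∈ Finset.Ioc 0 ⌊Real.exp u⌋₊, Λ n * hh (Real.log n) *
                (Ici (Real.log n)).indicator (fun u ↦ δ * Real.exp (-δ * u)) u := by
              rw [Finset.mul_sum]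
              refine Finset.sum_congr rfl fun n hn ↦ ?_
              rw [Finset.mem_Ioc] at hn
              have h1 : (n:ℝ) ≤ Real.exp u := (Nat.le_floor_iff (Real.exp_pos u).le).mp hn.2
              have h2 : u ∈ Ici (Real.log n) := by
                have : (0:ℝ) < n := by exact_mod_cast hn.1
                exact (Real.log_le_iff_le_exp this).mpr h1
              rw [indicator_of_mem h2]; ring
          _ ≤ _ := by
              refine Finset.sum_le_sum_of_subset_of_nonneg ?_ fun n _ _ ↦ ?_
              · exact Finset.Ioc_subset_Ioc_right (Nat.floor_mono (Real.exp_le_exp.mpr hu.2))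
              · exact mul_nonneg (ww_nonneg n) (indicator_nonneg (fun _ _ ↦ by positivity) _)
    _ = ∑ n ∈ S, Λ n * hh (Real.log n) * ∫ u in Ioc U M,
          (Ici (Real.log n)).indicator (fun u ↦ δ * Real.exp (-δ * u)) u := by
        rw [integral_finsetSum _ fun n _ ↦ hintg n]
        exact Finset.sum_congr rfl fun n _ ↦ integral_const_mul _ _
    _ ≤ ∑ n ∈ S, Λ n * hh (Real.log n) * (n:ℝ) ^ (-δ) := by
        refine Finset.sum_le_sum fun n hn ↦ mul_le_mul_of_nonneg_left ?_ (ww_nonneg n)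
        rw [setIntegral_indicator measurableSet_Ici]
        refine (setIntegral_mono_set (hE (Real.log n)) (Eventually.of_forall fun u ↦ ?_)
          (LE.le.eventuallyLE inter_subset_right)).trans ?_
        · show 0 ≤ δ * Real.exp (-δ * u)
          positivity
        · rw [exp_integral hδ]
          have : (0:ℝ) < n := by exact_mod_cast (Finset.mem_Ioc.mp hn).1
          rw [Real.rpow_def_of_pos this, mul_comm]
    _ ≤ Lr δ := (summable_Lr hδ).sum_le_tsum _ fun n _ ↦
        mul_nonneg (ww_nonneg n) (Real.rpow_nonneg (Nat.cast_nonneg n) _)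

/-- An Abelian argument: `Lr δ` is at least `∫ δ e^{-δu} (log u + L) du`, which is
`-log δ - γ + L + o(1)`, whereas `Lr δ = -log δ + o(1)` as `δ → 0`. -/
lemma mertens_le {L U : ℝ} (hU : 1 ≤ U) (hT : ∀ u ≥ U, Real.log u + L ≤ TT u) :
    L ≤ Real.eulerMascheroniConstant := by
  obtain ⟨hintg, hval⟩ := integral_exp_log
  set J : ℝ → ℝ := fun x ↦ ∫ t in Ioi x, Real.exp (-t) * Real.log t with hJ
  have hexp : IntegrableOn (fun t : ℝ ↦ Real.exp (-t)) (Ioi 0) := integrableOn_exp_neg_Ioi 0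
  have key : ∀ δ > 0, J (δ * U) + (L - Real.log δ) * Real.exp (-(δ * U)) ≤ Lr δ := by
    intro δ hδ
    have hsub : Ioi (δ * U) ⊆ Ioi (0:ℝ) := Ioi_subset_Ioi (by positivity)
    set k : ℝ → ℝ := fun t ↦ Real.exp (-t) * Real.log t + (L - Real.log δ) * Real.exp (-t) with hk
    have hk1 : IntegrableOn k (Ioi (δ * U)) :=
      (hintg.mono_set hsub).add ((hexp.mono_set hsub).const_mul _)
    have hk2 : IntegrableOn (fun u ↦ δ * k (δ * u)) (Ioi U) :=
      ((integrableOn_Ioi_comp_mul_left_iff k U hδ).mpr hk1).const_mul δ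
    have heq : EqOn (fun u ↦ δ * k (δ * u))
        (fun u ↦ δ * Real.exp (-δ * u) * (Real.log u + L)) (Ioi U) := by
      intro u hu
      have hu0 : 0 < u := by have : U < u := hu; linarith
      simp only [hk, Real.log_mul hδ.ne' hu0.ne', neg_mul]
      ring
    have hI := hk2.congr_fun heq measurableSet_Ioi
    have hval2 : ∫ u in Ioi U, δ * Real.exp (-δ * u) * (Real.log u + L) =
        J (δ * U) + (L - Real.log δ) * Real.exp (-(δ * U)) := by
      rw [← setIntegral_congr_fun measurableSet_Ioi heq, integral_const_mul,
        integral_comp_mul_left_Ioi k U hδ, smul_eq_mul, mul_inv_cancel_left₀ hδ.ne', hk,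
        integral_add (hintg.mono_set hsub) ((hexp.mono_set hsub).const_mul _), integral_const_mul,
        integral_exp_neg_Ioi]
    rw [← hval2]
    refine le_of_tendsto (intervalIntegral_tendsto_integral_Ioi U hI tendsto_id) ?_
    filter_upwards [eventually_ge_atTop U] with M hM
    rw [id, intervalIntegral.integral_of_le hM]
    exact laplace_fin hU hT hδ hI
  have hdU : Tendsto (fun δ : ℝ ↦ δ * U) (𝓝[>] 0) (𝓝 0) := by
    have : Tendsto (fun δ : ℝ ↦ δ * U) (𝓝 0) (𝓝 (0 * U)) := tendsto_id.mul_const U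
    rw [zero_mul] at this
    exact this.mono_left nhdsWithin_le_nhds
  have hJt : Tendsto (fun δ ↦ J (δ * U)) (𝓝[>] 0) (𝓝 (-Real.eulerMascheroniConstant)) := by
    have h1 := (aecover_Ioi_of_Ioi (μ := volume) hdU).integral_tendsto_of_countably_generated
      hintg
    rw [hval] at h1
    refine h1.congr' ?_
    filter_upwards [self_mem_nhdsWithin] with δ hδ
    have hδ : 0 < δ := hδ
    rw [hJ, Measure.restrict_restrict measurableSet_Ioi, Ioi_inter_Ioi, max_eq_left (by positivity)]
  have hlog : Tendsto (fun δ ↦ Real.log δ * (1 - Real.exp (-(δ * U)))) (𝓝[>] 0) (𝓝 0) := by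
    have h1 : Tendsto (fun δ : ℝ ↦ Real.log δ * δ * U) (𝓝[>] 0) (𝓝 0) := by
      have := ((Real.continuous_mul_log.tendsto 0).mono_left
        (nhdsWithin_le_nhds (s := Ioi (0:ℝ)))).mul_const U
      simp only [zero_mul] at this
      exact this.congr fun δ ↦ by ring
    refine tendsto_of_tendsto_of_tendsto_of_le_of_le' h1 tendsto_const_nhds ?_ ?_
    · filter_upwards [Ioo_mem_nhdsGT (zero_lt_one' ℝ)] with δ hδ
      rw [mul_assoc]
      refine mul_le_mul_of_nonpos_left ?_ (Real.log_nonpos hδ.1.le hδ.2.le)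
      linarith [Real.add_one_le_exp (-(δ * U))]
    · filter_upwards [Ioo_mem_nhdsGT (zero_lt_one' ℝ)] with δ hδ
      refine mul_nonpos_of_nonpos_of_nonneg (Real.log_nonpos hδ.1.le hδ.2.le) ?_
      have : 0 < δ * U := mul_pos hδ.1 (by linarith)
      linarith [Real.exp_le_one_iff.mpr (by linarith : -(δ * U) ≤ 0)]
  have hee : Tendsto (fun δ ↦ L * Real.exp (-(δ * U))) (𝓝[>] 0) (𝓝 L) := by
    have := ((Real.continuous_exp.tendsto _).comp hdU.neg).const_mul L
    simpa using this
  have hL := (hJt.add hee).add hlog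
  have hfin := le_of_tendsto_of_tendsto hL tendsto_Lr (by
    filter_upwards [self_mem_nhdsWithin] with δ hδ
    have := key δ hδ
    linarith)
  linarith

end

/-! ### Upper bounds for `qq` -/

noncomputable section

open Set Filter Topology MeasureTheory
open scoped ArithmeticFunction

/-- By `GG_diff` the function `GG` stays above `GG a + B a` up to `o(1)`; if this exceeded `γ`,
then so would the constant in a lower bound for `TT`, against `mertens_le`. -/
lemma GG_limit {a : ℝ} (ha : 11 ≤ a) {B B' : ℝ → ℝ}
    (hB : ∀ u ≥ a, HasDerivAt B (B' u) u) (hB0 : ∀ u ≥ a, B u ≤ 0)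
    (hF : ∀ u ≥ a, |FF (Real.exp u)| * (1 / u ^ 2 + 2 / u ^ 3) ≤ B' u) :
    GG a + B a ≤ Real.eulerMascheroniConstant := by
  refine le_of_forall_pos_sub_le fun ε hε ↦ ?_
  refine mertens_le (U := max a (2 / ε)) (by linarith [le_max_left a (2 / ε)]) fun u hu ↦ ?_
  have hau : a ≤ u := (le_max_left _ _).trans hu
  have hεu : 2 / ε ≤ u := (le_max_right _ _).trans hu
  have hu0 : 0 < u := by linarith
  have h1 := GG_diff (by linarith : (0:ℝ) < a) hau (fun w hw ↦ hB w hw.1) (fun w hw ↦ hF w hw.1)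
  have h2 := (abs_le.mp h1).1
  have h3 := hB0 u hau
  have h4 := FF_triv (by linarith : 11 ≤ u)
  have hinv : 0 < 1 / u := by positivity
  have h5 : 1 / u ≤ 1 / 11 := one_div_le_one_div_of_le (by norm_num) (by linarith)
  have hv : vv u ≤ 2 * (1 / u) := by
    have : 1 / u ^ 2 = (1 / u) * (1 / u) := by field_simp
    rw [vv, this]
    nlinarith
  have hv0 : 0 ≤ vv u := by unfold vv; positivity
  have h6 : FF (Real.exp u) * vv u ≤ 0.0239 * (2 * (1 / u)) := by
    refine (mul_le_mul_of_nonneg_right ((le_abs_self _).trans h4) hv0).trans ?_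
    exact mul_le_mul_of_nonneg_left hv (by norm_num)
  have h7 : 2 * (1 / u) ≤ ε := by
    rw [div_le_iff₀ hε] at hεu
    rw [mul_one_div, div_le_iff₀ hu0]; linarith
  have h8 : TT u = GG u - FF (Real.exp u) * vv u + Real.log u - 1 / u := by
    unfold GG qq; ring
  rw [h8]
  linarith

lemma hasDerivAt_inv_pow {u : ℝ} (hu : 0 < u) :
    HasDerivAt (fun u : ℝ ↦ 1 / u) (-(1 / u ^ 2)) u ∧
    HasDerivAt (fun u : ℝ ↦ 1 / u ^ 2) (-(2 / u ^ 3)) u ∧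
    HasDerivAt (fun u : ℝ ↦ 1 / u ^ 3) (-(3 / u ^ 4)) u := by
  refine ⟨?_, ?_, ?_⟩
  · have := hasDerivAt_inv hu.ne'
    simpa [one_div] using this
  · have := (hasDerivAt_pow 2 u).inv (by positivity)
    simp only [one_div]
    refine this.congr_deriv ?_
    push_cast
    field_simp
  · have := (hasDerivAt_pow 3 u).inv (by positivity)
    simp only [one_div]
    refine this.congr_deriv ?_
    push_cast
    field_simp

/-- `GG_limit` with the bound `FF_triv`. -/
lemma qq_le_one {a : ℝ} (ha : 11 ≤ a) :
    qq a ≤ Real.eulerMascheroniConstant + 0.0478 * (1 / a + 1 / a ^ 2) := by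
  have h := GG_limit ha (B := fun u ↦ -(0.0239 * (1 / u + 1 / u ^ 2)))
    (B' := fun u ↦ 0.0239 * (1 / u ^ 2 + 2 / u ^ 3)) (fun u hu ↦ ?_) (fun u hu ↦ ?_)
    (fun u hu ↦ ?_)
  · have h4 := FF_triv ha
    have hv0 : 0 ≤ 1 / a + 1 / a ^ 2 := by positivity
    have h5 := mul_le_mul_of_nonneg_right ((neg_abs_le _).trans' (neg_le_neg h4)) hv0
    unfold GG vv at h
    linarith
  · have hu0 : 0 < u := by linarith
    obtain ⟨h1, h2, -⟩ := hasDerivAt_inv_pow hu0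
    exact (((h1.add h2).const_mul 0.0239).neg).congr_deriv (by ring)
  · have hu0 : 0 < u := by linarith
    simp only [Left.neg_nonpos_iff]; positivity
  · have hu0 : 0 < u := by linarith
    exact mul_le_mul_of_nonneg_right (FF_triv (by linarith)) (by positivity)

/-- `GG_limit` with the bound `FF_decay`. -/
lemma qq_le_two {a : ℝ} (ha : 20 ≤ a) :
    qq a ≤ Real.eulerMascheroniConstant + 1.2 / a ^ 2 + 1.3334 / a ^ 3 := by
  have h := GG_limit (by linarith) (B := fun u ↦ -(0.8 * (1 / 2 * (1 / u ^ 2) + 2 / 3 * (1 / u ^ 3))))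
    (B' := fun u ↦ 0.8 * (1 / u ^ 3 + 2 / u ^ 4)) (a := a) (fun u hu ↦ ?_) (fun u hu ↦ ?_)
    (fun u hu ↦ ?_)
  · have ha0 : 0 < a := by linarith
    have h4 := FF_decay ha
    have hv0 : 0 ≤ 1 / a + 1 / a ^ 2 := by positivity
    have h5 := mul_le_mul_of_nonneg_right ((neg_abs_le _).trans' (neg_le_neg h4)) hv0
    have h6 : -(0.8 / a) * (1 / a + 1 / a ^ 2) = -0.8 * (1 / a ^ 2) - 0.8 * (1 / a ^ 3) := by
      field_simp
      ring
    have h7 : 1.2 / a ^ 2 = 1.2 * (1 / a ^ 2) := by ring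
    have h8 : 1.3334 / a ^ 3 = 1.3334 * (1 / a ^ 3) := by ring
    have h9 : 0 < 1 / a ^ 3 := by positivity
    unfold GG vv at h
    linarith
  · have hu0 : 0 < u := by linarith
    obtain ⟨-, h1, h2⟩ := hasDerivAt_inv_pow hu0
    exact ((((h1.const_mul (1/2)).add (h2.const_mul (2/3))).const_mul 0.8).neg).congr_deriv (by ring)
  · have hu0 : 0 < u := by linarith
    simp only [Left.neg_nonpos_iff]; positivity
  · have hu0 : 0 < u := by linarith
    refine (mul_le_mul_of_nonneg_right (FF_decay (by linarith)) (by positivity)).trans (le_of_eq ?_)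
    field_simp

end

/-! ### Euler factors and prime powers -/

noncomputable section

open Set Filter Topology MeasureTheory
open scoped ArithmeticFunction

lemma log_tail {x : ℝ} (h0 : 0 ≤ x) (h1 : x < 1) (n : ℕ) : -Real.log (1 - x) ≤
    ∑ i ∈ Finset.range n, x ^ (i + 1) / ((i:ℝ) + 1) + x ^ (n + 1) / (((n:ℝ) + 1) * (1 - x)) := by
  have hs := Real.hasSum_pow_div_log_of_abs_lt_one (x := x) (by rwa [abs_of_nonneg h0])
  have h2 := (hasSum_nat_add_iff' n).mpr hs
  have h3 : HasSum (fun i : ℕ ↦ x ^ (n + 1) / ((n:ℝ) + 1) * x ^ i)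
      (x ^ (n + 1) / ((n:ℝ) + 1) * (1 - x)⁻¹) := (hasSum_geometric_of_lt_one h0 h1).mul_left _
  have h4 := hasSum_le (fun i ↦ ?_) h2 h3
  · rw [← div_eq_mul_inv, div_div] at h4
    linarith
  · rw [div_mul_eq_mul_div, ← pow_add, show n + 1 + i = i + n + 1 by ring]
    push_cast
    gcongr
    linarith [(Nat.cast_nonneg i : (0:ℝ) ≤ i)]

/-- For `p > √N` only the first power is kept; the remainder telescopes over `p`. -/
lemma prime_big {p : ℕ} (hp : p.Prime) :
    -Real.log (1 - 1 / (p:ℝ)) ≤ 1 / p + 1 / 2 * (1 / ((p:ℝ) - 1) - 1 / p) := by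
  have h2 : (2:ℝ) ≤ p := by exact_mod_cast hp.two_le
  have h := log_tail (x := 1 / (p:ℝ)) (by positivity) (by rw [div_lt_one] <;> linarith) 1
  refine h.trans (le_of_eq ?_)
  have : (p:ℝ) - 1 ≠ 0 := by linarith
  simp
  field_simp
  ring

/-- For `p ≤ √N` the powers `p^k ≤ N` are kept, and the first omitted power exceeds `y`. -/
lemma prime_small {p N : ℕ} (hp : p.Prime) (hN : p ^ 2 ≤ N) {y : ℝ} (hy0 : 0 < y) (hy : y < N + 1) :
    -Real.log (1 - 1 / (p:ℝ)) ≤ 1 / p + ∑ k ∈ Finset.Icc 2 (Nat.log p N), 1 / ((k:ℝ) * p ^ k)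
      + 2 / 3 / y := by
  have h2 : (2:ℝ) ≤ p := by exact_mod_cast hp.two_le
  have hK : 2 ≤ Nat.log p N := (Nat.le_log_iff_pow_le hp.one_lt (by
    have := hp.pos; positivity |> fun (h : 0 < p ^ 2) ↦ (h.trans_le hN).ne')).mpr hN
  have hlt := Nat.lt_pow_succ_log_self hp.one_lt N
  set K := Nat.log p N
  have h := log_tail (x := 1 / (p:ℝ)) (by positivity) (by rw [div_lt_one] <;> linarith) K
  refine h.trans (add_le_add (le_of_eq ?_) ?_)
  · have e1 : ∑ i ∈ Finset.range K, (1 / (p:ℝ)) ^ (i + 1) / ((i:ℝ) + 1) =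
        ∑ k ∈ Finset.Ico 1 (K + 1), 1 / ((k:ℝ) * p ^ k) := by
      rw [Finset.sum_Ico_eq_sum_range]
      refine Finset.sum_congr rfl fun i _ ↦ ?_
      push_cast
      rw [div_pow, one_pow, div_div, mul_comm, add_comm 1 i, add_comm (1:ℝ)]
    rw [e1, Finset.sum_eq_sum_Ico_succ_bot (by omega)]
    simp only [Nat.cast_one, pow_one, one_mul]
    rfl
  · have hyp : y ≤ (p:ℝ) ^ (K + 1) := by
      have : (N:ℝ) + 1 ≤ (p:ℝ) ^ (K + 1) := by exact_mod_cast hlt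
      linarith
    have hK' : (2:ℝ) ≤ K := by exact_mod_cast hK
    have h12 : (1:ℝ) / p ≤ 1 / 2 := one_div_le_one_div_of_le (by norm_num) h2
    rw [div_pow, one_pow, div_div, div_div]
    rw [div_le_div_iff₀ (by have : 0 < 1 - 1 / (p:ℝ) := by linarith
                            positivity) (by positivity)]
    have h3 : (3:ℝ) / 2 ≤ ((K:ℝ) + 1) * (1 - 1 / p) := by nlinarith
    have h4 := mul_le_mul hyp h3 (by norm_num) (by positivity)
    linarith

/-- Telescoping bound over integers `n > m`. -/
lemma telescope_le (S : Finset ℕ) (m : ℕ) (hm : 0 < m) (hS : ∀ n ∈ S, m < n) :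
    ∑ n ∈ S, (1 / ((n:ℝ) - 1) - 1 / n) ≤ 1 / m := by
  have hnn : ∀ n : ℕ, m < n → 0 ≤ 1 / ((n:ℝ) - 1) - 1 / n := fun n hn ↦ by
    have : (1:ℝ) < n := by exact_mod_cast (by omega : 1 < n)
    exact sub_nonneg.mpr (one_div_le_one_div_of_le (by linarith) (by linarith))
  have hsub : S ⊆ Finset.Ico (m + 1) (m + 1 + (S.sup id)) := fun n hn ↦ by
    have h1 : n ≤ S.sup id := Finset.le_sup (f := id) hn
    have := hS n hn
    rw [Finset.mem_Ico]; omega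
  refine (Finset.sum_le_sum_of_subset_of_nonneg hsub fun n hn _ ↦
    hnn n (by rw [Finset.mem_Ico] at hn; omega)).trans ?_
  generalize S.sup id = k
  have : ∀ k : ℕ, ∑ n ∈ Finset.Ico (m + 1) (m + 1 + k), (1 / ((n:ℝ) - 1) - 1 / n) =
      1 / m - 1 / ((m:ℝ) + k) := by
    intro k
    induction k with
    | zero => simp
    | succ k ih =>
      rw [← add_assoc, Finset.sum_Ico_succ_top (by omega), ih]
      push_cast
      ring
  rw [this]
  have : (0:ℝ) ≤ 1 / ((m:ℝ) + k) := by positivity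
  linarith

/-- Prime powers with exponent at least two contribute through the non-primes `n ≤ N`. -/
lemma prime_pow_sum (N : ℕ) (S : Finset ℕ) (hS : ∀ p ∈ S, p.Prime ∧ p ^ 2 ≤ N) :
    ∑ p ∈ S, ∑ k ∈ Finset.Icc 2 (Nat.log p N), 1 / ((k:ℝ) * p ^ k) ≤
      ∑ n ∈ Finset.Ioc 0 N with ¬ n.Prime, Λ n * hh (Real.log n) := by
  rw [Finset.sum_sigma']
  have hinj : Set.InjOn (fun z : (_ : ℕ) × ℕ ↦ z.1 ^ z.2)
      (S.sigma fun p ↦ Finset.Icc 2 (Nat.log p N)) := by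
    rintro ⟨p, k⟩ h1 ⟨q, j⟩ h2 h
    simp only [Finset.coe_sigma, Set.mem_sigma_iff, Finset.mem_coe, Finset.mem_Icc] at h1 h2 h
    obtain ⟨k, rfl⟩ : ∃ k', k = k' + 1 := ⟨k - 1, by omega⟩
    obtain ⟨j, rfl⟩ : ∃ j', j = j' + 1 := ⟨j - 1, by omega⟩
    obtain ⟨h3, h4⟩ := Nat.Prime.pow_inj (hS p h1.1).1 (hS q h2.1).1 h
    subst h3; subst h4; rfl
  have hterm : ∀ z ∈ S.sigma fun p ↦ Finset.Icc 2 (Nat.log p N),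
      1 / ((z.2:ℝ) * z.1 ^ z.2) =
        (fun n : ℕ ↦ Λ n * hh (Real.log n)) (z.1 ^ z.2) := by
    rintro ⟨p, k⟩ h1
    simp only [Finset.mem_sigma, Finset.mem_Icc] at h1 ⊢
    have hp := (hS p h1.1).1
    have h2 : (1:ℝ) < p := by exact_mod_cast hp.one_lt
    have hlog := Real.log_pos h2
    have hk : (0:ℝ) < k := by exact_mod_cast (by omega : 0 < k)
    rw [ArithmeticFunction.vonMangoldt_apply_pow (by omega),
      ArithmeticFunction.vonMangoldt_apply_prime hp, hh]
    push_cast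
    rw [Real.log_pow, Real.exp_neg, ← Real.log_pow, Real.exp_log (by positivity), Real.log_pow]
    field_simp
  rw [Finset.sum_congr rfl hterm, ← Finset.sum_image (f := fun n : ℕ ↦ Λ n * hh (Real.log n)) hinj]
  refine Finset.sum_le_sum_of_subset_of_nonneg ?_ fun n _ _ ↦ ww_nonneg n
  intro n hn
  simp only [Finset.mem_image, Finset.mem_sigma, Finset.mem_Icc, Sigma.exists] at hn
  obtain ⟨p, k, ⟨h1, h2, h3⟩, rfl⟩ := hn
  have hp := (hS p h1).1
  rw [Finset.mem_filter, Finset.mem_Ioc]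
  have hN : N ≠ 0 := by
    have := (hS p h1).2
    have := hp.pos
    have : 0 < p ^ 2 := by positivity
    omega
  exact ⟨⟨pow_pos hp.pos _, (Nat.pow_le_pow_right hp.pos h3).trans (Nat.pow_log_le_self p hN)⟩,
    Nat.Prime.not_prime_pow h2⟩

end

/-! ### The Euler product over a set of primes -/

noncomputable section

open Set Filter Topology MeasureTheory
open scoped ArithmeticFunction

lemma log4_lt : Real.log 4 < 1.38630 := by
  rw [show (4:ℝ) = 2 ^ 2 by norm_num, Real.log_pow]
  have := Real.log_two_lt_d9
  push_cast; linarith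

lemma exp_half_ge {u : ℝ} (hu : 11 ≤ u) : 244.5 ≤ Real.exp (u / 2) := by
  have h1 := exp_neg_le_of_nat 11 (u := u) (by exact_mod_cast hu)
  have h2 : Real.exp (-u) = (Real.exp (u / 2))⁻¹ ^ 2 := by
    rw [← Real.exp_neg, ← Real.exp_nat_mul]; congr 1; push_cast; ring
  rw [h2] at h1
  have h3 : (1 / 2.718 : ℝ) ^ 11 ≤ (1 / 244.5) ^ 2 := by norm_num
  have h4 := abs_le_of_sq_le_sq (h1.trans h3) (by norm_num)
  rw [one_div] at h4
  exact (inv_le_inv₀ (Real.exp_pos _) (by norm_num)).mp ((le_abs_self _).trans h4)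

lemma psi_sqrt {t : ℝ} (ht : 244.5 ≤ t) : Chebyshev.psi t ≤ 2.1 * t := by
  have h := Chebyshev.psi_le (x := t) (by linarith)
  have hs : 15.63 ≤ √t := Real.le_sqrt_of_sq_le (by norm_num; linarith)
  have hss : √t * √t = t := Real.mul_self_sqrt (by linarith)
  have hlog : Real.log t = 2 * Real.log √t := by
    rw [Real.log_sqrt (by linarith)]; ring
  have h16 : Real.log 16 ≤ 2.7726 := by
    rw [show (16:ℝ) = 2 ^ 4 by norm_num, Real.log_pow]
    have := Real.log_two_lt_d9
    push_cast; linarith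
  have h2 : Real.log √t ≤ 2.7726 + √t / 16 - 1 := by
    have h3 := Real.log_le_sub_one_of_pos (x := √t / 16) (by positivity)
    rw [Real.log_div (by positivity) (by norm_num)] at h3
    linarith
  have h4 : Real.log t ≤ 0.3568 * √t := by rw [hlog]; linarith
  have h5 : 2 * √t * Real.log t ≤ 2 * √t * (0.3568 * √t) := by gcongr
  have h6 := log4_lt
  nlinarith

/-- From `ψ(x) - θ(x) ≤ ψ(x^{1/2}) + ψ(x^{1/3}) + ψ(x^{1/5})` and Chebyshev bounds for `ψ`. -/
lemma psi_sub_theta_le {u : ℝ} (hu : 11 ≤ u) :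
    Chebyshev.psi (Real.exp u) - Chebyshev.theta (Real.exp u) ≤ 3.17 * Real.exp (u / 2) := by
  have h := Chebyshev.psi_sub_theta_le_psi_add_psi_add_psi (Real.exp u)
  rw [← Real.exp_mul, ← Real.exp_mul, ← Real.exp_mul] at h
  have h1 := psi_sqrt (exp_half_ge hu)
  have h2 := Chebyshev.psi_le_const_mul_self (Real.exp_pos (u * 3⁻¹)).le
  have h3 := Chebyshev.psi_le_const_mul_self (Real.exp_pos (u * 5⁻¹)).le
  have h6 := log4_lt
  have e1 : Real.exp (u * 3⁻¹) ≤ 0.161 * Real.exp (u / 2) := by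
    have : Real.exp (u * 3⁻¹) = Real.exp (-(u / 6)) * Real.exp (u / 2) := by
      rw [← Real.exp_add]; congr 1; ring
    rw [this]
    have h7 : Real.exp (-(u / 6)) ≤ 0.161 := by
      have h8 := exp_neg_le_of_nat 11 (u := u) (by exact_mod_cast hu)
      have h9 : Real.exp (-u) = Real.exp (-(u / 6)) ^ 6 := by
        rw [← Real.exp_nat_mul]; congr 1; push_cast; ring
      rw [h9] at h8
      refine le_of_pow_le_pow_left₀ (n := 6) (by norm_num) (by norm_num) (h8.trans (by norm_num))
    gcongr
  have e2 : Real.exp (u * 5⁻¹) ≤ 0.037 * Real.exp (u / 2) := by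
    have : Real.exp (u * 5⁻¹) = Real.exp (-(u * 3 / 10)) * Real.exp (u / 2) := by
      rw [← Real.exp_add]; congr 1; ring
    rw [this]
    have h7 : Real.exp (-(u * 3 / 10)) ≤ 0.037 := by
      have h8 := exp_neg_le_of_nat 33 (u := 3 * u) (by push_cast; linarith)
      have h9 : Real.exp (-(3 * u)) = Real.exp (-(u * 3 / 10)) ^ 10 := by
        rw [← Real.exp_nat_mul]; congr 1; push_cast; ring
      rw [h9] at h8
      refine le_of_pow_le_pow_left₀ (n := 10) (by norm_num) (by norm_num) (h8.trans (by norm_num))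
    gcongr
  have hE := Real.exp_pos (u / 2)
  have e3 : (Real.log 4 + 4) * Real.exp (u * 3⁻¹) ≤ 5.3863 * (0.161 * Real.exp (u / 2)) := by
    gcongr; linarith
  have e4 : (Real.log 4 + 4) * Real.exp (u * 5⁻¹) ≤ 5.3863 * (0.037 * Real.exp (u / 2)) := by
    gcongr; linarith
  rw [show u * 2⁻¹ = u / 2 by ring] at h
  linarith

/-- A product over primes whose logarithms sum to at most `e^l`, compared with `TT l`. Since
`1/p = log p · hh (log p)` and `hh` decreases, replacing `S` by the primes up to `e^l` can only
increase `∑_{p ∈ S} log p (hh (log p) - hh l)`, while `hh l ∑_{p ∈ S} log p ≤ 1/l`. The remaining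
prime powers cost `O(e^{-l/2})`. -/
lemma prime_side (S : Finset ℕ) (hS : ∀ p ∈ S, p.Prime) {l : ℝ} (hl : 11 ≤ l)
    (hsum : ∑ p ∈ S, Real.log p ≤ Real.exp l) :
    ∑ p ∈ S, -Real.log (1 - 1 / (p:ℝ)) ≤ qq l + Real.log l + 1.457 * Real.exp (-(l / 2)) := by
  have hl0 : 0 < l := by linarith
  set y := Real.exp l with hy
  have hy0 : 0 < y := Real.exp_pos l
  set N := ⌊y⌋₊ with hN
  have hNy : (N:ℝ) ≤ y := Nat.floor_le hy0.le
  have hyN : y < N + 1 := Nat.lt_floor_add_one y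
  set s := Real.exp (l / 2) with hs
  have hs1 : 244.5 ≤ s := exp_half_ge hl
  have hss : s * s = y := by rw [hs, ← Real.exp_add, hy]; congr 1; ring
  have hsi : Real.exp (-(l / 2)) = 1 / s := by rw [Real.exp_neg, one_div]
  set m := Nat.sqrt N with hm
  have hms : (m:ℝ) ≤ s := by
    have h1 : m * m ≤ N := Nat.sqrt_le N
    have h2 : (m:ℝ) * m ≤ N := by exact_mod_cast h1
    nlinarith
  have hsm : s < m + 1 := by
    have h1 : N < (m + 1) * (m + 1) := Nat.lt_succ_sqrt N
    have h2 : (N:ℝ) + 1 ≤ (m + 1) * (m + 1) := by exact_mod_cast h1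
    nlinarith [(Nat.cast_nonneg m : (0:ℝ) ≤ m)]
  have hm0 : 0 < m := by
    have : (0:ℝ) < m := by linarith
    exact_mod_cast this
  have hsplit : ∑ p ∈ S, -Real.log (1 - 1 / (p:ℝ)) ≤ ∑ p ∈ S, 1 / (p:ℝ) +
      (∑ p ∈ S with p ^ 2 ≤ N, ∑ k ∈ Finset.Icc 2 (Nat.log p N), 1 / ((k:ℝ) * p ^ k) +
        2 / 3 / s) + 1 / 2 * (1 / m) := by
    rw [← Finset.sum_filter_add_sum_filter_not S (fun p ↦ p ^ 2 ≤ N),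
      ← Finset.sum_filter_add_sum_filter_not S (fun p ↦ p ^ 2 ≤ N) (fun p ↦ 1 / (p:ℝ))]
    have h1 : ∑ p ∈ S with p ^ 2 ≤ N, -Real.log (1 - 1 / (p:ℝ)) ≤
        ∑ p ∈ S with p ^ 2 ≤ N, 1 / (p:ℝ) + ∑ p ∈ S with p ^ 2 ≤ N,
          ∑ k ∈ Finset.Icc 2 (Nat.log p N), 1 / ((k:ℝ) * p ^ k) + 2 / 3 / s := by
      have hcard : (((S.filter (fun p ↦ p ^ 2 ≤ N)).card : ℕ) : ℝ) ≤ m := by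
        have : S.filter (fun p ↦ p ^ 2 ≤ N) ⊆ Finset.Icc 1 m := fun p hp ↦ by
          rw [Finset.mem_filter] at hp
          rw [Finset.mem_Icc]
          exact ⟨(hS p hp.1).one_lt.le, Nat.le_sqrt'.mpr hp.2⟩
        have := Finset.card_le_card this
        rw [Nat.card_Icc] at this
        exact_mod_cast (by omega)
      have hconst : ∑ p ∈ S with p ^ 2 ≤ N, 2 / 3 / y ≤ 2 / 3 / s := by
        rw [Finset.sum_const, nsmul_eq_mul, ← hss]
        have : 2 / 3 / s = s * (2 / 3 / (s * s)) := by field_simp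
        rw [this]
        gcongr
        linarith
      refine le_trans ?_ (add_le_add_right hconst _)
      rw [← Finset.sum_add_distrib, ← Finset.sum_add_distrib]
      refine Finset.sum_le_sum fun p hp ↦ ?_
      rw [Finset.mem_filter] at hp
      exact prime_small (hS p hp.1) hp.2 hy0 hyN
    have h2 : ∑ p ∈ S with ¬ p ^ 2 ≤ N, -Real.log (1 - 1 / (p:ℝ)) ≤
        ∑ p ∈ S with ¬ p ^ 2 ≤ N, 1 / (p:ℝ) + 1 / 2 * (1 / m) := by
      have := telescope_le (S.filter (fun p ↦ ¬ p ^ 2 ≤ N)) m hm0 (fun p hp ↦ by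
        rw [Finset.mem_filter] at hp
        by_contra hc
        exact hp.2 (Nat.le_sqrt'.mp (not_lt.mp hc)))
      refine le_trans ?_ (add_le_add_right (mul_le_mul_of_nonneg_left this (by norm_num)) _)
      rw [Finset.mul_sum, ← Finset.sum_add_distrib]
      refine Finset.sum_le_sum fun p hp ↦ ?_
      rw [Finset.mem_filter] at hp
      exact prime_big (hS p hp.1)
    linarith
  have hpp := prime_pow_sum N (S.filter (fun p ↦ p ^ 2 ≤ N)) (fun p hp ↦ by
    rw [Finset.mem_filter] at hp; exact ⟨hS p hp.1, hp.2⟩)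
  have hyh : y * hh l = 1 / l := by
    rw [hh, Real.exp_neg, ← hy]; field_simp
  have hh0 : 0 ≤ hh l := hh_nonneg hl0.le
  have hterm : ∀ p : ℕ, p.Prime → Real.log p * hh (Real.log p) = 1 / p := fun p hp ↦ by
    have h2 : (1:ℝ) < p := by exact_mod_cast hp.one_lt
    have hlog := Real.log_pos h2
    rw [hh, Real.exp_neg, Real.exp_log (by linarith)]
    field_simp
  have hprimes : ∑ p ∈ S, 1 / (p:ℝ) ≤ 1 / l +
      ∑ p ∈ Finset.Ioc 0 N with p.Prime, Real.log p * (hh (Real.log p) - hh l) := by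
    have h1 : ∑ p ∈ S, 1 / (p:ℝ) = (∑ p ∈ S, Real.log p) * hh l +
        ∑ p ∈ S, Real.log p * (hh (Real.log p) - hh l) := by
      rw [Finset.sum_mul, ← Finset.sum_add_distrib]
      refine Finset.sum_congr rfl fun p hp ↦ ?_
      rw [← hterm p (hS p hp)]; ring
    have h2 : (∑ p ∈ S, Real.log p) * hh l ≤ 1 / l := by
      rw [← hyh]; exact mul_le_mul_of_nonneg_right hsum hh0
    have h3 : ∑ p ∈ S, Real.log p * (hh (Real.log p) - hh l) ≤
        ∑ p ∈ Finset.Ioc 0 N with p.Prime, Real.log p * (hh (Real.log p) - hh l) := by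
      rw [← Finset.sum_filter_add_sum_filter_not S (fun p ↦ p ≤ N)]
      have h4 : ∑ p ∈ S with ¬ p ≤ N, Real.log p * (hh (Real.log p) - hh l) ≤ 0 := by
        refine Finset.sum_nonpos fun p hp ↦ ?_
        rw [Finset.mem_filter] at hp
        have h5 : (1:ℝ) < p := by exact_mod_cast (hS p hp.1).one_lt
        have h6 : y < p := (Nat.floor_lt hy0.le).mp (not_le.mp hp.2)
        have h7 : l ≤ Real.log p := by
          rw [Real.le_log_iff_exp_le (by linarith)]; exact h6.le
        have h8 := hh_antitone (show l ∈ Ioi 0 from hl0)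
          (show Real.log p ∈ Ioi 0 from by show 0 < Real.log p; linarith) h7
        exact mul_nonpos_of_nonneg_of_nonpos (by linarith) (by linarith)
      have h5 : ∑ p ∈ S with p ≤ N, Real.log p * (hh (Real.log p) - hh l) ≤
          ∑ p ∈ Finset.Ioc 0 N with p.Prime, Real.log p * (hh (Real.log p) - hh l) := by
        refine Finset.sum_le_sum_of_subset_of_nonneg (fun p hp ↦ ?_) fun p hp _ ↦ ?_
        · rw [Finset.mem_filter] at hp
          rw [Finset.mem_filter, Finset.mem_Ioc]
          exact ⟨⟨(hS p hp.1).pos, hp.2⟩, hS p hp.1⟩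
        · rw [Finset.mem_filter, Finset.mem_Ioc] at hp
          have h5 : (1:ℝ) < p := by exact_mod_cast hp.2.one_lt
          have h6 : (p:ℝ) ≤ y := (Nat.le_floor_iff hy0.le).mp hp.1.2
          have h7 : Real.log p ≤ l := (Real.log_le_iff_le_exp (by linarith)).mpr h6
          have h8 := hh_antitone (show Real.log p ∈ Ioi 0 from Real.log_pos h5)
            (show l ∈ Ioi 0 from hl0) h7
          exact mul_nonneg (Real.log_pos h5).le (by linarith)
      linarith
    linarith
  have hTT : TT l = ∑ p ∈ Finset.Ioc 0 N with p.Prime, Real.log p * (hh (Real.log p) - hh l) +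
      ∑ n ∈ Finset.Ioc 0 N with ¬ n.Prime, Λ n * hh (Real.log n) -
      (Chebyshev.psi y - Chebyshev.theta y) * hh l := by
    have h1 : Chebyshev.psi y - Chebyshev.theta y = ∑ n ∈ Finset.Ioc 0 N with ¬ n.Prime, Λ n := by
      rw [Chebyshev.psi, Chebyshev.theta,
        ← Finset.sum_filter_add_sum_filter_not (Finset.Ioc 0 ⌊y⌋₊) (fun n ↦ n.Prime)]
      rw [Finset.sum_congr rfl (fun p hp ↦
        ArithmeticFunction.vonMangoldt_apply_prime (Finset.mem_filter.mp hp).2)]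
      ring
    rw [h1, TT, ← Finset.sum_filter_add_sum_filter_not _ (fun n : ℕ ↦ n.Prime), Finset.sum_mul,
      add_sub_assoc, ← Finset.sum_sub_distrib]
    congr 1
    · refine Finset.sum_congr rfl fun p hp ↦ ?_
      rw [ArithmeticFunction.vonMangoldt_apply_prime (Finset.mem_filter.mp hp).2]
    · exact Finset.sum_congr rfl fun n _ ↦ by ring
  have hpt : (Chebyshev.psi y - Chebyshev.theta y) * hh l ≤ 3.17 / 11 * (1 / s) := by
    refine (mul_le_mul_of_nonneg_right (psi_sub_theta_le hl) hh0).trans ?_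
    have : hh l = 1 / (s * s * l) := by rw [hss, hh, Real.exp_neg, ← hy]; field_simp
    rw [this, ← hs]
    have e : 3.17 * s * (1 / (s * s * l)) = 3.17 / l * (1 / s) := by field_simp
    rw [e]
    gcongr
  have hmm : 1 / 2 * (1 / (m:ℝ)) ≤ 0.5021 * (1 / s) := by
    have hm' : (0:ℝ) < m := by exact_mod_cast hm0
    rw [mul_one_div, mul_one_div, div_le_div_iff₀ hm' (by linarith)]
    linarith
  have e23 : 2 / 3 / s = 2 / 3 * (1 / s) := by ring
  have hs0 : 0 < 1 / s := by positivity
  rw [hsi, qq, hTT]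
  rw [e23] at hsplit
  linarith

end

/-! ### The range `log log r ≥ 11` -/

noncomputable section

open Set Filter Topology MeasureTheory

lemma sq_mul_exp_le {a l : ℝ} (ha : 4 ≤ a) (hl : a ≤ l) :
    l ^ 2 * Real.exp (-(l / 2)) ≤ a ^ 2 * Real.exp (-(a / 2)) := by
  have ha0 : 0 < a := by linarith
  have h1 : l / a ≤ Real.exp ((l - a) / 4) := by
    have h2 := Real.add_one_le_exp (l / a - 1)
    have h3 : l / a - 1 = (l - a) / a := by field_simp
    have h4 : (l - a) / a ≤ (l - a) / 4 := by
      apply div_le_div_of_nonneg_left <;> linarith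
    have h5 := Real.exp_le_exp.mpr h4
    rw [h3] at h2
    have h6 : l / a = (l - a) / a + 1 := by field_simp; ring
    linarith
  have h2 : l ≤ a * Real.exp ((l - a) / 4) := by
    rw [div_le_iff₀ ha0] at h1; linarith
  calc l ^ 2 * Real.exp (-(l / 2)) ≤ (a * Real.exp ((l - a) / 4)) ^ 2 * Real.exp (-(l / 2)) := by
        gcongr
        linarith
    _ = a ^ 2 * (Real.exp ((l - a) / 4) ^ 2 * Real.exp (-(l / 2))) := by ring
    _ = _ := by
        rw [← Real.exp_nat_mul, ← Real.exp_add]; congr 2; push_cast; ring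

/-- For `l ≤ 20` the constant error bound of `qq_le_one` is the better one, beyond that
`qq_le_two`. -/
lemma excess_le {l : ℝ} (hl : 11 ≤ l) : qq l - Real.eulerMascheroniConstant +
    1.457 * Real.exp (-(l / 2)) ≤ 1.345 / l ^ 2 := by
  have hl0 : 0 < l := by linarith
  rw [le_div_iff₀ (by positivity)]
  have hE : ∀ a : ℝ, 11 ≤ a → a ≤ l → ∀ c, Real.exp (-(a / 2)) ≤ c →
      l ^ 2 * Real.exp (-(l / 2)) ≤ a ^ 2 * c := fun a ha hal c hc ↦
    (sq_mul_exp_le (by linarith) hal).trans (by gcongr)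
  have hq1 : (qq l - Real.eulerMascheroniConstant) * l ^ 2 ≤ 0.0478 * (l + 1) := by
    have h := qq_le_one hl
    have : 0.0478 * (l + 1) = 0.0478 * (1 / l + 1 / l ^ 2) * l ^ 2 := by field_simp
    rw [this]
    gcongr
    linarith
  rcases le_total l 12 with h12 | h12
  · have h := hE 11 le_rfl hl (1 / 244.5) (by
      rw [Real.exp_neg, ← one_div]
      exact one_div_le_one_div_of_le (by norm_num) (exp_half_ge le_rfl))
    norm_num at h ⊢
    linarith
  rcases le_total l 14 with h14 | h14
  · have h := hE 12 (by norm_num) h12 ((1 / 2.718) ^ 6) (exp_neg_le_of_nat 6 (by norm_num))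
    norm_num at h ⊢
    linarith
  rcases le_total l 20 with h20 | h20
  · have h := hE 14 (by norm_num) h14 ((1 / 2.718) ^ 7) (exp_neg_le_of_nat 7 (by norm_num))
    norm_num at h ⊢
    linarith
  · have h := hE 20 (by norm_num) h20 ((1 / 2.718) ^ 10) (exp_neg_le_of_nat 10 (by norm_num))
    have hq2 : (qq l - Real.eulerMascheroniConstant) * l ^ 2 ≤ 1.2 + 1.3334 / 20 := by
      have h := qq_le_two h20
      have h3 : 1.3334 / l ≤ 1.3334 / 20 := by gcongr
      have : 1.2 + 1.3334 / l = (1.2 / l ^ 2 + 1.3334 / l ^ 3) * l ^ 2 := by field_simp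
      refine le_trans ?_ (add_le_add_right h3 _)
      rw [this]
      gcongr
      linarith
    norm_num at h ⊢
    linarith

lemma exp_gamma_lt : Real.exp Real.eulerMascheroniConstant < 1.84 := by
  have h1 := gamma_lt
  have h2 : Real.exp Real.eulerMascheroniConstant < Real.exp (3 / 5) :=
    Real.exp_lt_exp.mpr (by linarith)
  refine h2.trans ?_
  refine lt_of_pow_lt_pow_left₀ 5 (by norm_num) ?_
  have h3 : Real.exp (3 / 5) ^ 5 = Real.exp 1 ^ 3 := by
    rw [← Real.exp_nat_mul, ← Real.exp_nat_mul]; congr 1; norm_num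
  rw [h3]
  have h4 : Real.exp 1 ^ 3 < 2.7182818286 ^ 3 :=
    pow_lt_pow_left₀ Real.exp_one_lt_d9 (Real.exp_pos 1).le (by norm_num)
  exact h4.trans (by norm_num)

/-- The inequality for sets of primes whose product is at most `exp (exp l)`, `l ≥ 11`. -/
lemma large_case (S : Finset ℕ) (hS : ∀ p ∈ S, p.Prime) {l : ℝ} (hl : 11 ≤ l)
    (hsum : ∑ p ∈ S, Real.log p ≤ Real.exp l) :
    ∏ p ∈ S, (1 - 1 / (p:ℝ))⁻¹ <
      Real.exp Real.eulerMascheroniConstant * l + 2.50637 / l := by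
  have hl0 : 0 < l := by linarith
  have h1 : ∏ p ∈ S, (1 - 1 / (p:ℝ))⁻¹ = Real.exp (∑ p ∈ S, -Real.log (1 - 1 / (p:ℝ))) := by
    rw [Real.exp_sum]
    refine Finset.prod_congr rfl fun p hp ↦ ?_
    have h2 : (1:ℝ) < p := by exact_mod_cast (hS p hp).one_lt
    rw [Real.exp_neg, Real.exp_log (by rw [sub_pos, div_lt_one] <;> linarith)]
  rw [h1]
  set t := 1.345 / l ^ 2 with ht
  have h2 : ∑ p ∈ S, -Real.log (1 - 1 / (p:ℝ)) ≤
      Real.eulerMascheroniConstant + Real.log l + t := by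
    linarith [prime_side S hS hl hsum, excess_le hl]
  have ht0 : 0 < t := by positivity
  have ht1 : t ≤ 0.0112 := by
    rw [ht, div_le_iff₀ (by positivity)]
    nlinarith
  have h3 : Real.exp t ≤ 1 + 1.361 / l ^ 2 := by
    have h4 := Real.abs_exp_sub_one_sub_id_le (x := t) (by rw [abs_of_pos ht0]; linarith)
    have h5 := (abs_le.mp h4).2
    have h6 : 1.361 / l ^ 2 = 1.361 / 1.345 * t := by rw [ht]; ring
    rw [h6]
    nlinarith
  refine (Real.exp_le_exp.mpr h2).trans_lt ?_
  rw [Real.exp_add, Real.exp_add, Real.exp_log hl0]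
  have hG := Real.exp_pos Real.eulerMascheroniConstant
  have hG2 := exp_gamma_lt
  set G := Real.exp Real.eulerMascheroniConstant
  calc G * l * Real.exp t ≤ G * l * (1 + 1.361 / l ^ 2) := by gcongr
    _ = G * l + G * 1.361 / l := by field_simp
    _ < G * l + 2.50637 / l := by
      gcongr
      linarith

end

/-! ### The table for the finite verification -/

noncomputable section

/-- The product of the primes below `251`. -/
def big : ℕ := 256041159035492609053110100510385311995538591998443060216114576417920917800321526504084465112487730

/-- A primality test valid for `5 ≤ n < 251²`: coprimality to a primorial that contains every
prime up to `√n` and no prime from `n` on. -/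
def tst (n : ℕ) : Bool :=
  Nat.beq (Nat.gcd n (cond (Nat.ble 289 n) big (cond (Nat.ble 25 n) 30030 6))) 1

/-- `p - s` at primes and `1` elsewhere. -/
def leaf (s n : ℕ) : ℕ := cond (tst n) (n - s) 1

/-- Product of `leaf s` over `[a, a + n)`. -/
def blk (s a n : ℕ) : ℕ := Nat.rec 1 (fun k ih ↦ leaf s (a + k) * ih) n

/-- Product of `leaf s` over `[a, a + 64 n)`. -/
def blks (s a n : ℕ) : ℕ := Nat.rec 1 (fun k ih ↦ blk s (a + 64 * k) 64 * ih) n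

/-- Product of `leaf s` over `[a, a + n)`, arranged so that the recursion stays shallow. -/
def chunk (s a n : ℕ) : ℕ := blk s a (n % 64) * blks s (a + n % 64) (n / 64)

/-- A row `(x, m, u, t)` records that `x` is prime, that the logarithms of the primes up to `x`
sum to at least `m/1000 * log 2`, which is at least `exp (t/1000)`, and that the product
of `(1 - 1/p)⁻¹` over the primes `p < x` is at most `u / 10^6`. -/
abbrev Row := ℕ × ℕ × ℕ × ℕ

/-- The data of `R` imply those of `R'`. -/
def okStep (R R' : Row) : Bool :=
  Nat.blt R.1 R'.1 && Nat.blt R'.1 63001 && tst R'.1 && Nat.ble R.2.1 R'.2.1 &&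
  Nat.ble (2 ^ (R'.2.1 - R.2.1)) ((chunk 0 (R.1 + 1) (R'.1 - R.1 - 1) * R'.1) ^ 1000) &&
  Nat.ble (R.2.2.1 * (chunk 0 (R.1 + 1) (R'.1 - R.1 - 1) * R.1))
    (R'.2.2.1 * (chunk 1 (R.1 + 1) (R'.1 - R.1 - 1) * (R.1 - 1)))

/-- `exp (t/1000) ≤ m/1000 * log 2`, with rational bounds for `exp (1/1000)` and `log 2`. -/
def expOK (m t : ℕ) : Bool :=
  Nat.ble (10010005002 ^ t * 1000000000) (m * 693147 * 10000000000 ^ t)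

/-- The bound `u' / 10^6` of the row `R'` lies below the right-hand side at `l = t/1000`, with
`t` from the row `R`; here `1.78107 < e^γ`. This covers all `l` between the two primorials. -/
def goodStep (R R' : Row) : Bool :=
  Nat.ble 1200 R.2.2.2 && expOK R.2.1 R.2.2.2 &&
  Nat.blt (100 * R'.2.2.1 * R.2.2.2) (178107 * R.2.2.2 ^ 2 + 250637000000)

/-- Checks a list of rows, whose last one has to reach `e^11`. The step from `23` to `29` is exempt:
it is too close to equality for this precision and is treated in `nine`. -/
def chk (R : Row) (l : List Row) : Bool :=
  List.rec (fun R ↦ expOK R.2.1 11000)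
    (fun R' _ ih R ↦ okStep R R' && (goodStep R R' || Nat.beq R.1 23 && Nat.beq R'.1 29) && ih R') l R

/-- The table, starting after the row of the prime `5`. Consecutive primes are listed as long as
the inequality is tight; later rows skip primes. -/
def rows : List Row := [
  (7, 7713, 3750000, 1676), (11, 11172, 4375000, 2046), (13, 14872, 4812500, 2332),
  (17, 18959, 5213542, 2575), (19, 23206, 5539389, 2777), (23, 27729, 5847133, 2955),
  (29, 32586, 6112912, 3117), (31, 37540, 6331231, 3258), (37, 42749, 6542273, 3388),
  (41, 48106, 6724003, 3506), (43, 53532, 6892104, 3613), (47, 59086, 7056202, 3712),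
  (53, 64813, 7209598, 3804), (59, 70695, 7348245, 3891), (61, 76625, 7474939, 3972),
  (67, 82691, 7599522, 4048), (73, 95030, 7824876, 4187), (83, 107708, 8035268, 4312),
  (97, 120783, 8225683, 4427), (103, 134127, 8394481, 4532), (109, 147636, 8556750, 4628),
  (131, 168478, 8782238, 4760), (149, 189914, 8979467, 4880), (163, 211795, 9158743, 4989),
  (181, 241596, 9377079, 5120), (199, 272024, 9576783, 5239), (233, 311075, 9800329, 5373),
  (263, 350904, 10003736, 5493), (293, 399645, 10225770, 5624), (347, 457992, 10455939, 5760),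
  (389, 526203, 10689066, 5899), (443, 604666, 10923817, 6038), (503, 693591, 11159522, 6175),
  (587, 793751, 11388295, 6310), (659, 914475, 11630355, 6451), (757, 1047108, 11864319, 6587),
  (863, 1201887, 12101328, 6725), (997, 1379546, 12338613, 6862),
  (1129, 1590773, 12585761, 7005), (1301, 1826812, 12825412, 7143),
  (1493, 2098849, 13065455, 7282), (1721, 2418379, 13312947, 7424),
  (1997, 2787604, 13560197, 7566), (2287, 3207978, 13804434, 7706),
  (2647, 3692192, 14049577, 7847), (3001, 4242023, 14292740, 7986),
  (3463, 4871716, 14533969, 8124), (3931, 5594753, 14776324, 8263),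
  (4523, 6426116, 15019671, 8401), (5197, 7369293, 15259791, 8538),
  (5927, 8452031, 15500265, 8675), (6803, 9677921, 15738481, 8811),
  (7759, 11076615, 15976003, 8946), (8893, 12679060, 16213469, 9081),
  (10141, 14489652, 16449006, 9214), (11621, 16540978, 16682689, 9347),
  (13187, 18880187, 16915717, 9479), (15077, 21513614, 17146089, 9609),
  (17117, 24475503, 17374232, 9738), (19477, 27830962, 17601236, 9867),
  (22079, 31631947, 17827332, 9995), (25097, 35916255, 18052361, 10122),
  (28477, 40740195, 18275333, 10248), (32299, 46174516, 18496811, 10373),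
  (36473, 52261118, 18716181, 10497), (41227, 59105637, 18934208, 10620),
  (46589, 66784501, 19150794, 10742), (52543, 75377878, 19365213, 10863),
  (59093, 84996430, 19578218, 10983), (60383, 86852737, 19616622, 11005)]

set_option maxRecDepth 100000 in
lemma chk_rows : chk (5, 4906, 3000000, 1223) rows = true := by decide +kernel

end

/-! ### Soundness of the table and reduction to initial sets of primes -/

noncomputable section

open Finset

/-- If `M` is divisible by all primes below `B` and by no prime from `lo` on, then in the range
`lo ≤ n < B²` primality is coprimality to `M`. -/
lemma coprime_test {M lo B n : ℕ} (h1 : ∀ p, p.Prime → p ∣ M → p < lo)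
    (h2 : ∀ q < B, q.Prime → q ∣ M) (hlo : lo ≤ n) (hB : n < B ^ 2) (hn : 2 ≤ n) :
    Nat.gcd n M = 1 ↔ n.Prime := by
  constructor
  · intro h
    by_contra hp
    have hq := Nat.minFac_prime (n := n) (by omega)
    have h3 : n.minFac ^ 2 ≤ n := Nat.minFac_sq_le_self (by omega) hp
    have h4 : n.minFac < B := lt_of_pow_lt_pow_left₀ 2 (Nat.zero_le _) (h3.trans_lt hB)
    have h5 : n.minFac ∣ Nat.gcd n M := Nat.dvd_gcd n.minFac_dvd (h2 _ h4 hq)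
    rw [h] at h5
    exact hq.one_lt.ne' (Nat.dvd_one.mp h5)
  · intro hp
    rcases (Nat.Prime.coprime_iff_not_dvd hp (n := M)).mpr (fun h ↦ by
      have := h1 n hp h; omega) with h
    exact h

lemma big_eq : big = primorial 250 := by decide +kernel

lemma tst_iff {n : ℕ} (h5 : 5 ≤ n) (hn : n < 63001) : tst n = true ↔ n.Prime := by
  unfold tst
  rw [Nat.beq_eq]
  rcases Nat.lt_or_ge n 289 with h | h
  · have e1 : Nat.ble 289 n = false := by
      rw [Bool.eq_false_iff, ne_eq, Nat.ble_eq]; omega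
    rw [e1]
    rcases Nat.lt_or_ge n 25 with h' | h'
    · have e2 : Nat.ble 25 n = false := by
        rw [Bool.eq_false_iff, ne_eq, Nat.ble_eq]; omega
      rw [e2]
      refine coprime_test (lo := 5) (B := 5) (fun p hp hd ↦ ?_) (by decide) h5 (by omega) (by omega)
      have : p ≤ 6 := Nat.le_of_dvd (by norm_num) hd
      interval_cases p <;> revert hp hd <;> decide
    · have e2 : Nat.ble 25 n = true := by rw [Nat.ble_eq]; omega
      rw [e2]
      have e3 : 30030 = primorial 16 := by decide +kernel
      simp only [cond_false, cond_true]
      rw [e3]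
      exact coprime_test (lo := 17) (B := 17)
        (fun p hp hd ↦ Nat.lt_succ_of_le (hp.dvd_primorial_iff.mp hd))
        (fun q hq hp ↦ hp.dvd_primorial_iff.mpr (by omega)) (by omega) (by omega) (by omega)
  · have e1 : Nat.ble 289 n = true := by rw [Nat.ble_eq]; omega
    rw [e1, cond_true, big_eq]
    exact coprime_test (lo := 251) (B := 251)
      (fun p hp hd ↦ Nat.lt_succ_of_le (hp.dvd_primorial_iff.mp hd))
      (fun q hq hp ↦ hp.dvd_primorial_iff.mpr (by omega)) (by omega) (by omega) (by omega)

lemma blk_eq (s a n : ℕ) : blk s a n = ∏ i ∈ Ico a (a + n), leaf s i := by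
  induction n with
  | zero => simp [blk]
  | succ n ih =>
    rw [← add_assoc, prod_Ico_succ_top (by omega), ← ih, mul_comm]
    rfl

lemma blks_eq (s a n : ℕ) : blks s a n = ∏ i ∈ Ico a (a + 64 * n), leaf s i := by
  induction n with
  | zero => simp [blks]
  | succ n ih =>
    have h : blks s a (n + 1) = blk s (a + 64 * n) 64 * blks s a n := rfl
    rw [h, ih, blk_eq, mul_comm, prod_Ico_consecutive _ (by omega) (by omega)]
    rfl

lemma chunk_eq (s a n : ℕ) : chunk s a n = ∏ i ∈ Ico a (a + n), leaf s i := by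
  rw [chunk, blk_eq, blks_eq, prod_Ico_consecutive _ (by omega) (by omega)]
  congr 2
  omega

/-- On its range, `chunk` computes the product of `p - s` over the primes. -/
lemma chunk_primes (s a n : ℕ) (ha : 5 ≤ a) (hn : a + n ≤ 63001) :
    chunk s a n = ∏ p ∈ Ico a (a + n) with p.Prime, (p - s) := by
  rw [chunk_eq, prod_filter]
  refine prod_congr rfl fun i hi ↦ ?_
  rw [mem_Ico] at hi
  unfold leaf
  have := tst_iff (n := i) (by omega) (by omega)
  split_ifs with h
  · rw [this.mpr h]; rfl
  · rw [Bool.eq_false_iff.mpr (fun h' ↦ h (this.mp h'))]; rfl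

/-- The primes below `n`. -/
def pf (n : ℕ) : Finset ℕ := (range n).filter Nat.Prime

/-- The Euler factor at `p`. -/
def ef (p : ℕ) : ℝ := (1 - 1 / (p:ℝ))⁻¹

lemma mem_pf {n p : ℕ} : p ∈ pf n ↔ p < n ∧ p.Prime := by simp [pf]

lemma pf_succ {x : ℕ} (hx : x.Prime) : pf (x + 1) = insert x (pf x) := by
  rw [pf, range_add_one, filter_insert, if_pos hx, pf]

lemma notMem_pf (x : ℕ) : x ∉ pf x := fun h ↦ (mem_pf.mp h).1.false

lemma pf_split {x y : ℕ} (h : x ≤ y) (f : ℕ → ℝ) :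
    ∏ p ∈ pf y, f p = (∏ p ∈ pf x, f p) * ∏ p ∈ Ico x y with p.Prime, f p := by
  rw [pf, pf, prod_filter, prod_filter, prod_filter, range_eq_Ico, range_eq_Ico]
  exact (prod_Ico_consecutive _ (Nat.zero_le _) h).symm

lemma ef_eq {p : ℕ} (hp : 2 ≤ p) : ef p = (p:ℝ) / ((p - 1 : ℕ) : ℝ) := by
  have : (2:ℝ) ≤ p := by exact_mod_cast hp
  rw [Nat.cast_sub (by omega), ef]
  have h2 : (p:ℝ) - 1 ≠ 0 := by linarith
  push_cast
  field_simp

lemma ef_antitone {p q : ℕ} (hp : 2 ≤ p) (h : p ≤ q) : ef q ≤ ef p := by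
  have h2 : (2:ℝ) ≤ p := by exact_mod_cast hp
  have h3 : (p:ℝ) ≤ q := by exact_mod_cast h
  unfold ef
  have : 1 / (p:ℝ) ≤ 1 / 2 := one_div_le_one_div_of_le (by norm_num) h2
  have : 1 / (q:ℝ) ≤ 1 / p := one_div_le_one_div_of_le (by linarith) h3
  gcongr
  linarith

lemma one_le_ef {p : ℕ} (hp : 2 ≤ p) : 1 ≤ ef p := by
  have h2 : (2:ℝ) ≤ p := by exact_mod_cast hp
  unfold ef
  have h3 : 1 / (p:ℝ) ≤ 1 / 2 := one_div_le_one_div_of_le (by norm_num) h2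
  have h4 : 0 ≤ 1 / (p:ℝ) := by positivity
  exact (one_le_inv₀ (by linarith)).mpr (by linarith)

/-- Among sets of at most `π(x - 1)` primes, the initial one has the largest Euler product. -/
lemma prod_ef_le {S : Finset ℕ} (hS : ∀ p ∈ S, p.Prime) {x : ℕ} (hx : 2 ≤ x)
    (hc : S.card ≤ (pf x).card) : ∏ p ∈ S, ef p ≤ ∏ p ∈ pf x, ef p := by
  have hx0 : 0 ≤ ef x := zero_le_one.trans (one_le_ef hx)
  rw [← prod_inter_mul_prod_sdiff S (pf x), ← prod_inter_mul_prod_sdiff (pf x) S, inter_comm]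
  have h0 : 0 ≤ ∏ p ∈ pf x ∩ S, ef p := prod_nonneg fun p hp ↦
    zero_le_one.trans (one_le_ef (mem_pf.mp (mem_inter.mp hp).1).2.two_le)
  refine mul_le_mul_of_nonneg_left ?_ h0
  have hcard : (S \ pf x).card ≤ (pf x \ S).card := by
    have h1 := card_sdiff_add_card_inter S (pf x)
    have h2 := card_sdiff_add_card_inter (pf x) S
    rw [inter_comm] at h2
    omega
  calc ∏ p ∈ S \ pf x, ef p ≤ ∏ p ∈ S \ pf x, ef x := prod_le_prod
        (fun p hp ↦ zero_le_one.trans (one_le_ef (hS p (mem_sdiff.mp hp).1).two_le)) fun p hp ↦ by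
        rw [mem_sdiff, mem_pf] at hp
        exact ef_antitone hx (by by_contra hlt; exact hp.2 ⟨by omega, hS p hp.1⟩)
    _ = ef x ^ (S \ pf x).card := by rw [prod_const]
    _ ≤ ef x ^ (pf x \ S).card := pow_le_pow_right₀ (one_le_ef hx) hcard
    _ = ∏ p ∈ pf x \ S, ef x := by rw [prod_const]
    _ ≤ _ := prod_le_prod (fun _ _ ↦ hx0) fun p hp ↦ by
        rw [mem_sdiff, mem_pf] at hp
        exact ef_antitone hp.1.2.two_le hp.1.1.le

/-- Among sets of at least `π(x)` primes, the initial one has the smallest product. -/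
lemma sum_log_le {S : Finset ℕ} (hS : ∀ p ∈ S, p.Prime) {x : ℕ} (hx : 2 ≤ x)
    (hc : (pf (x + 1)).card ≤ S.card) :
    ∑ p ∈ pf (x + 1), Real.log p ≤ ∑ p ∈ S, Real.log p := by
  rw [← sum_inter_add_sum_sdiff S (pf (x + 1)), ← sum_inter_add_sum_sdiff (pf (x + 1)) S,
    inter_comm S]
  refine add_le_add le_rfl ?_
  have hcard : (pf (x + 1) \ S).card ≤ (S \ pf (x + 1)).card := by
    have h1 := card_sdiff_add_card_inter S (pf (x + 1))
    have h2 := card_sdiff_add_card_inter (pf (x + 1)) S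
    rw [inter_comm] at h2
    omega
  have hl : 0 ≤ Real.log x := Real.log_natCast_nonneg x
  calc ∑ p ∈ pf (x + 1) \ S, Real.log p ≤ ∑ p ∈ pf (x + 1) \ S, Real.log x := by
        refine sum_le_sum fun p hp ↦ ?_
        rw [mem_sdiff, mem_pf] at hp
        exact Real.log_le_log (by exact_mod_cast hp.1.2.pos) (by exact_mod_cast (by omega : p ≤ x))
    _ = (pf (x + 1) \ S).card * Real.log x := by rw [sum_const, nsmul_eq_mul]
    _ ≤ (S \ pf (x + 1)).card * Real.log x := by gcongr
    _ = ∑ p ∈ S \ pf (x + 1), Real.log x := by rw [sum_const, nsmul_eq_mul]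
    _ ≤ _ := by
        refine sum_le_sum fun p hp ↦ ?_
        rw [mem_sdiff, mem_pf] at hp
        refine Real.log_le_log (by exact_mod_cast (by omega : 0 < x)) ?_
        exact_mod_cast (by by_contra hlt; exact hp.2 ⟨by omega, hS p hp.1⟩ : x ≤ p)

/-- If the product of the primes in `S` is below the primorial of the prime `x`, then the
Euler product over `S` is at most the one over the primes below `x`. -/
lemma reduce {S : Finset ℕ} (hS : ∀ p ∈ S, p.Prime) {x : ℕ} (hx : x.Prime)
    (h : ∑ p ∈ S, Real.log p < ∑ p ∈ pf (x + 1), Real.log p) :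
    ∏ p ∈ S, ef p ≤ ∏ p ∈ pf x, ef p := by
  refine prod_ef_le hS hx.two_le ?_
  by_contra hc
  refine h.not_ge (sum_log_le hS hx.two_le ?_)
  rw [pf_succ hx, card_insert_of_notMem (notMem_pf x)]
  omega

end

/-! ### The range `log log r < 11` -/

noncomputable section

open Finset

lemma exp_gamma_gt : 1.7810724 < Real.exp Real.eulerMascheroniConstant := by
  have h1 := Real.exp_lt_exp.mpr gamma_gt
  refine lt_of_lt_of_le ?_ h1.le
  refine lt_of_lt_of_le ?_ (Real.sum_le_exp_of_nonneg (by norm_num) 12)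
  simp only [sum_range_succ, sum_range_zero, Nat.factorial]
  norm_num

/-- The right-hand side as a function of `l = log log r`. -/
def gg (l : ℝ) : ℝ := Real.exp Real.eulerMascheroniConstant * l + 2.50637 / l

/-- The minimum of `gg` is at `√(2.50637 e^{-γ}) < 1.2`. -/
lemma gg_mono {a b : ℝ} (ha : 1.2 ≤ a) (hab : a ≤ b) : gg a ≤ gg b := by
  have hG := exp_gamma_gt
  unfold gg
  set G := Real.exp Real.eulerMascheroniConstant
  have ha0 : 0 < a := by linarith
  have hb0 : 0 < b := by linarith
  have h1 : 2.50637 / a - 2.50637 / b = 2.50637 * (b - a) / (a * b) := by field_simp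
  have h2 : 2.50637 * (b - a) / (a * b) ≤ G * (b - a) := by
    rw [div_le_iff₀ (by positivity)]
    have h3 : 1.44 ≤ a * b := by nlinarith
    have h4 : 2.50637 ≤ G * (a * b) := by nlinarith
    nlinarith
  linarith

/-- By the inequality of arithmetic and geometric means `gg l ≥ 2 √(2.50637 e^γ) > 4`. -/
lemma gg_ge_four {l : ℝ} (hl : 0 < l) : 4 < gg l := by
  have hG := exp_gamma_gt
  unfold gg
  set G := Real.exp Real.eulerMascheroniConstant
  rw [← sub_pos]
  have : G * l + 2.50637 / l - 4 = (G * l ^ 2 + 2.50637 - 4 * l) / l := by field_simp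
  rw [this]
  apply div_pos _ hl
  have h : 1.7810724 * l ^ 2 ≤ G * l ^ 2 := by gcongr
  nlinarith [sq_nonneg (l - 1.12)]

lemma log_prod_pf (n : ℕ) : Real.log (∏ p ∈ pf n, (p:ℝ)) = ∑ p ∈ pf n, Real.log p :=
  Real.log_prod fun p hp ↦ by exact_mod_cast (mem_pf.mp hp).2.ne_zero

/-- The facts recorded by a row; the entry `t` is checked where it is used. -/
def Inv (R : Row) : Prop := R.1.Prime ∧ 5 ≤ R.1 ∧
  (R.2.1:ℝ) / 1000 * Real.log 2 ≤ ∑ p ∈ pf (R.1 + 1), Real.log p ∧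
  ∏ p ∈ pf R.1, ef p ≤ (R.2.2.1:ℝ) / 1000000

/-- Soundness of `okStep`. -/
lemma inv_step {R R' : Row} (h : Inv R) (hok : okStep R R' = true) : Inv R' := by
  obtain ⟨x, m, u, t⟩ := R
  obtain ⟨x', m', u', t'⟩ := R'
  obtain ⟨hx, hx5, hm, hu⟩ := h
  simp only [okStep, Bool.and_eq_true, Nat.ble_eq, Nat.blt_eq] at hok hx hx5 hm hu
  obtain ⟨⟨⟨⟨⟨h1, h2⟩, h3⟩, h4⟩, h5⟩, h6⟩ := hok
  have hx' : x'.Prime := (tst_iff (by omega) h2).mp h3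
  have hc0 : chunk 0 (x + 1) (x' - x - 1) = ∏ p ∈ Ico (x + 1) x' with p.Prime, p := by
    rw [chunk_primes _ _ _ (by omega) (by omega), show x + 1 + (x' - x - 1) = x' by omega]
    rfl
  have hc1 : chunk 1 (x + 1) (x' - x - 1) = ∏ p ∈ Ico (x + 1) x' with p.Prime, (p - 1) := by
    rw [chunk_primes _ _ _ (by omega) (by omega), show x + 1 + (x' - x - 1) = x' by omega]
  set c0 := chunk 0 (x + 1) (x' - x - 1)
  set c1 := chunk 1 (x + 1) (x' - x - 1)
  have hc0p : 0 < c0 := by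
    rw [hc0]; exact prod_pos fun p hp ↦ (mem_filter.mp hp).2.pos
  have hc1p : 0 < c1 := by
    rw [hc1]; exact prod_pos fun p hp ↦ Nat.sub_pos_of_lt (mem_filter.mp hp).2.one_lt
  refine ⟨hx', by simp only; omega, ?_, ?_⟩
  · show (m':ℝ) / 1000 * Real.log 2 ≤ ∑ p ∈ pf (x' + 1), Real.log p
    have e : ∏ p ∈ pf (x' + 1), (p:ℝ) = (∏ p ∈ pf (x + 1), (p:ℝ)) * ((c0:ℝ) * x') := by
      rw [pf_succ hx', prod_insert (notMem_pf x'), pf_split (by omega : x + 1 ≤ x') (fun p ↦ (p:ℝ)),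
        hc0]
      push_cast
      ring
    have hx'0 : (0:ℝ) < x' := by exact_mod_cast hx'.pos
    have hc0' : (0:ℝ) < c0 := by exact_mod_cast hc0p
    rw [← log_prod_pf, e, Real.log_mul (prod_ne_zero_iff.mpr fun p hp ↦ by
      exact_mod_cast (mem_pf.mp hp).2.ne_zero) (by positivity), log_prod_pf]
    have h7 : ((2:ℝ) ^ (m' - m)) ≤ ((c0:ℝ) * x') ^ 1000 := by exact_mod_cast h5
    have h8 := Real.log_le_log (by positivity) h7
    rw [Real.log_pow, Real.log_pow, Nat.cast_sub h4] at h8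
    push_cast at h8
    linarith
  · show ∏ p ∈ pf x', ef p ≤ (u':ℝ) / 1000000
    have e : ∏ p ∈ Ico (x + 1) x' with p.Prime, ef p = (c0:ℝ) / c1 := by
      rw [hc0, hc1]
      push_cast
      rw [← prod_div_distrib]
      exact prod_congr rfl fun p hp ↦ ef_eq (mem_filter.mp hp).2.two_le
    rw [pf_split (by omega : x + 1 ≤ x') ef, e, pf_succ hx, prod_insert (notMem_pf x),
      ef_eq hx.two_le]
    have h7 : (u:ℝ) * (c0 * x) ≤ u' * (c1 * ((x - 1 : ℕ) : ℝ)) := by exact_mod_cast h6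
    have hx1 : (0:ℝ) < ((x - 1 : ℕ) : ℝ) := by exact_mod_cast (by omega : 0 < x - 1)
    have hc1' : (0:ℝ) < c1 := by exact_mod_cast hc1p
    generalize ((x - 1 : ℕ) : ℝ) = w at *
    calc (x:ℝ) / w * (∏ p ∈ pf x, ef p) * (c0 / c1) ≤ (x:ℝ) / w * (u / 1000000) * (c0 / c1) := by
          gcongr
      _ = (u * (c0 * x)) / (c1 * w) / 1000000 := by field_simp
      _ ≤ _ := by
          gcongr
          rw [div_le_iff₀ (by positivity)]
          exact h7

lemma exp_thousandth : Real.exp (1 / 1000) ≤ 1.0010005002 := by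
  refine (Real.exp_bound' (by norm_num) (by norm_num) (n := 4) (by norm_num)).trans ?_
  simp only [sum_range_succ, sum_range_zero, Nat.factorial]
  norm_num

/-- Soundness of `expOK`. -/
lemma expOK_le {m t : ℕ} (h : expOK m t = true) :
    Real.exp ((t:ℝ) / 1000) ≤ (m:ℝ) / 1000 * Real.log 2 := by
  rw [expOK, Nat.ble_eq] at h
  have h1 : (10010005002:ℝ) ^ t * 1000000000 ≤ m * 693147 * 10000000000 ^ t := by exact_mod_cast h
  have h2 : Real.exp ((t:ℝ) / 1000) ≤ 1.0010005002 ^ t := by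
    rw [show (t:ℝ) / 1000 = t * (1 / 1000) by ring, Real.exp_nat_mul]
    exact pow_le_pow_left₀ (Real.exp_pos _).le exp_thousandth t
  have h3 : (1.0010005002:ℝ) ^ t = 10010005002 ^ t / 10000000000 ^ t := by
    rw [← div_pow]; norm_num
  have h4 : (1.0010005002:ℝ) ^ t ≤ m * 0.693147 / 1000 := by
    rw [h3, div_le_iff₀ (by positivity)]
    linarith
  have h5 := Real.log_two_gt_d9
  have h6 : (m:ℝ) * 0.693147 ≤ m * Real.log 2 := by gcongr; linarith
  linarith

/-- Between the primorials of the rows `R` and `R'` the inequality holds: the left side is at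
most its value for the primes below `R'`, and the right side is at least its value at `R`. -/
lemma good_step {R R' : Row} (h : Inv R) (h' : Inv R') (hg : goodStep R R' = true)
    {S : Finset ℕ} (hS : ∀ p ∈ S, p.Prime) {y : ℝ}
    (h1 : ∑ p ∈ pf (R.1 + 1), Real.log p ≤ y)
    (h2 : ∑ p ∈ S, Real.log p < ∑ p ∈ pf (R'.1 + 1), Real.log p) :
    ∏ p ∈ S, ef p < gg (Real.log y) := by
  obtain ⟨x, m, u, t⟩ := R
  obtain ⟨x', m', u', t'⟩ := R'
  obtain ⟨hx, hx5, hm, hu⟩ := h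
  obtain ⟨hx', hx5', hm', hu'⟩ := h'
  simp only [goodStep, Bool.and_eq_true, Nat.ble_eq, Nat.blt_eq] at hg h1 h2 hm hu' hx'
  obtain ⟨⟨h3, h4⟩, h5⟩ := hg
  have h6 := (expOK_le h4).trans (hm.trans h1)
  have ht : (1200:ℝ) ≤ t := by exact_mod_cast h3
  have h7 : (t:ℝ) / 1000 ≤ Real.log y :=
    (Real.le_log_iff_exp_le ((Real.exp_pos _).trans_le h6)).mpr h6
  refine ((reduce hS hx' h2).trans hu').trans_lt (lt_of_lt_of_le ?_ (gg_mono (by linarith) h7))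
  have h8 : 100 * (u':ℝ) * t < 178107 * t ^ 2 + 250637000000 := by exact_mod_cast h5
  have hG := exp_gamma_gt
  unfold gg
  set G := Real.exp Real.eulerMascheroniConstant
  have h9 : 1.78107 * ((t:ℝ) / 1000) ≤ G * (t / 1000) := by gcongr; linarith
  refine lt_of_lt_of_le ?_ (add_le_add_left h9 _)
  have e : 1.78107 * ((t:ℝ) / 1000) + 2.50637 / (t / 1000) =
      (178107 * t ^ 2 + 250637000000) / (100000000 * t) := by
    field_simp; ring
  rw [e, div_lt_div_iff₀ (by norm_num) (by positivity)]
  linarith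

lemma pf_29 : pf 29 = {2, 3, 5, 7, 11, 13, 17, 19, 23} := by decide +kernel

lemma pf_24 : pf 24 = {2, 3, 5, 7, 11, 13, 17, 19, 23} := by decide +kernel

/-- The critical case: nine prime factors, with near equality at `2·3·5·7·11·13·17·19·23`. -/
lemma nine {S : Finset ℕ} (hS : ∀ p ∈ S, p.Prime) {y : ℝ}
    (h1 : ∑ p ∈ pf (23 + 1), Real.log p ≤ y)
    (h2 : ∑ p ∈ S, Real.log p < ∑ p ∈ pf (29 + 1), Real.log p) :
    ∏ p ∈ S, ef p < gg (Real.log y) := by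
  have h3 : Real.exp 0.5081248 ≤ 1.66217139 := by
    refine (Real.exp_bound' (by norm_num) (by norm_num) (n := 11) (by norm_num)).trans ?_
    simp only [sum_range_succ, sum_range_zero, Nat.factorial]
    norm_num
  have h4 : 19.2230986 ≤ Real.log 223092870 := by
    have h5 : 0.5081248 ≤ Real.log (223092870 / 2 ^ 27) := by
      rw [Real.le_log_iff_exp_le (by norm_num)]
      exact h3.trans (by norm_num)
    rw [Real.log_div (by norm_num) (by norm_num), Real.log_pow] at h5
    have := Real.log_two_gt_d9
    push_cast at h5
    linarith
  have h6 : Real.log 223092870 ≤ y := by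
    refine le_trans (le_of_eq ?_) h1
    rw [← log_prod_pf, show 23 + 1 = 24 from rfl, pf_24]
    congr 1
    norm_num
  have h7 : Real.exp 2.95611257 ≤ 19.2230986 := by
    have h8 : Real.exp 2.95611257 = Real.exp (2.95611257 / 3) ^ 3 := by
      rw [← Real.exp_nat_mul]; congr 1; norm_num
    have h9 : Real.exp (2.95611257 / 3) ≤ 2.67880518 := by
      refine (Real.exp_bound' (by norm_num) (by norm_num) (n := 15) (by norm_num)).trans ?_
      simp only [sum_range_succ, sum_range_zero, Nat.factorial]
      norm_num
    rw [h8]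
    exact (pow_le_pow_left₀ (Real.exp_pos _).le h9 3).trans (by norm_num)
  have h8 : 2.95611257 ≤ Real.log y := by
    rw [Real.le_log_iff_exp_le (by linarith)]
    linarith
  refine (reduce hS (by norm_num) h2).trans_lt (lt_of_lt_of_le ?_ (gg_mono (by norm_num) h8))
  have hG := exp_gamma_gt
  have h9 : ∏ p ∈ pf 29, ef p < 6.112910518 := by
    rw [pf_29]
    norm_num [ef]
  refine h9.trans ?_
  unfold gg
  norm_num at hG ⊢
  linarith

/-- The inequality for all `y` with `log y < 11` that are at least the logarithm of the
primorial of the first row: `y` lies between two consecutive rows. -/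
lemma walk (l : List Row) : ∀ R : Row, Inv R → chk R l = true → ∀ {S : Finset ℕ},
    (∀ p ∈ S, p.Prime) → ∀ {y : ℝ}, ∑ p ∈ S, Real.log p ≤ y →
    ∑ p ∈ pf (R.1 + 1), Real.log p ≤ y → Real.log y < 11 → ∏ p ∈ S, ef p < gg (Real.log y) := by
  induction l with
  | nil =>
    intro R h hc S hS y hy h1 h2
    have h3 : Real.exp ((11000 : ℕ) / 1000) ≤ y := (expOK_le hc).trans (h.2.2.1.trans h1)
    have h4 := (Real.le_log_iff_exp_le ((Real.exp_pos _).trans_le h3)).mpr h3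
    norm_num at h4
    linarith
  | cons R' l ih =>
    intro R h hc S hS y hy h1 h2
    have hc' : (okStep R R' && (goodStep R R' || Nat.beq R.1 23 && Nat.beq R'.1 29) &&
      chk R' l) = true := hc
    simp only [Bool.and_eq_true, Bool.or_eq_true, Nat.beq_eq] at hc'
    obtain ⟨⟨h3, h4⟩, h5⟩ := hc'
    have h' := inv_step h h3
    rcases lt_or_ge y (∑ p ∈ pf (R'.1 + 1), Real.log p) with hlt | hge
    · rcases h4 with h4 | ⟨h4, h6⟩
      · exact good_step h h' h4 hS h1 (hy.trans_lt hlt)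
      · rw [h4] at h1
        rw [h6] at hlt
        exact nine hS h1 (hy.trans_lt hlt)
    · exact ih R' h' h5 hS hy hge h2

lemma pf_5 : pf 5 = {2, 3} := by decide +kernel

lemma pf_6 : pf 6 = {2, 3, 5} := by decide +kernel

lemma inv_start : Inv (5, 4906, 3000000, 1223) := by
  refine ⟨by norm_num, le_rfl, ?_, ?_⟩
  · show ((4906 : ℕ):ℝ) / 1000 * Real.log 2 ≤ ∑ p ∈ pf 6, Real.log p
    rw [← log_prod_pf, pf_6]
    have h7 : ((2:ℝ) ^ 4906) ≤ 30 ^ 1000 := by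
      have : (2:ℕ) ^ 4906 ≤ 30 ^ 1000 := by decide +kernel
      exact_mod_cast this
    have h8 := Real.log_le_log (by positivity) h7
    rw [Real.log_pow, Real.log_pow] at h8
    norm_num at h8 ⊢
    linarith
  · show ∏ p ∈ pf 5, ef p ≤ _
    rw [pf_5]
    norm_num [ef]

/-- Below the primorial of `5` the Euler product is at most `3 < 4 < gg`. -/
lemma small_case {S : Finset ℕ} (hS : ∀ p ∈ S, p.Prime) {y : ℝ} (hy1 : 1 < y)
    (hy : ∑ p ∈ S, Real.log p ≤ y) (hl : Real.log y < 11) : ∏ p ∈ S, ef p < gg (Real.log y) := by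
  rcases lt_or_ge y (∑ p ∈ pf (5 + 1), Real.log p) with hlt | hge
  · refine (reduce hS (by norm_num) (hy.trans_lt hlt)).trans_lt ?_
    refine lt_of_le_of_lt ?_ (gg_ge_four (Real.log_pos hy1))
    rw [pf_5]
    norm_num [ef]
  · exact walk rows _ inv_start chk_rows hS hy hge hl

end

end RS

/-- Rosser–Schoenfeld bound: for `r ≥ 3`,
`r/φ(r) < e^γ · log log r + 2.50637 / log log r`. -/
theorem rosser_schoenfeld (r : ℕ) (hr : 3 ≤ r) :
    (r : ℝ) / (r.totient : ℝ) <
      Real.exp Real.eulerMascheroniConstant * Real.log (Real.log r) +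
        2.50637 / Real.log (Real.log r) := by
  have hr0 : (0:ℝ) < r := by exact_mod_cast (by omega : 0 < r)
  have hy1 : 1 < Real.log r := by
    rw [Real.lt_log_iff_exp_lt hr0]
    have h3 : (3:ℝ) ≤ r := by exact_mod_cast hr
    linarith [Real.exp_one_lt_d9]
  have hS : ∀ p ∈ r.primeFactors, p.Prime := fun p hp ↦ Nat.prime_of_mem_primeFactors hp
  have hsum : ∑ p ∈ r.primeFactors, Real.log p ≤ Real.log r := by
    rw [← Real.log_prod fun p hp ↦ by exact_mod_cast (hS p hp).ne_zero]
    refine Real.log_le_log (Finset.prod_pos fun p hp ↦ by exact_mod_cast (hS p hp).pos) ?_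
    have := Nat.le_of_dvd (by omega) (Nat.prod_primeFactors_dvd r)
    rw [← Nat.cast_prod]
    exact Nat.cast_le.mpr this
  have htot : (r:ℝ) / r.totient = ∏ p ∈ r.primeFactors, RS.ef p := by
    have h1 : (r.totient : ℝ) = r * ∏ p ∈ r.primeFactors, (1 - (p:ℝ)⁻¹) := by
      have := Nat.totient_eq_mul_prod_factors r
      have h := congrArg (fun q : ℚ ↦ (q:ℝ)) this
      push_cast at h
      exact h
    have h2 : (r:ℝ) / (r * ∏ p ∈ r.primeFactors, (1 - (p:ℝ)⁻¹)) =
        (∏ p ∈ r.primeFactors, (1 - (p:ℝ)⁻¹))⁻¹ := by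
      rw [← div_div, div_self hr0.ne', one_div]
    rw [h1, h2, ← Finset.prod_inv_distrib]
    simp only [RS.ef, one_div]
  rw [htot]
  rcases lt_or_ge (Real.log (Real.log r)) 11 with h | h
  · exact RS.small_case hS hy1 hsum h
  · exact RS.large_case r.primeFactors hS h (by rwa [Real.exp_log (by linarith)])
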